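/- Let d ≥ 1 be an integer. There exists a constant C = C(d) > 0 such that the following holds. Let F : ℝ^d × (0,∞) → ℂ be slice-Schwartz and suppose in addition that F(·, t) = 0 for all t outside some compact subset of (0,∞). Define u(x, t) := ∫_0^∞ (2π)^{−d} ∫_{ℝ^d} e^{i x·ξ} e^{−|t−y| |ξ|} F̂(ξ, y) dξ dy, where F̂(·, y) denotes the Fourier transform of F(·, y) in the x-variable. Then for every s ∈ ℝ, 1 ≤ p, r ≤ ∞ and 1 ≤ q ≤ q₁ ≤ ∞, one has ‖u‖_{L̃^{q₁}(Ḃ^{s + 1/q₁}_{p,r})} ≤ C ‖F‖_{L̃^{q}(Ḃ^{s + 1/q − 1}_{p,r})}, with the convention 1/∞ = 0. (Duhamel-type maximal regularity estimate for the kernel e^{−|t−y||∇|} in Chemin–Lerner spaces, expressing a gain of one derivative.) -/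

import Mathlib

/-!
# Duhamel estimate in Chemin–Lerner spaces

On a dyadic block the Poisson factor `e^{-τ|∇|}` is convolution with a kernel whose `L¹` norm is
at most `C (1 + 2^j τ)^{-2}` (`eLpNorm_bl_ex_le`): this is the `L¹` bound for the inverse Fourier
transform of a smooth function supported in an annulus, rescaled.  Once the block `Δ_j` is known to
act under the time integral, Minkowski's inequality gives
`‖Δ_j u(t)‖_p ≤ ∫ C (1 + 2^j |t - y|)^{-2} ‖Δ_j F(y)‖_p dy`, and Young's inequality in time
(`young`), with a kernel of mass at most `π 2^{-j}` (`lintegral_decay`), turns the exponent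
`1 - 1/q + 1/q₁` into the gain of derivatives (`block_estimate`).

The delicate point is the inequality `|Δ_j u(t)(x)| ≤ ∫ |Δ_j e^{-|t-y||∇|} F(y)(x)| dy`
(`LP_duhamel_le`).  The function `F` is continuous in `(x, t)` and Schwartz in `x` for each `t`, but
its Schwartz seminorms need not be integrable in `t`; hence the time integral that defines `u` may
fail to converge absolutely, in which case its value is `0`, and Fubini's theorem does not apply
directly.  Only two facts are available: `F` is bounded on compact sets, and, if the right-hand side
is finite, the blocks satisfy `‖Δ_k F(y)‖_∞ ≤ 2^{n|k|} H(y)` with `H` integrable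
(`exists_dat`, by Bernstein's inequality).

* High frequencies.  Away from the origin, the kernels of the blocks `k ≥ 0` are `O(2^{-k})` in every
  Schwartz seminorm, so the high-frequency part of the Poisson extension is controlled locally by the
  values of `F` nearby and by the growth constants (`bl_local`); it is integrable in time, locally
  uniformly in `x` (`high_loc`).
* Low frequencies.  The low-frequency part is a polynomial of degree at most `n` plus a remainder
  bounded by `C |x|^{n+1} H(y)` (`low_taylor`).  The points at which a measurable family of
  polynomials is absolutely integrable are governed by a linear subspace of a finite-dimensional
  space (`absInt`): if they form a set of positive measure, then the coefficients relevant for all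
  points are integrable (`mono_mem_of_posMeas`, `exists_growth`).  Thus either the integral defining
  `u(t)` diverges absolutely at almost every `x`, so that `Δ_j u(t) = 0`, or the low-frequency part
  has polynomial growth with integrable constants.
* In the second case the convolution kernel of `Δ_j` is truncated at radius `R`, Fubini's theorem
  applies to the truncation, and the tail tends to `0` as `R → ∞` (`cv_avg_le`).
-/

open MeasureTheory Filter Complex
open scoped ENNReal NNReal RealInnerProductSpace Topology

noncomputable section

abbrev Rd (d : ℕ) := EuclideanSpace ℝ (Fin d)

/-- Fourier transform with the paper's convention `F[f](ξ) = ∫ e^{-i x·ξ} f(x) dx`. -/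
def FT {d : ℕ} (f : Rd d → ℂ) (ξ : Rd d) : ℂ :=
  ∫ x : Rd d, Complex.exp (-Complex.I * (↑(⟪x, ξ⟫) : ℂ)) * f x

/-- A Littlewood–Paley family: a Schwartz function `φ₀` whose Fourier transform is
real, takes values in `[0,1]`, is supported in the annulus `1/2 ≤ |ξ| ≤ 2`, and whose
dyadic dilates sum to `1` away from the origin. -/
structure LPData (d : ℕ) where
  φ : SchwartzMap (Rd d) ℂ
  him : ∀ ξ : Rd d, (FT (⇑φ) ξ).im = 0
  h0 : ∀ ξ : Rd d, 0 ≤ (FT (⇑φ) ξ).re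
  h1 : ∀ ξ : Rd d, (FT (⇑φ) ξ).re ≤ 1
  hsupp : ∀ ξ : Rd d, FT (⇑φ) ξ ≠ 0 → (1/2 : ℝ) ≤ ‖ξ‖ ∧ ‖ξ‖ ≤ 2
  hsum : ∀ ξ : Rd d, ξ ≠ 0 → HasSum (fun j : ℤ => FT (⇑φ) ((2:ℝ) ^ (-j) • ξ)) 1

/-- Littlewood–Paley block `Δ_j f = φ_j * f`, where `φ_j(x) = 2^{dj} φ₀(2^j x)`. -/
def LP {d : ℕ} (P : LPData d) (j : ℤ) (f : Rd d → ℂ) (x : Rd d) : ℂ :=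
  ∫ y : Rd d, (((2:ℝ) ^ ((d : ℤ) * j) : ℝ) : ℂ) * P.φ ((2:ℝ) ^ j • y) * f (x - y)

/-- `ℓ^r(ℤ)`-norm of a family of extended nonnegative reals. -/
def ellNorm (r : ℝ≥0∞) (a : ℤ → ℝ≥0∞) : ℝ≥0∞ :=
  if r = ∞ then ⨆ j, a j else (∑' j, a j ^ r.toReal) ^ (1 / r.toReal)

/-- Homogeneous Besov norm `‖f‖_{Ḃ^s_{p,r}}`. -/
def besov {d : ℕ} (P : LPData d) (s : ℝ) (p r : ℝ≥0∞) (f : Rd d → ℂ) : ℝ≥0∞ :=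
  ellNorm r fun j => ENNReal.ofReal ((2:ℝ) ^ (s * (j:ℝ))) * eLpNorm (LP P j f) p volume

/-- Mixed norm `L^q_t(0,∞; L^p_x)`. -/
def LqLp {d : ℕ} (q p : ℝ≥0∞) (g : ℝ → Rd d → ℂ) : ℝ≥0∞ :=
  if q = ∞ then essSup (fun t => eLpNorm (g t) p volume) (volume.restrict (Set.Ioi (0:ℝ)))
  else (∫⁻ t in Set.Ioi (0:ℝ), (eLpNorm (g t) p volume) ^ q.toReal) ^ (1 / q.toReal)

/-- Chemin–Lerner norm `‖f‖_{L̃^q(Ḃ^s_{p,r})}` on `ℝ^d × (0,∞)`. -/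
def CL {d : ℕ} (P : LPData d) (s : ℝ) (q p r : ℝ≥0∞) (f : ℝ → Rd d → ℂ) : ℝ≥0∞ :=
  ellNorm r fun j => ENNReal.ofReal ((2:ℝ) ^ (s * (j:ℝ))) * LqLp q p fun t => LP P j (f t)

/-- `f : ℝ^d × (0,∞) → ℂ` (curried as `f t x`) is slice-Schwartz: continuous on
`ℝ^d × (0,∞)` and Schwartz in `x` for each fixed `t > 0`. -/
def SliceSchwartz {d : ℕ} (f : ℝ → Rd d → ℂ) : Prop :=
  ContinuousOn (fun z : Rd d × ℝ => f z.2 z.1) (Set.univ ×ˢ Set.Ioi 0) ∧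
  ∀ t : ℝ, 0 < t → ∃ g : SchwartzMap (Rd d) ℂ, f t = ⇑g

namespace Duh
open scoped FourierTransform SchwartzMap

/-! ### Inequalities for mixed norms and sequence norms -/

/-- Jensen's inequality for the (unnormalised) weight `k`. -/
lemma jensen {α : Type*} [MeasurableSpace α] {μ : Measure α} {k f : α → ℝ≥0∞}
    (hk : AEMeasurable k μ) (hf : AEMeasurable f μ) {q : ℝ} (hq : 1 ≤ q) :
    (∫⁻ a, k a * f a ∂μ) ^ q ≤ (∫⁻ a, k a ∂μ) ^ (q - 1) * ∫⁻ a, k a * f a ^ q ∂μ := by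
  rcases hq.eq_or_lt with rfl | hq
  · simp
  have hq0 : 0 < q := by linarith
  have hc : (q / (q - 1)).HolderConjugate q := (Real.HolderConjugate.conjExponent hq).symm
  have h := ENNReal.lintegral_mul_le_Lp_mul_Lq μ hc
    (f := fun a => k a ^ (1 / (q / (q - 1)))) (g := fun a => k a ^ (1 / q) * f a)
    (hk.pow_const _) ((hk.pow_const _).mul hf)
  have e1 : ∀ a, ((fun a => k a ^ (1 / (q / (q - 1)))) * fun a => k a ^ (1 / q) * f a) a
      = k a * f a := by
    intro a
    simp only [Pi.mul_apply]
    rw [← mul_assoc, ← ENNReal.rpow_add_of_nonneg _ _ (by have := hc.pos; positivity) (by positivity)]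
    congr 1
    have : 1 / (q / (q - 1)) + 1 / q = 1 := by
      have := hc.inv_add_inv_eq_one
      simpa [one_div] using this
    rw [this, ENNReal.rpow_one]
  have e2 : ∀ a, (k a ^ (1 / (q / (q - 1)))) ^ (q / (q - 1)) = k a := by
    intro a
    rw [← ENNReal.rpow_mul, one_div_mul_cancel hc.pos.ne', ENNReal.rpow_one]
  have e3 : ∀ a, (k a ^ (1 / q) * f a) ^ q = k a * f a ^ q := by
    intro a
    rw [ENNReal.mul_rpow_of_nonneg _ _ hq0.le, ← ENNReal.rpow_mul, one_div_mul_cancel hq0.ne',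
      ENNReal.rpow_one]
  simp only [e1, e2, e3] at h
  calc (∫⁻ a, k a * f a ∂μ) ^ q ≤ _ := ENNReal.rpow_le_rpow h hq0.le
    _ = _ := by
      rw [ENNReal.mul_rpow_of_nonneg _ _ hq0.le, ← ENNReal.rpow_mul, ← ENNReal.rpow_mul,
        one_div_mul_cancel hq0.ne', ENNReal.rpow_one]
      congr 2
      field_simp

/-- Minkowski's integral inequality in `ℝ≥0∞`, for finite exponents; it follows from Jensen's
inequality with weight `y ↦ ‖h(·, y)‖_p` (shifted by `ε` to stay away from zero). -/
lemma minkowski {α β : Type*} [MeasurableSpace α] [MeasurableSpace β] {μ : Measure α}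
    {ν : Measure β} [SFinite μ] [IsFiniteMeasure ν] {h : β → α → ℝ≥0∞}
    (hh : Measurable (Function.uncurry h)) {p : ℝ} (hp : 1 ≤ p) :
    (∫⁻ x, (∫⁻ y, h y x ∂ν) ^ p ∂μ) ^ (1 / p) ≤ ∫⁻ y, (∫⁻ x, h y x ^ p ∂μ) ^ (1 / p) ∂ν := by
  have hp0 : 0 < p := by linarith
  set a : β → ℝ≥0∞ := fun y => (∫⁻ x, h y x ^ p ∂μ) ^ (1 / p) with ha
  have ham : Measurable a := by
    have : Measurable (Function.uncurry fun y x => h y x ^ p) := hh.pow_const p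
    exact (this.lintegral_prod_right').pow_const _
  by_cases hS : ∫⁻ y, a y ∂ν = ∞
  · rw [hS]; exact le_top
  have hfin : ∀ᵐ y ∂ν, a y < ∞ := ae_lt_top ham hS
  refine ENNReal.le_of_forall_pos_le_add ?_
  intro ε hε _
  obtain ⟨δ, hδ0, hδ⟩ : ∃ δ : ℝ≥0, 0 < δ ∧ (δ : ℝ≥0∞) * ν Set.univ ≤ ε := by
    refine ⟨ε / ((ν Set.univ).toNNReal + 1), by positivity, ?_⟩
    rw [← ENNReal.coe_toNNReal (measure_ne_top ν Set.univ), ← ENNReal.coe_mul, ENNReal.coe_le_coe]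
    rw [div_mul_eq_mul_div, div_le_iff₀ (by positivity)]
    gcongr; simp
  set b : β → ℝ≥0∞ := fun y => a y + δ with hb
  have hbm : Measurable b := ham.add_const _
  have hb0 : ∀ y, b y ≠ 0 := fun y => by simp [hb, hδ0.ne']
  have hbS : ∫⁻ y, b y ∂ν ≤ ∫⁻ y, a y ∂ν + ε := by
    rw [lintegral_add_right _ measurable_const, lintegral_const]; gcongr
  set S := ∫⁻ y, b y ∂ν
  have key : ∫⁻ x, (∫⁻ y, h y x ∂ν) ^ p ∂μ ≤ S ^ p := by
    calc ∫⁻ x, (∫⁻ y, h y x ∂ν) ^ p ∂μ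
        ≤ ∫⁻ x, S ^ (p - 1) * ∫⁻ y, b y * (h y x / b y) ^ p ∂ν ∂μ := by
          refine lintegral_mono fun x => ?_
          have hx : Measurable fun y => h y x := hh.comp (measurable_id.prodMk measurable_const)
          have := jensen (μ := ν) hbm.aemeasurable (hx.div hbm).aemeasurable hp
          refine le_trans (le_of_eq ?_) this
          congr 1
          refine lintegral_congr_ae ?_
          filter_upwards [hfin] with y hy
          rw [Pi.div_apply, ENNReal.mul_div_cancel (hb0 y) (by simp [hb, hy.ne])]
      _ = S ^ (p - 1) * ∫⁻ x, ∫⁻ y, b y * (h y x / b y) ^ p ∂ν ∂μ := by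
          rw [lintegral_const_mul]
          have : Measurable (Function.uncurry fun x y => b y * (h y x / b y) ^ p) := by
            refine (hbm.comp measurable_snd).mul (Measurable.pow_const ?_ p)
            exact (hh.comp measurable_swap).div (hbm.comp measurable_snd)
          exact this.lintegral_prod_right'
      _ = S ^ (p - 1) * ∫⁻ y, ∫⁻ x, b y * (h y x / b y) ^ p ∂μ ∂ν := by
          rw [lintegral_lintegral_swap]
          refine Measurable.aemeasurable ?_
          refine (hbm.comp measurable_snd).mul (Measurable.pow_const ?_ p)
          exact (hh.comp measurable_swap).div (hbm.comp measurable_snd)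
      _ ≤ S ^ (p - 1) * ∫⁻ y, b y ∂ν := by
          gcongr S ^ (p - 1) * ?_
          refine lintegral_mono_ae ?_
          filter_upwards [hfin] with y hy
          have hx : Measurable fun x => h y x := hh.comp (measurable_const.prodMk measurable_id)
          rw [lintegral_const_mul _ ((hx.div_const _).pow_const _)]
          refine (mul_le_mul_right (?_ : _ ≤ (1 : ℝ≥0∞)) (b y)).trans_eq (mul_one _)
          simp_rw [div_eq_mul_inv, ENNReal.mul_rpow_of_nonneg _ _ hp0.le]
          rw [lintegral_mul_const _ (hx.pow_const _)]
          have h1 : ∫⁻ x, h y x ^ p ∂μ = a y ^ p := by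
            rw [ha]; simp only
            rw [← ENNReal.rpow_mul, one_div_mul_cancel hp0.ne', ENNReal.rpow_one]
          rw [h1, ← ENNReal.mul_rpow_of_nonneg _ _ hp0.le]
          refine ENNReal.rpow_le_one ?_ hp0.le
          rw [← div_eq_mul_inv]
          exact ENNReal.div_le_of_le_mul (by simp [hb])
      _ = S ^ p := by
          change S ^ (p - 1) * S = S ^ p
          conv_lhs => rw [← ENNReal.rpow_one S, ← ENNReal.rpow_mul, one_mul]
          rw [← ENNReal.rpow_add_of_nonneg _ _ (by linarith) (by linarith)]
          congr 1; ring
  calc _ ≤ (S ^ p) ^ (1 / p) := ENNReal.rpow_le_rpow key (by positivity)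
    _ = S := by rw [← ENNReal.rpow_mul, mul_one_div_cancel hp0.ne', ENNReal.rpow_one]
    _ ≤ _ := hbS


/-- The scalar `L^q` norm on a measure space, in the form used by `LqLp`. -/
def Lq {α : Type*} [MeasurableSpace α] (μ : Measure α) (q : ℝ≥0∞) (f : α → ℝ≥0∞) : ℝ≥0∞ :=
  if q = ∞ then essSup f μ else (∫⁻ t, f t ^ q.toReal ∂μ) ^ (1 / q.toReal)

lemma Lq_mono {α : Type*} [MeasurableSpace α] {μ : Measure α} {q : ℝ≥0∞} {f g : α → ℝ≥0∞}
    (h : ∀ᵐ t ∂μ, f t ≤ g t) : Lq μ q f ≤ Lq μ q g := by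
  unfold Lq
  split_ifs
  · exact essSup_mono_ae h
  · refine ENNReal.rpow_le_rpow (lintegral_mono_ae ?_) (by positivity)
    filter_upwards [h] with t ht using ENNReal.rpow_le_rpow ht (by positivity)

lemma Lq_const_mul {α : Type*} [MeasurableSpace α] {μ : Measure α} {q : ℝ≥0∞} (hq : 1 ≤ q)
    {f : α → ℝ≥0∞} (hf : Measurable f) (c : ℝ≥0∞) :
    Lq μ q (fun t => c * f t) ≤ c * Lq μ q f := by
  unfold Lq
  split_ifs with h
  · exact ENNReal.essSup_const_mul.le
  · have hq0 : 0 < q.toReal := ENNReal.toReal_pos (by positivity) h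
    simp_rw [ENNReal.mul_rpow_of_nonneg _ _ hq0.le]
    rw [lintegral_const_mul _ (hf.pow_const _), ENNReal.mul_rpow_of_nonneg _ _ (by positivity),
      ← ENNReal.rpow_mul, mul_one_div_cancel hq0.ne', ENNReal.rpow_one]

/-- Young's inequality `L^q → L^{q₁}` for an integral operator whose kernel is bounded by `1` and
has marginal integrals at most `A`. -/
lemma young {α : Type*} [MeasurableSpace α] {μ : Measure α} [SFinite μ] {k : α → α → ℝ≥0∞}
    (hk : Measurable (Function.uncurry k)) {A : ℝ≥0∞} (hA0 : A ≠ 0) (hA : A ≠ ∞)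
    (h1 : ∀ t y, k t y ≤ 1) (h2 : ∀ t, ∫⁻ y, k t y ∂μ ≤ A) (h3 : ∀ y, ∫⁻ t, k t y ∂μ ≤ A)
    {a : α → ℝ≥0∞} (ha : Measurable a) {q q₁ : ℝ≥0∞} (hq : 1 ≤ q) (hqq : q ≤ q₁) :
    Lq μ q₁ (fun t => ∫⁻ y, k t y * a y ∂μ) ≤
      A ^ (1 - (1/q).toReal + (1/q₁).toReal) * Lq μ q a := by
  have hkt : ∀ t, Measurable fun y => k t y := fun t =>
    hk.comp (measurable_const.prodMk measurable_id)
  by_cases hqt : q = ∞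
  · have hq1 : q₁ = ∞ := top_le_iff.1 (hqt ▸ hqq)
    subst hqt; subst hq1
    simp only [Lq, if_true]
    refine essSup_le_of_ae_le _ (Filter.Eventually.of_forall fun t => ?_)
    calc ∫⁻ y, k t y * a y ∂μ ≤ ∫⁻ y, k t y * essSup a μ ∂μ := by
          refine lintegral_mono_ae ?_
          filter_upwards [ENNReal.ae_le_essSup a] with y hy
          gcongr
      _ ≤ A * essSup a μ := by rw [lintegral_mul_const _ (hkt t)]; gcongr; exact h2 t
      _ = _ := by simp
  set Q := q.toReal with hQ
  have hQ1 : 1 ≤ Q := by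
    have := (ENNReal.toReal_le_toReal ENNReal.one_ne_top hqt).2 hq
    simpa using this
  have hQ0 : 0 < Q := by linarith
  have hinv : (1/q).toReal = 1 / Q := by simp [hQ]
  set N := (∫⁻ t, a t ^ Q ∂μ) ^ (1 / Q) with hN
  have hNQ : ∫⁻ t, a t ^ Q ∂μ = N ^ Q := by
    rw [hN, ← ENNReal.rpow_mul, one_div_mul_cancel hQ0.ne', ENNReal.rpow_one]
  have hLa : Lq μ q a = N := by simp [Lq, hqt, hN, hQ]
  clear_value N
  set v : α → ℝ≥0∞ := fun t => ∫⁻ y, k t y * a y ∂μ with hv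
  have hj : ∀ t, v t ^ Q ≤ A ^ (Q - 1) * ∫⁻ y, k t y * a y ^ Q ∂μ := by
    intro t
    refine (jensen (hkt t).aemeasurable ha.aemeasurable hQ1).trans ?_
    gcongr
    exact h2 t
  have hsup : ∀ t, v t ≤ A ^ (1 - 1 / Q) * N := by
    intro t
    have : v t ^ Q ≤ (A ^ (1 - 1 / Q) * N) ^ Q := by
      refine (hj t).trans ?_
      rw [ENNReal.mul_rpow_of_nonneg _ _ hQ0.le, ← ENNReal.rpow_mul, ← hNQ]
      have : (1 - 1 / Q) * Q = Q - 1 := by field_simp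
      rw [this]
      gcongr with y
      exact (mul_le_mul_left (h1 t y) _).trans_eq (one_mul _)
    exact (ENNReal.rpow_le_rpow_iff hQ0).1 this
  by_cases hq1 : q₁ = ∞
  · subst hq1
    rw [hLa, hinv]
    simp only [Lq, if_true]
    refine essSup_le_of_ae_le _ (Filter.Eventually.of_forall fun t => ?_)
    simpa using hsup t
  set Q1 := q₁.toReal with hQ1'
  have hQQ : Q ≤ Q1 := (ENNReal.toReal_le_toReal hqt hq1).2 hqq
  have hQ10 : 0 < Q1 := by linarith
  have hinv1 : (1/q₁).toReal = 1 / Q1 := by simp [hQ1']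
  have hintg : ∫⁻ t, v t ^ Q ∂μ ≤ A ^ Q * N ^ Q := by
    have hm : Measurable (Function.uncurry fun t y => k t y * a y ^ Q) :=
      hk.mul ((ha.comp measurable_snd).pow_const _)
    calc ∫⁻ t, v t ^ Q ∂μ ≤ ∫⁻ t, A ^ (Q - 1) * ∫⁻ y, k t y * a y ^ Q ∂μ ∂μ := lintegral_mono hj
      _ = A ^ (Q - 1) * ∫⁻ y, ∫⁻ t, k t y * a y ^ Q ∂μ ∂μ := by
          have hm' : Measurable fun t => ∫⁻ y, k t y * a y ^ Q ∂μ := hm.lintegral_prod_right'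
          rw [lintegral_const_mul _ hm', lintegral_lintegral_swap hm.aemeasurable]
      _ ≤ A ^ (Q - 1) * ∫⁻ y, A * a y ^ Q ∂μ := by
          gcongr with y
          have hky : Measurable fun t => k t y := hk.comp (measurable_id.prodMk measurable_const)
          rw [lintegral_mul_const _ hky]
          gcongr; exact h3 y
      _ = A ^ Q * N ^ Q := by
          rw [lintegral_const_mul _ (ha.pow_const _), hNQ, ← mul_assoc]
          congr 1
          conv_lhs => rw [← ENNReal.rpow_one A, ← ENNReal.rpow_mul, one_mul]
          rw [← ENNReal.rpow_add_of_nonneg _ _ (by linarith) (by linarith)]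
          congr 1; ring
  have hvm : Measurable v := (hk.mul (ha.comp measurable_snd)).lintegral_prod_right'
  have hfin : ∫⁻ t, v t ^ Q1 ∂μ ≤ (A ^ (1 - 1 / Q + 1 / Q1) * N) ^ Q1 := by
    calc ∫⁻ t, v t ^ Q1 ∂μ ≤ ∫⁻ t, (A ^ (1 - 1 / Q) * N) ^ (Q1 - Q) * v t ^ Q ∂μ := by
          refine lintegral_mono fun t => ?_
          calc v t ^ Q1 = v t ^ (Q1 - Q) * v t ^ Q := by
                rw [← ENNReal.rpow_add_of_nonneg _ _ (by linarith) hQ0.le]; congr 1; ring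
            _ ≤ _ := by gcongr; exact hsup t
      _ ≤ (A ^ (1 - 1 / Q) * N) ^ (Q1 - Q) * (A ^ Q * N ^ Q) := by
          rw [lintegral_const_mul _ (hvm.pow_const _)]; gcongr
      _ = _ := by
          rw [ENNReal.mul_rpow_of_nonneg _ _ (by linarith), ENNReal.mul_rpow_of_nonneg _ _ hQ10.le,
            ← ENNReal.rpow_mul, ← ENNReal.rpow_mul, mul_mul_mul_comm,
            ← ENNReal.rpow_add _ _ hA0 hA, ← ENNReal.rpow_add_of_nonneg _ _ (by linarith) hQ0.le]
          congr 2
          · field_simp; ring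
          · ring
  rw [hLa, hinv, hinv1]
  simp only [Lq, hq1, if_false]
  calc _ ≤ ((A ^ (1 - 1 / Q + 1 / Q1) * N) ^ Q1) ^ (1 / Q1) :=
        ENNReal.rpow_le_rpow hfin (by positivity)
    _ = _ := by rw [← ENNReal.rpow_mul, mul_one_div_cancel hQ10.ne', ENNReal.rpow_one]

lemma ellNorm_mono {r : ℝ≥0∞} {a b : ℤ → ℝ≥0∞} (h : ∀ j, a j ≤ b j) :
    ellNorm r a ≤ ellNorm r b := by
  unfold ellNorm
  split_ifs
  · exact iSup_mono h
  · refine ENNReal.rpow_le_rpow (ENNReal.tsum_le_tsum fun j => ?_) (by positivity)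
    exact ENNReal.rpow_le_rpow (h j) (by positivity)

lemma ellNorm_const_mul {r : ℝ≥0∞} (hr : 1 ≤ r) (c : ℝ≥0∞) (a : ℤ → ℝ≥0∞) :
    ellNorm r (fun j => c * a j) = c * ellNorm r a := by
  unfold ellNorm
  split_ifs with h
  · rw [ENNReal.mul_iSup]
  · have hq0 : 0 < r.toReal := ENNReal.toReal_pos (by positivity) h
    simp_rw [ENNReal.mul_rpow_of_nonneg _ _ hq0.le]
    rw [ENNReal.tsum_mul_left, ENNReal.mul_rpow_of_nonneg _ _ (by positivity),
      ← ENNReal.rpow_mul, mul_one_div_cancel hq0.ne', ENNReal.rpow_one]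

lemma le_ellNorm {r : ℝ≥0∞} (hr : 1 ≤ r) (a : ℤ → ℝ≥0∞) (j : ℤ) : a j ≤ ellNorm r a := by
  unfold ellNorm
  split_ifs with h
  · exact le_iSup a j
  · have hq0 : 0 < r.toReal := ENNReal.toReal_pos (by positivity) h
    calc a j = (a j ^ r.toReal) ^ (1 / r.toReal) := by
          rw [← ENNReal.rpow_mul, mul_one_div_cancel hq0.ne', ENNReal.rpow_one]
      _ ≤ _ := ENNReal.rpow_le_rpow (ENNReal.le_tsum j) (by positivity)

/-- On a finite measure space `L^q ⊂ L¹`, in qualitative form. -/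
lemma Lq_to_L1 {α : Type*} [MeasurableSpace α] {μ : Measure α} {q : ℝ≥0∞}
    (hq : 1 ≤ q) (s : Set α) (hs : μ s ≠ ∞) : ∃ c : ℝ≥0∞, c ≠ ∞ ∧
    ∀ f : α → ℝ≥0∞, Measurable f → ∫⁻ y in s, f y ∂μ ≤ c * Lq μ q f := by
  by_cases h : q = ∞
  · refine ⟨μ s, hs, fun f hf => ?_⟩
    simp only [Lq, h, if_true]
    calc ∫⁻ y in s, f y ∂μ ≤ ∫⁻ y in s, essSup f μ ∂μ :=
          lintegral_mono_ae (ae_restrict_of_ae (ENNReal.ae_le_essSup f))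
      _ = _ := by rw [lintegral_const, mul_comm]; simp
  · set Q := q.toReal with hQ
    have hQ1 : 1 ≤ Q := by
      have := (ENNReal.toReal_le_toReal ENNReal.one_ne_top h).2 hq
      simpa using this
    have hQ0 : 0 < Q := by linarith
    refine ⟨(μ s) ^ ((Q - 1) * (1 / Q)), ENNReal.rpow_ne_top_of_nonneg ?_ hs, fun f hf => ?_⟩
    · have : 0 ≤ Q - 1 := by linarith
      positivity
    simp only [Lq, h, if_false]
    have := jensen (μ := μ.restrict s) (k := fun _ => 1) (f := f) measurable_const.aemeasurable
      hf.aemeasurable hQ1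
    simp only [one_mul, lintegral_const, Measure.restrict_apply_univ] at this
    calc ∫⁻ y in s, f y ∂μ = ((∫⁻ y in s, f y ∂μ) ^ Q) ^ (1 / Q) := by
          rw [← ENNReal.rpow_mul, mul_one_div_cancel hQ0.ne', ENNReal.rpow_one]
      _ ≤ (μ s ^ (Q - 1) * ∫⁻ y in s, f y ^ Q ∂μ) ^ (1 / Q) :=
          ENNReal.rpow_le_rpow this (by positivity)
      _ ≤ _ := by
          rw [ENNReal.mul_rpow_of_nonneg _ _ (by positivity), ← ENNReal.rpow_mul]
          gcongr
          exact Measure.restrict_le_self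

/-! ### Inverse Fourier integrals, convolutions and dilations -/

variable {d : ℕ}

/-- Inverse Fourier integral with Mathlib's normalisation `e^{2πi⟨η,x⟩}`. -/
def IF (g : Rd d → ℂ) (x : Rd d) : ℂ :=
  ∫ η, cexp (((2 * Real.pi * ⟪η, x⟫ : ℝ) : ℂ) * I) * g η

/-- Convolution, in the form used by `LP`. -/
def cv (A f : Rd d → ℂ) (x : Rd d) : ℂ := ∫ z, A z * f (x - z)

lemma norm_chr (r : ℝ) : ‖cexp ((r : ℂ) * I)‖ = 1 := Complex.norm_exp_ofReal_mul_I r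

lemma IF_eq (g : Rd d → ℂ) (x : Rd d) : IF g x = 𝓕⁻ g x := by
  rw [Real.fourierInv_eq']; simp [IF, smul_eq_mul]

lemma norm_IF_le (g : Rd d → ℂ) (x : Rd d) : ‖IF g x‖ ≤ ∫ η, ‖g η‖ := by
  refine (norm_integral_le_integral_norm _).trans (le_of_eq ?_)
  simp [norm_chr, -ofReal_mul]

lemma integrable_chr {g : Rd d → ℂ} (hg : Integrable g) (x : Rd d) :
    Integrable fun η => cexp (((2 * Real.pi * ⟪η, x⟫ : ℝ) : ℂ) * I) * g η := by
  refine hg.bdd_mul (c := 1) (Continuous.aestronglyMeasurable (by fun_prop)) ?_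
  exact Filter.Eventually.of_forall fun η => (norm_chr _).le

lemma continuous_IF {g : Rd d → ℂ} (hg : Integrable g) : Continuous (IF g) := by
  refine continuous_of_dominated (bound := fun η => ‖g η‖) ?_ ?_ hg.norm ?_
  · exact fun x => (integrable_chr hg x).aestronglyMeasurable
  · intro x
    refine Filter.Eventually.of_forall fun η => ?_
    simp [norm_chr, -ofReal_mul]
  · refine Filter.Eventually.of_forall fun η => by fun_prop

lemma IF_add {g h : Rd d → ℂ} (hg : Integrable g) (hh : Integrable h) (x : Rd d) :
    IF (fun η => g η + h η) x = IF g x + IF h x := by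
  unfold IF
  simp_rw [mul_add]
  exact integral_add (integrable_chr hg x) (integrable_chr hh x)

lemma bdd_IF {g : Rd d → ℂ} : ∃ c, ∀ x, ‖IF g x‖ ≤ c := ⟨_, norm_IF_le g⟩

lemma integrable_cv (A : 𝓢(Rd d, ℂ)) {f : Rd d → ℂ} (hf : Continuous f) {c : ℝ}
    (hc : ∀ x, ‖f x‖ ≤ c) (x : Rd d) : Integrable fun z => A z * f (x - z) :=
  A.integrable.mul_bdd (c := c) (Continuous.aestronglyMeasurable (by fun_prop))
    (Filter.Eventually.of_forall fun z => hc _)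

/-- Convolution with a Schwartz function is a Fourier multiplier on inverse Fourier integrals. -/
lemma cv_IF (A : 𝓢(Rd d, ℂ)) {g : Rd d → ℂ} (hg : Integrable g) (x : Rd d) :
    cv A (IF g) x = IF (fun η => 𝓕 A η * g η) x := by
  unfold cv IF
  have h1 : ∀ z, A z * ∫ η, cexp (((2 * Real.pi * ⟪η, x - z⟫ : ℝ) : ℂ) * I) * g η
      = ∫ η, A z * (cexp (((2 * Real.pi * ⟪η, x - z⟫ : ℝ) : ℂ) * I) * g η) := fun z =>
    (integral_const_mul _ _).symm
  simp_rw [h1]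
  rw [integral_integral_swap]
  · congr 1; ext η
    rw [SchwartzMap.fourier_coe, Real.fourier_eq', ← integral_mul_const, ← integral_const_mul]
    congr 1; ext z
    have : cexp (((2 * Real.pi * ⟪η, x - z⟫ : ℝ) : ℂ) * I) =
        cexp (((2 * Real.pi * ⟪η, x⟫ : ℝ) : ℂ) * I) * cexp (((-2 * Real.pi * ⟪z, η⟫ : ℝ) : ℂ) * I) := by
      rw [← Complex.exp_add, inner_sub_right, real_inner_comm η z]
      congr 1; push_cast; ring
    rw [this, smul_eq_mul]; ring
  · have := (A.integrable (μ := volume)).mul_prod hg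
    refine (this.bdd_mul (c := 1)
      (f := fun p : Rd d × Rd d => cexp (((2 * Real.pi * ⟪p.2, x - p.1⟫ : ℝ) : ℂ) * I)) ?_ ?_).congr ?_
    · exact Continuous.aestronglyMeasurable (by fun_prop)
    · exact Filter.Eventually.of_forall fun p => (norm_chr _).le
    · refine Filter.Eventually.of_forall fun p => ?_
      simp only [Function.uncurry]; ring

lemma norm_cv_le (A : 𝓢(Rd d, ℂ)) {f : Rd d → ℂ} {c : ℝ}
    (hc : ∀ x, ‖f x‖ ≤ c) (x : Rd d) : ‖cv A f x‖ ≤ (∫ z, ‖A z‖) * c := by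
  unfold cv
  rw [← integral_mul_const]
  refine norm_integral_le_of_norm_le ((A.integrable (μ := volume)).norm.mul_const c) ?_
  refine Filter.Eventually.of_forall fun z => ?_
  rw [norm_mul]; gcongr; exact hc _

/-- The linear equivalence `x ↦ c x`, for `c ≠ 0`. -/
def scaleEquiv (d : ℕ) (c : ℝ) (hc : c ≠ 0) : Rd d ≃L[ℝ] Rd d :=
  ContinuousLinearEquiv.smulLeft (Units.mk0 c hc)

/-- The `L¹`-normalised dilate `c^d A(c x)` of a Schwartz function. -/
def dilc (c : ℝ) (hc : c ≠ 0) (A : 𝓢(Rd d, ℂ)) : 𝓢(Rd d, ℂ) :=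
  ((c ^ d : ℝ) : ℂ) • SchwartzMap.compCLMOfContinuousLinearEquiv ℂ (scaleEquiv d c hc) A

lemma dilc_apply (c : ℝ) (hc : c ≠ 0) (A : 𝓢(Rd d, ℂ)) (z : Rd d) :
    dilc c hc A z = ((c ^ d : ℝ) : ℂ) * A (c • z) := by
  rfl

lemma fourier_dilc (c : ℝ) (hc : 0 < c) (A : 𝓢(Rd d, ℂ)) (η : Rd d) :
    𝓕 (dilc c hc.ne' A) η = 𝓕 A (c⁻¹ • η) := by
  simp_rw [SchwartzMap.fourier_coe, Real.fourier_eq', dilc_apply, smul_eq_mul]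
  have h := Measure.integral_comp_smul (volume : Measure (Rd d))
    (fun z => cexp (((-2 * Real.pi * ⟪z, c⁻¹ • η⟫ : ℝ) : ℂ) * I) * A z) c
  have h2 : ∀ z, cexp (((-2 * Real.pi * ⟪c • z, c⁻¹ • η⟫ : ℝ) : ℂ) * I) * A (c • z)
      = cexp (((-2 * Real.pi * ⟪z, η⟫ : ℝ) : ℂ) * I) * A (c • z) := by
    intro z
    rw [real_inner_smul_left, real_inner_smul_right, mul_inv_cancel_left₀ hc.ne']
  simp_rw [h2] at h
  have h3 : ∀ z, cexp (((-2 * Real.pi * ⟪z, η⟫ : ℝ) : ℂ) * I) * (((c ^ d : ℝ) : ℂ) * A (c • z)) =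
    ((c ^ d : ℝ) : ℂ) * (cexp (((-2 * Real.pi * ⟪z, η⟫ : ℝ) : ℂ) * I) * A (c • z)) := by
    intro z; ring
  simp_rw [h3]
  rw [integral_const_mul, h, finrank_euclideanSpace_fin, abs_of_pos (by positivity),
    Complex.real_smul, ← mul_assoc, ← ofReal_mul, mul_inv_cancel₀ (by positivity)]
  simp

lemma integral_norm_dilc (c : ℝ) (hc : 0 < c) (A : 𝓢(Rd d, ℂ)) :
    ∫ z, ‖dilc c hc.ne' A z‖ = ∫ z, ‖A z‖ := by
  simp_rw [dilc_apply, norm_mul, norm_real, Real.norm_eq_abs, abs_of_pos (pow_pos hc d)]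
  rw [integral_const_mul, Measure.integral_comp_smul (volume : Measure (Rd d)) (fun z => ‖A z‖) c,
    finrank_euclideanSpace_fin, abs_of_pos (by positivity), smul_eq_mul, ← mul_assoc,
    mul_inv_cancel₀ (by positivity), one_mul]

/-- The dyadic dilate `2^{dk} A(2^k x)`. -/
def dil (k : ℤ) (A : 𝓢(Rd d, ℂ)) : 𝓢(Rd d, ℂ) := dilc ((2:ℝ) ^ k) (by positivity) A

lemma dil_apply (k : ℤ) (A : 𝓢(Rd d, ℂ)) (z : Rd d) :
    dil k A z = (((2:ℝ) ^ ((d : ℤ) * k) : ℝ) : ℂ) * A ((2:ℝ) ^ k • z) := by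
  have : (2:ℝ) ^ ((d : ℤ) * k) = ((2:ℝ) ^ k) ^ d := by
    rw [mul_comm (d:ℤ) k, zpow_mul]; simp
  rw [dil, dilc_apply, this]

lemma fourier_dil (k : ℤ) (A : 𝓢(Rd d, ℂ)) (η : Rd d) :
    𝓕 (dil k A) η = 𝓕 A ((2:ℝ) ^ (-k) • η) := by
  rw [dil, fourier_dilc _ (by positivity), zpow_neg]

lemma integral_norm_dil (k : ℤ) (A : 𝓢(Rd d, ℂ)) : ∫ z, ‖dil k A z‖ = ∫ z, ‖A z‖ := by
  rw [dil, integral_norm_dilc _ (by positivity)]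

lemma LP_eq (P : LPData d) (k : ℤ) (f : Rd d → ℂ) (x : Rd d) :
    LP P k f x = cv (dil k P.φ) f x := by
  simp only [LP, cv, dil_apply]

lemma FT_eq (f : Rd d → ℂ) (ξ : Rd d) : FT f ξ = 𝓕 f ((2 * Real.pi)⁻¹ • ξ) := by
  rw [FT, Real.fourier_eq']
  congr 1; ext x
  rw [smul_eq_mul, real_inner_smul_right]
  congr 2
  push_cast; field_simp


lemma enorm_cv_le (A f : Rd d → ℂ) (x : Rd d) :
    ‖cv A f x‖ₑ ≤ ∫⁻ z, ‖A z‖ₑ * ‖f (x - z)‖ₑ := by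
  refine (enorm_integral_le_lintegral_enorm _).trans_eq ?_
  simp [enorm_mul]

lemma lintegral_enorm_schwartz (A : 𝓢(Rd d, ℂ)) :
    ∫⁻ z, ‖A z‖ₑ = ENNReal.ofReal (∫ z, ‖A z‖) := by
  rw [← ofReal_integral_norm_eq_lintegral_enorm A.integrable]

/-- `‖A * f‖_p ≤ ‖A‖_1 ‖f‖_p`. -/
lemma eLpNorm_cv_le (A : 𝓢(Rd d, ℂ)) {f : Rd d → ℂ} (hf : Continuous f) {p : ℝ≥0∞} (hp : 1 ≤ p) :
    eLpNorm (cv A f) p volume ≤ ENNReal.ofReal (∫ z, ‖A z‖) * eLpNorm f p volume := by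
  rw [← lintegral_enorm_schwartz]
  set S := ∫⁻ z, ‖A z‖ₑ
  have hAm : Measurable fun z => ‖A z‖ₑ := A.continuous.enorm.measurable
  by_cases hpt : p = ∞
  · subst hpt
    rw [eLpNorm_exponent_top, eLpNorm_exponent_top]
    refine essSup_le_of_ae_le _ (Filter.Eventually.of_forall fun x => ?_)
    refine (enorm_cv_le _ _ _).trans ?_
    calc _ ≤ ∫⁻ z, ‖A z‖ₑ * eLpNormEssSup f volume := by
          refine lintegral_mono_ae ?_
          have := (quasiMeasurePreserving_sub_left (volume : Measure (Rd d)) x).ae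
            (enorm_ae_le_eLpNormEssSup f volume)
          filter_upwards [this] with z hz
          gcongr
      _ = _ := by rw [lintegral_mul_const _ hAm]
  · have hp0 : p ≠ 0 := by positivity
    rw [eLpNorm_eq_lintegral_rpow_enorm_toReal hp0 hpt, eLpNorm_eq_lintegral_rpow_enorm_toReal hp0 hpt]
    set Q := p.toReal
    have hQ1 : 1 ≤ Q := by
      have := (ENNReal.toReal_le_toReal ENNReal.one_ne_top hpt).2 hp
      simpa using this
    have hQ0 : 0 < Q := by linarith
    have hm : Measurable (Function.uncurry fun x z : Rd d => ‖A z‖ₑ * ‖f (x - z)‖ₑ ^ Q) := by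
      refine (hAm.comp measurable_snd).mul (Measurable.pow_const ?_ _)
      exact (Continuous.enorm (hf.comp (continuous_fst.sub continuous_snd))).measurable
    have key : ∫⁻ x, ‖cv A f x‖ₑ ^ Q ≤ S ^ Q * ∫⁻ x, ‖f x‖ₑ ^ Q := by
      calc ∫⁻ x, ‖cv A f x‖ₑ ^ Q
          ≤ ∫⁻ x, S ^ (Q - 1) * ∫⁻ z, ‖A z‖ₑ * ‖f (x - z)‖ₑ ^ Q := by
            refine lintegral_mono fun x => ?_
            refine (ENNReal.rpow_le_rpow (enorm_cv_le _ _ _) hQ0.le).trans ?_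
            refine jensen hAm.aemeasurable (Measurable.aemeasurable ?_) hQ1
            exact (Continuous.enorm (hf.comp (continuous_const.sub continuous_id))).measurable
        _ = S ^ (Q - 1) * ∫⁻ z, ∫⁻ x, ‖A z‖ₑ * ‖f (x - z)‖ₑ ^ Q := by
            have hm' : Measurable fun x => ∫⁻ z, ‖A z‖ₑ * ‖f (x - z)‖ₑ ^ Q := hm.lintegral_prod_right'
            rw [lintegral_const_mul _ hm', lintegral_lintegral_swap hm.aemeasurable]
        _ = S ^ (Q - 1) * ∫⁻ z, ‖A z‖ₑ * ∫⁻ x, ‖f x‖ₑ ^ Q := by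
            congr 2; ext z
            rw [lintegral_const_mul]
            · rw [lintegral_sub_right_eq_self (fun x => ‖f x‖ₑ ^ Q) z]
            · exact Measurable.pow_const
                (Continuous.enorm (hf.comp (continuous_id.sub continuous_const))).measurable _
        _ = _ := by
            rw [lintegral_mul_const _ hAm, ← mul_assoc]
            congr 1
            change S ^ (Q - 1) * S = S ^ Q
            conv_lhs => rw [← ENNReal.rpow_one S, ← ENNReal.rpow_mul, one_mul]
            rw [← ENNReal.rpow_add_of_nonneg _ _ (by linarith) (by linarith)]
            congr 1; ring
    calc _ ≤ (S ^ Q * ∫⁻ x, ‖f x‖ₑ ^ Q) ^ (1 / Q) := ENNReal.rpow_le_rpow key (by positivity)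
      _ = _ := by
        rw [ENNReal.mul_rpow_of_nonneg _ _ (by positivity), ← ENNReal.rpow_mul,
          mul_one_div_cancel hQ0.ne', ENNReal.rpow_one]

lemma rpow_le_one_add {x : ℝ≥0∞} {a : ℝ} (h0 : 0 ≤ a) (h1 : a ≤ 1) : x ^ a ≤ 1 + x := by
  rcases le_total x 1 with h | h
  · exact (ENNReal.rpow_le_one h h0).trans le_self_add
  · exact ((ENNReal.rpow_le_rpow_of_exponent_le h h1).trans_eq (ENNReal.rpow_one x)).trans
      le_add_self

/-- A crude form of `‖A * f‖_∞ ≤ ‖A‖_{p'} ‖f‖_p`. -/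
lemma enorm_cv_le_eLpNorm (A : 𝓢(Rd d, ℂ)) {f : Rd d → ℂ} (hf : Continuous f) {p : ℝ≥0∞}
    (hp : 1 ≤ p) {B : ℝ} (hB : ∀ z, ‖A z‖ ≤ B) (x : Rd d) :
    ‖cv A f x‖ₑ ≤ (1 + ENNReal.ofReal (∫ z, ‖A z‖)) * (1 + ENNReal.ofReal B) * eLpNorm f p volume := by
  rw [← lintegral_enorm_schwartz]
  set S := ∫⁻ z, ‖A z‖ₑ
  have hAm : Measurable fun z => ‖A z‖ₑ := A.continuous.enorm.measurable
  refine (enorm_cv_le _ _ _).trans ?_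
  by_cases hpt : p = ∞
  · subst hpt
    rw [eLpNorm_exponent_top]
    calc _ ≤ ∫⁻ z, ‖A z‖ₑ * eLpNormEssSup f volume := by
          refine lintegral_mono_ae ?_
          have := (quasiMeasurePreserving_sub_left (volume : Measure (Rd d)) x).ae
            (enorm_ae_le_eLpNormEssSup f volume)
          filter_upwards [this] with z hz
          gcongr
      _ = S * 1 * eLpNormEssSup f volume := by rw [lintegral_mul_const _ hAm, mul_one]
      _ ≤ _ := by gcongr <;> simp [S]
  · have hp0 : p ≠ 0 := by positivity
    rw [eLpNorm_eq_lintegral_rpow_enorm_toReal hp0 hpt]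
    set Q := p.toReal
    have hQ1 : 1 ≤ Q := by
      have := (ENNReal.toReal_le_toReal ENNReal.one_ne_top hpt).2 hp
      simpa using this
    have hQ0 : 0 < Q := by linarith
    have hfm : Measurable fun z => ‖f (x - z)‖ₑ :=
      (Continuous.enorm (hf.comp (continuous_const.sub continuous_id))).measurable
    have key : (∫⁻ z, ‖A z‖ₑ * ‖f (x - z)‖ₑ) ^ Q
        ≤ S ^ (Q - 1) * (ENNReal.ofReal B * ∫⁻ x, ‖f x‖ₑ ^ Q) := by
      refine (jensen hAm.aemeasurable hfm.aemeasurable hQ1).trans ?_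
      gcongr S ^ (Q - 1) * ?_
      rw [← lintegral_sub_left_eq_self (fun z => ‖f z‖ₑ ^ Q) x,
        ← lintegral_const_mul _ (hfm.pow_const _)]
      refine lintegral_mono fun z => ?_
      gcongr
      rw [← ofReal_norm_eq_enorm]
      exact ENNReal.ofReal_le_ofReal (hB z)
    calc _ = ((∫⁻ z, ‖A z‖ₑ * ‖f (x - z)‖ₑ) ^ Q) ^ (1 / Q) := by
          rw [← ENNReal.rpow_mul, mul_one_div_cancel hQ0.ne', ENNReal.rpow_one]
      _ ≤ (S ^ (Q - 1) * (ENNReal.ofReal B * ∫⁻ x, ‖f x‖ₑ ^ Q)) ^ (1 / Q) :=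
          ENNReal.rpow_le_rpow key (by positivity)
      _ = S ^ ((Q - 1) * (1 / Q)) * ENNReal.ofReal B ^ (1 / Q) * (∫⁻ x, ‖f x‖ₑ ^ Q) ^ (1 / Q) := by
          rw [ENNReal.mul_rpow_of_nonneg _ _ (by positivity), ← ENNReal.rpow_mul,
            ENNReal.mul_rpow_of_nonneg _ _ (by positivity), mul_assoc]
      _ ≤ _ := by
          have h1 : (Q - 1) * (1 / Q) ≤ 1 := by
            rw [mul_one_div, div_le_one hQ0]; linarith
          have h2 : 0 ≤ (Q - 1) * (1 / Q) := mul_nonneg (by linarith) (by positivity)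
          have h3 : 1 / Q ≤ 1 := by rw [div_le_one hQ0]; exact hQ1
          gcongr
          · exact rpow_le_one_add h2 h1
          · exact rpow_le_one_add (by positivity) h3

/-! ### Littlewood–Paley blocks and partial sums -/

/-- The symbol of the `k`-th Littlewood–Paley block. -/
def Phi (P : LPData d) (k : ℤ) (η : Rd d) : ℂ := 𝓕 P.φ ((2:ℝ) ^ (-k) • η)

lemma Phi_eq_FT (P : LPData d) (k : ℤ) (η : Rd d) :
    Phi P k η = FT P.φ ((2:ℝ) ^ (-k) • ((2 * Real.pi) • η)) := by
  rw [FT_eq, Phi, SchwartzMap.fourier_coe]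
  congr 1
  rw [smul_comm, smul_smul _ (2 * Real.pi), inv_mul_cancel₀ (by positivity), one_smul]

lemma Phi_ofReal (P : LPData d) (k : ℤ) (η : Rd d) : Phi P k η = ((Phi P k η).re : ℂ) := by
  apply Complex.ext
  · simp
  · rw [Phi_eq_FT, P.him]; simp

lemma Phi_nonneg (P : LPData d) (k : ℤ) (η : Rd d) : 0 ≤ (Phi P k η).re := by
  rw [Phi_eq_FT]; exact P.h0 _

lemma norm_Phi (P : LPData d) (k : ℤ) (η : Rd d) : ‖Phi P k η‖ = (Phi P k η).re := by
  rw [Phi_ofReal, norm_real, Real.norm_eq_abs, ofReal_re, abs_of_nonneg (Phi_nonneg P k η)]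

lemma norm_Phi_le (P : LPData d) (k : ℤ) (η : Rd d) : ‖Phi P k η‖ ≤ 1 := by
  rw [norm_Phi, Phi_eq_FT]; exact P.h1 _

lemma continuous_Phi (P : LPData d) (k : ℤ) : Continuous (Phi P k) := by
  unfold Phi
  exact (𝓕 P.φ).continuous.comp (continuous_const_smul _)

/-- The `k`-th dyadic annulus. -/
def ann (d : ℕ) (k : ℤ) : Set (Rd d) :=
  {η | (2:ℝ) ^ k / 2 ≤ 2 * Real.pi * ‖η‖ ∧ 2 * Real.pi * ‖η‖ ≤ 2 * (2:ℝ) ^ k}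

lemma Phi_supp (P : LPData d) (k : ℤ) (η : Rd d) (h : Phi P k η ≠ 0) : η ∈ ann d k := by
  rw [Phi_eq_FT] at h
  have := P.hsupp _ h
  rw [norm_smul, norm_smul, Real.norm_of_nonneg (by positivity), Real.norm_of_nonneg (by positivity),
    zpow_neg] at this
  have h2 : (0:ℝ) < 2 ^ k := by positivity
  constructor
  · have := mul_le_mul_of_nonneg_left this.1 h2.le
    rw [mul_inv_cancel_left₀ h2.ne'] at this; linarith
  · have := mul_le_mul_of_nonneg_left this.2 h2.le
    rw [mul_inv_cancel_left₀ h2.ne'] at this; linarith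

lemma zero_notMem_ann (k : ℤ) : (0 : Rd d) ∉ ann d k := by
  intro h
  have := h.1
  simp only [norm_zero, mul_zero] at this
  have h2 : (0:ℝ) < 2 ^ k := by positivity
  linarith

lemma Phi_zero (P : LPData d) (k : ℤ) : Phi P k 0 = 0 := by
  by_contra h
  exact zero_notMem_ann k (Phi_supp P k 0 h)

lemma hasSum_Phi (P : LPData d) {η : Rd d} (hη : η ≠ 0) : HasSum (fun k => Phi P k η) 1 := by
  simp_rw [Phi_eq_FT]
  refine P.hsum _ ?_
  simp [hη, Real.pi_ne_zero]

lemma hasSum_Phi_re (P : LPData d) {η : Rd d} (hη : η ≠ 0) : HasSum (fun k => (Phi P k η).re) 1 := by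
  simpa using Complex.hasSum_re (hasSum_Phi P hη)

lemma summable_norm_Phi (P : LPData d) (η : Rd d) : Summable fun k => ‖Phi P k η‖ := by
  by_cases h : η = 0
  · subst h; simp [Phi_zero, summable_zero]
  · simp_rw [norm_Phi]; exact (hasSum_Phi_re P h).summable

lemma tsum_norm_Phi_le (P : LPData d) (η : Rd d) : ∑' k, ‖Phi P k η‖ ≤ 1 := by
  by_cases h : η = 0
  · subst h; simp [Phi_zero]
  · simp_rw [norm_Phi]; exact (hasSum_Phi_re P h).tsum_eq.le

open Classical in
/-- The symbol `∑_{k ∈ S} Φ_k` of a partial Littlewood–Paley sum. -/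
def rho (P : LPData d) (S : Set ℤ) (η : Rd d) : ℂ := ∑' k, S.indicator (fun k => Phi P k η) k

lemma norm_ind_le (S : Set ℤ) (f : ℤ → ℂ) (k : ℤ) : ‖S.indicator f k‖ ≤ ‖f k‖ :=
  norm_indicator_le_norm_self f k

lemma summable_ind (P : LPData d) (S : Set ℤ) (η : Rd d) :
    Summable fun k => S.indicator (fun k => Phi P k η) k :=
  Summable.of_norm_bounded (summable_norm_Phi P η) (norm_ind_le S _)

lemma norm_rho_le (P : LPData d) (S : Set ℤ) (η : Rd d) : ‖rho P S η‖ ≤ 1 := by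
  refine (norm_tsum_le_tsum_norm ?_).trans (le_trans ?_ (tsum_norm_Phi_le P η))
  · exact (summable_norm_Phi P η).of_nonneg_of_le (fun _ => norm_nonneg _) (norm_ind_le S _)
  · refine Summable.tsum_le_tsum (norm_ind_le S _) ?_ (summable_norm_Phi P η)
    exact (summable_norm_Phi P η).of_nonneg_of_le (fun _ => norm_nonneg _) (norm_ind_le S _)

lemma measurable_rho (P : LPData d) (S : Set ℤ) : Measurable (rho P S) := by
  refine measurable_of_tendsto_metrizable' (f := fun (s : Finset ℤ) η =>
    ∑ k ∈ s, S.indicator (fun k => Phi P k η) k) atTop ?_ ?_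
  · intro s
    refine Finset.measurable_fun_sum _ fun k _ => ?_
    by_cases hk : k ∈ S
    · simp only [Set.indicator_of_mem hk]; exact (continuous_Phi P k).measurable
    · simp only [Set.indicator_of_notMem hk]; exact measurable_const
  · rw [tendsto_pi_nhds]
    intro η
    exact (summable_ind P S η).hasSum

lemma rho_add_compl (P : LPData d) (S : Set ℤ) {η : Rd d} (hη : η ≠ 0) :
    rho P S η + rho P Sᶜ η = 1 := by
  unfold rho
  rw [← (summable_ind P S η).tsum_add (summable_ind P Sᶜ η)]
  rw [← (hasSum_Phi P hη).tsum_eq]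
  congr 1; ext k
  exact Set.indicator_self_add_compl_apply S _ k

/-- The block `Δ_k` of the function with Fourier transform `Γ`. -/
def bl (P : LPData d) (k : ℤ) (Γ : Rd d → ℂ) (x : Rd d) : ℂ := IF (fun η => Phi P k η * Γ η) x

/-- The partial Littlewood–Paley sum over `S` of the function with Fourier transform `Γ`. -/
def part (P : LPData d) (S : Set ℤ) (Γ : Rd d → ℂ) (x : Rd d) : ℂ :=
  IF (fun η => rho P S η * Γ η) x

lemma integrable_Phi_mul (P : LPData d) (k : ℤ) {Γ : Rd d → ℂ} (hΓ : Integrable Γ) :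
    Integrable fun η => Phi P k η * Γ η :=
  hΓ.bdd_mul (c := 1) (continuous_Phi P k).aestronglyMeasurable
    (Filter.Eventually.of_forall fun η => norm_Phi_le P k η)

lemma integrable_rho_mul (P : LPData d) (S : Set ℤ) {Γ : Rd d → ℂ} (hΓ : Integrable Γ) :
    Integrable fun η => rho P S η * Γ η :=
  hΓ.bdd_mul (c := 1) (measurable_rho P S).aestronglyMeasurable
    (Filter.Eventually.of_forall fun η => norm_rho_le P S η)

lemma cv_phi (P : LPData d) (k : ℤ) {Γ : Rd d → ℂ} (hΓ : Integrable Γ) (x : Rd d) :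
    cv (dil k P.φ) (IF Γ) x = bl P k Γ x := by
  rw [cv_IF _ hΓ]
  simp only [bl, fourier_dil, Phi]

lemma LP_IF (P : LPData d) (k : ℤ) {Γ : Rd d → ℂ} (hΓ : Integrable Γ) (x : Rd d) :
    LP P k (IF Γ) x = bl P k Γ x := by
  rw [LP_eq, cv_phi P k hΓ]

/-- Dominated convergence lets the frequency sum over `S` pass through the integral against a
bounded function `ω`. -/
lemma hasSum_pairing (P : LPData d) (S : Set ℤ) {Γ ω : Rd d → ℂ} (hΓ : Integrable Γ)
    (hω : AEStronglyMeasurable ω) {c : ℝ} (hc : ∀ η, ‖ω η‖ ≤ c) :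
    HasSum (S.indicator fun k => ∫ η, ω η * (Phi P k η * Γ η))
      (∫ η, ω η * (rho P S η * Γ η)) := by
  have h := hasSum_integral_of_dominated_convergence (μ := volume) (ι := ℤ)
    (F := fun k η => ω η * (S.indicator (fun k => Phi P k η) k * Γ η))
    (f := fun η => ω η * (rho P S η * Γ η))
    (bound := fun k η => c * (‖Phi P k η‖ * ‖Γ η‖)) ?_ ?_ ?_ ?_ ?_
  · have e : (S.indicator fun k => ∫ η, ω η * (Phi P k η * Γ η)) =
        fun k => ∫ η, ω η * (S.indicator (fun k => Phi P k η) k * Γ η) := by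
      funext k
      by_cases hk : k ∈ S
      · simp [Set.indicator_of_mem hk]
      · simp [Set.indicator_of_notMem hk]
    rw [e]
    exact h
  · intro k
    by_cases hk : k ∈ S
    · simp only [Set.indicator_of_mem hk]
      exact hω.mul (integrable_Phi_mul P k hΓ).aestronglyMeasurable
    · simp only [Set.indicator_of_notMem hk, zero_mul, mul_zero]
      exact aestronglyMeasurable_const
  · intro k
    refine Filter.Eventually.of_forall fun η => ?_
    rw [norm_mul, norm_mul]
    have h0 : 0 ≤ c := (norm_nonneg _).trans (hc η)
    gcongr
    · exact hc η
    · exact norm_ind_le S (fun k => Phi P k η) k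
  · refine Filter.Eventually.of_forall fun η => ?_
    exact ((summable_norm_Phi P η).mul_right _).mul_left _
  · have : ∀ η, ∑' k, c * (‖Phi P k η‖ * ‖Γ η‖) = (∑' k, ‖Phi P k η‖) * (c * ‖Γ η‖) := by
      intro η
      rw [tsum_mul_left, tsum_mul_right]; ring
    simp_rw [this]
    refine (hΓ.norm.const_mul c).bdd_mul (c := 1) ?_ ?_
    · refine Measurable.aestronglyMeasurable ?_
      refine measurable_of_tendsto_metrizable' (f := fun (s : Finset ℤ) η =>
        ∑ k ∈ s, ‖Phi P k η‖) atTop ?_ ?_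
      · intro s
        exact Finset.measurable_fun_sum _ fun k _ => (continuous_Phi P k).norm.measurable
      · rw [tendsto_pi_nhds]
        exact fun η => (summable_norm_Phi P η).hasSum
    · refine Filter.Eventually.of_forall fun η => ?_
      rw [Real.norm_of_nonneg (tsum_nonneg fun _ => norm_nonneg _)]
      exact tsum_norm_Phi_le P η
  · refine Filter.Eventually.of_forall fun η => ?_
    exact (((summable_ind P S η).hasSum).mul_right _).mul_left _

lemma hasSum_part (P : LPData d) (S : Set ℤ) {Γ : Rd d → ℂ} (hΓ : Integrable Γ) (x : Rd d) :
    HasSum (S.indicator fun k => bl P k Γ x) (part P S Γ x) :=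
  hasSum_pairing P S hΓ (Continuous.aestronglyMeasurable (by fun_prop)) (c := 1)
    (fun η => (norm_chr _).le)

lemma hasSum_cv_part (P : LPData d) (S : Set ℤ) {Γ : Rd d → ℂ} (hΓ : Integrable Γ)
    (A : 𝓢(Rd d, ℂ)) (x : Rd d) :
    HasSum (S.indicator fun k => cv A (bl P k Γ) x) (cv A (part P S Γ) x) := by
  have h1 : cv A (part P S Γ) x = IF (fun η => 𝓕 A η * (rho P S η * Γ η)) x :=
    cv_IF A (integrable_rho_mul P S hΓ) x
  have h2 : ∀ k, cv A (bl P k Γ) x = IF (fun η => 𝓕 A η * (Phi P k η * Γ η)) x := fun k =>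
    cv_IF A (integrable_Phi_mul P k hΓ) x
  simp_rw [h1, h2, IF, ← mul_assoc (cexp _)]
  refine hasSum_pairing P S hΓ (c := SchwartzMap.seminorm ℂ 0 0 (𝓕 A)) ?_ ?_
  · refine Continuous.aestronglyMeasurable ?_
    have := (𝓕 A).continuous
    fun_prop
  · intro η
    rw [norm_mul, norm_chr, one_mul]
    exact SchwartzMap.norm_le_seminorm ℂ _ _

lemma ae_ne_zero (hd : 1 ≤ d) : ∀ᵐ η : Rd d, η ≠ 0 := by
  haveI : Nonempty (Fin d) := ⟨⟨0, hd⟩⟩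
  exact compl_mem_ae_iff.2 (measure_singleton 0)

lemma part_add_compl (hd : 1 ≤ d) (P : LPData d) (S : Set ℤ) {Γ : Rd d → ℂ} (hΓ : Integrable Γ)
    (x : Rd d) : part P S Γ x + part P Sᶜ Γ x = IF Γ x := by
  unfold part
  rw [← IF_add (integrable_rho_mul P S hΓ) (integrable_rho_mul P _ hΓ)]
  refine integral_congr_ae ?_
  filter_upwards [ae_ne_zero hd] with η hη
  rw [← add_mul, rho_add_compl P S hη, one_mul]

lemma norm_part_le_tsum (P : LPData d) (S : Set ℤ) {Γ : Rd d → ℂ} (hΓ : Integrable Γ) (x : Rd d)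
    {b : ℤ → ℝ} (hb : Summable b) (h : ∀ k ∈ S, ‖bl P k Γ x‖ ≤ b k) (hb0 : ∀ k, 0 ≤ b k) :
    ‖part P S Γ x‖ ≤ ∑' k, b k := by
  rw [← (hasSum_part P S hΓ x).tsum_eq]
  refine tsum_of_norm_bounded hb.hasSum fun k => ?_
  by_cases hk : k ∈ S
  · simpa [hk] using h k hk
  · simpa [hk] using hb0 k

/-! ### Schwartz seminorms, scaling and cutoffs -/

/-- The supremum of the Schwartz seminorms with both indices at most `N`. -/
def sn (N : ℕ) : Seminorm ℂ 𝓢(Rd d, ℂ) :=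
  (Finset.Iic (N, N)).sup (schwartzSeminormFamily ℂ (Rd d) ℂ)

lemma seminorm_le_sn {N k n : ℕ} (hk : k ≤ N) (hn : n ≤ N) (θ : 𝓢(Rd d, ℂ)) :
    SchwartzMap.seminorm ℂ k n θ ≤ sn N θ :=
  Seminorm.le_def.mp (Finset.le_sup (f := schwartzSeminormFamily ℂ (Rd d) ℂ)
    (show (k, n) ∈ Finset.Iic (N, N) by simp [hk, hn])) θ

lemma le_sn {N k n : ℕ} (hk : k ≤ N) (hn : n ≤ N) (θ : 𝓢(Rd d, ℂ)) (z : Rd d) :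
    ‖z‖ ^ k * ‖iteratedFDeriv ℝ n θ z‖ ≤ sn N θ :=
  (SchwartzMap.le_seminorm ℂ k n θ z).trans (seminorm_le_sn hk hn θ)

lemma sn_le {N : ℕ} (θ : 𝓢(Rd d, ℂ)) {B : ℝ} (hB : 0 ≤ B)
    (h : ∀ k ≤ N, ∀ n ≤ N, ∀ z, ‖z‖ ^ k * ‖iteratedFDeriv ℝ n θ z‖ ≤ B) : sn N θ ≤ B := by
  refine Seminorm.finset_sup_apply_le hB fun i hi => ?_
  simp only [Finset.mem_Iic, Prod.le_def] at hi
  exact SchwartzMap.seminorm_le_bound ℂ _ _ θ hB (h _ hi.1 _ hi.2)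

lemma sn_nonneg (N : ℕ) (θ : 𝓢(Rd d, ℂ)) : 0 ≤ sn N θ := apply_nonneg _ _

lemma sn_mono {N N' : ℕ} (h : N ≤ N') (θ : 𝓢(Rd d, ℂ)) : sn N θ ≤ sn N' θ :=
  sn_le θ (sn_nonneg _ _) fun _ hk _ hn z => le_sn (hk.trans h) (hn.trans h) θ z

/-- The norms `sn N` dominate every continuous seminorm on the Schwartz space. -/
lemma sn_of_continuous (q : Seminorm ℂ 𝓢(Rd d, ℂ)) (hq : Continuous q) :
    ∃ (N : ℕ) (C : ℝ), 0 ≤ C ∧ ∀ θ, q θ ≤ C * sn N θ := by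
  obtain ⟨s, C, -, h⟩ := Seminorm.bound_of_continuous (schwartz_withSeminorms ℂ (Rd d) ℂ) q hq
  refine ⟨s.sup Prod.fst + s.sup Prod.snd, C, C.2, fun θ => ?_⟩
  refine (h θ).trans ?_
  change (C:ℝ) * _ ≤ _
  gcongr
  refine Seminorm.finset_sup_apply_le (sn_nonneg _ _) fun i hi => ?_
  refine seminorm_le_sn ?_ ?_ θ
  · exact (Finset.le_sup (f := Prod.fst) hi).trans (Nat.le_add_right _ _)
  · exact (Finset.le_sup (f := Prod.snd) hi).trans (Nat.le_add_left _ _)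

lemma continuous_sn (N : ℕ) : Continuous (sn (d := d) N) := by
  unfold sn
  induction Finset.Iic (N, N) using Finset.induction_on with
  | empty => rw [Finset.sup_empty]; exact continuous_zero
  | insert a s ha ih =>
    rw [Finset.sup_insert, Seminorm.coe_sup]
    exact ((schwartz_withSeminorms ℂ (Rd d) ℂ).continuous_seminorm a).sup ih

lemma sn_clm (T : 𝓢(Rd d, ℂ) →L[ℂ] 𝓢(Rd d, ℂ)) (M : ℕ) :
    ∃ (N : ℕ) (C : ℝ), 0 ≤ C ∧ ∀ θ, sn M (T θ) ≤ C * sn N θ :=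
  sn_of_continuous ((sn M).comp T.toLinearMap) ((continuous_sn M).comp T.continuous)

lemma sn_L1 : ∃ (N : ℕ) (C : ℝ), 0 ≤ C ∧ ∀ θ : 𝓢(Rd d, ℂ), ∫ z, ‖θ z‖ ≤ C * sn N θ := by
  set m := (volume : Measure (Rd d)).integrablePower
  refine ⟨m, 2 ^ m * (∫ x : Rd d, (1 + ‖x‖) ^ (-(m : ℝ))) * 2, ?_, fun θ => ?_⟩
  · have : 0 ≤ ∫ x : Rd d, (1 + ‖x‖) ^ (-(m : ℝ)) := integral_nonneg fun x => by positivity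
    positivity
  · have h := SchwartzMap.integral_pow_mul_iteratedFDeriv_le ℂ (μ := volume) θ 0 0
    simp only [pow_zero, one_mul, norm_iteratedFDeriv_zero, zero_add] at h
    refine h.trans ?_
    rw [mul_assoc _ (2:ℝ), two_mul]
    have : 0 ≤ ∫ x : Rd d, (1 + ‖x‖) ^ (-(m : ℝ)) := integral_nonneg fun x => by positivity
    gcongr
    · exact seminorm_le_sn (Nat.zero_le _) (Nat.zero_le _) θ
    · exact seminorm_le_sn le_rfl (Nat.zero_le _) θ

/-- The dilate `z ↦ θ (c z)`. -/
def scl (c : ℝ) (hc : c ≠ 0) (θ : 𝓢(Rd d, ℂ)) : 𝓢(Rd d, ℂ) :=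
  SchwartzMap.compCLMOfContinuousLinearEquiv ℂ (scaleEquiv d c hc) θ

lemma scl_apply (c : ℝ) (hc : c ≠ 0) (θ : 𝓢(Rd d, ℂ)) (z : Rd d) : scl c hc θ z = θ (c • z) := rfl

lemma iteratedFDeriv_scl (c : ℝ) (hc : 0 < c) (θ : 𝓢(Rd d, ℂ)) (n : ℕ) (z : Rd d) :
    ‖iteratedFDeriv ℝ n (scl c hc.ne' θ) z‖ = c ^ n * ‖iteratedFDeriv ℝ n θ (c • z)‖ := by
  have : ⇑(scl c hc.ne' θ) = fun z => θ (c • z) := rfl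
  rw [this, iteratedFDeriv_comp_const_smul c (θ.smooth n), norm_smul, norm_pow,
    Real.norm_of_nonneg hc.le]

lemma sn_scl_inv {c : ℝ} (hc : 1 ≤ c) (N : ℕ) (θ : 𝓢(Rd d, ℂ)) :
    sn N (scl c⁻¹ (by positivity) θ) ≤ c ^ N * sn N θ := by
  have hc0 : 0 < c := by linarith
  refine sn_le _ (mul_nonneg (by positivity) (sn_nonneg _ _)) fun k hk n hn z => ?_
  rw [iteratedFDeriv_scl _ (by positivity)]
  have h := le_sn hk hn θ (c⁻¹ • z)
  rw [norm_smul, Real.norm_of_nonneg (by positivity), mul_pow] at h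
  calc _ = c ^ k * c⁻¹ ^ n * ((c⁻¹ ^ k * ‖z‖ ^ k) * ‖iteratedFDeriv ℝ n θ (c⁻¹ • z)‖) := by
        rw [inv_pow c k]; field_simp
    _ ≤ c ^ N * 1 * sn N θ := by
        gcongr
        exact pow_le_one₀ (by positivity) (inv_le_one_of_one_le₀ hc)
    _ = _ := by ring

lemma leibniz_pt {c K : Rd d → ℂ} {n N : ℕ} {m : ℕ∞} (hm : (N : ℕ∞) ≤ m)
    (hc : ContDiff ℝ m c) (hK : ContDiff ℝ m K)
    (hn : n ≤ N) (z : Rd d) {A B : ℝ} (hA : ∀ i ≤ N, ‖iteratedFDeriv ℝ i c z‖ ≤ A)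
    (hB : ∀ i ≤ N, ‖iteratedFDeriv ℝ i K z‖ ≤ B) :
    ‖iteratedFDeriv ℝ n (fun z => c z * K z) z‖ ≤ 2 ^ N * A * B := by
  have hA0 : 0 ≤ A := (norm_nonneg _).trans (hA 0 (Nat.zero_le _))
  have hB0 : 0 ≤ B := (norm_nonneg _).trans (hB 0 (Nat.zero_le _))
  refine (norm_iteratedFDeriv_mul_le hc hK z (n := n) ?_).trans ?_
  · exact_mod_cast (show (n : ℕ∞) ≤ N by exact_mod_cast hn).trans hm
  calc _ ≤ ∑ i ∈ Finset.range (n + 1), (n.choose i : ℝ) * A * B := by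
        refine Finset.sum_le_sum fun i hi => ?_
        have : i ≤ n := by simpa [Nat.lt_succ_iff] using hi
        gcongr
        · exact hA i (by omega)
        · exact hB _ (by omega)
    _ = 2 ^ n * A * B := by
        rw [← Finset.sum_mul, ← Finset.sum_mul]
        congr 2
        exact_mod_cast Nat.sum_range_choose n
    _ ≤ _ := by gcongr; norm_num

/-- A smooth cutoff equal to `1` on the unit ball and supported in the ball of radius `2`. -/
def bump (d : ℕ) : ContDiffBump (0 : Rd d) := ⟨1, 2, one_pos, one_lt_two⟩

/-- The cutoff as a Schwartz function. -/
def chi (d : ℕ) : 𝓢(Rd d, ℂ) :=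
  HasCompactSupport.toSchwartzMap (f := fun z => ((bump d z : ℝ) : ℂ))
    ((bump d).hasCompactSupport.comp_left (g := fun r : ℝ => (r : ℂ)) (by simp))
    (ofRealCLM.contDiff.comp (bump d).contDiff)

lemma chi_apply (z : Rd d) : chi d z = ((bump d z : ℝ) : ℂ) := rfl

lemma norm_chi_le (z : Rd d) : ‖chi d z‖ ≤ 1 := by
  rw [chi_apply, norm_real, Real.norm_of_nonneg (bump d).nonneg]; exact (bump d).le_one

lemma chi_eq_one {z : Rd d} (hz : ‖z‖ ≤ 1) : chi d z = 1 := by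
  rw [chi_apply, (bump d).one_of_mem_closedBall]
  · simp
  · simpa [bump] using hz

lemma chi_eq_zero {z : Rd d} (hz : 2 ≤ ‖z‖) : chi d z = 0 := by
  rw [chi_apply, (bump d).zero_of_le_dist]
  · simp
  · simpa [bump] using hz

/-- Multiplication by the cutoff. -/
def near (θ : 𝓢(Rd d, ℂ)) : 𝓢(Rd d, ℂ) := SchwartzMap.smulLeftCLM ℂ (chi d) θ

lemma near_apply (θ : 𝓢(Rd d, ℂ)) (z : Rd d) : near θ z = chi d z * θ z := by
  rw [near, SchwartzMap.smulLeftCLM_apply_apply (chi d).hasTemperateGrowth]; rfl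

/-- Multiplication by one minus the cutoff. -/
def far (θ : 𝓢(Rd d, ℂ)) : 𝓢(Rd d, ℂ) := θ - near θ

lemma far_apply (θ : 𝓢(Rd d, ℂ)) (z : Rd d) : far θ z = (1 - chi d z) * θ z := by
  simp only [far, SchwartzMap.sub_apply, near_apply]; ring

lemma sn_far (N : ℕ) : ∃ C : ℝ, 0 ≤ C ∧ ∀ (θ : 𝓢(Rd d, ℂ)) (B : ℝ), 0 ≤ B →
    (∀ k ≤ N, ∀ n ≤ N, ∀ z : Rd d, 1 ≤ ‖z‖ → ‖z‖ ^ k * ‖iteratedFDeriv ℝ n θ z‖ ≤ B) →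
    sn N (far θ) ≤ C * B := by
  refine ⟨2 ^ N * (1 + sn N (chi d)), by have := sn_nonneg N (chi d); positivity, ?_⟩
  intro θ B hB h
  have h0 := sn_nonneg N (chi d)
  refine sn_le _ (by positivity) fun k hk n hn z => ?_
  have e : ⇑(far θ) = fun z => (1 - chi d z) * θ z := funext (far_apply θ)
  rcases lt_or_ge ‖z‖ 1 with hz | hz
  · have : ⇑(far θ) =ᶠ[𝓝 z] fun _ => 0 := by
      filter_upwards [(isOpen_lt continuous_norm continuous_const).mem_nhds hz] with w hw
      rw [far_apply, chi_eq_one (le_of_lt hw)]; simp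
    rw [this.iteratedFDeriv ℝ n |>.eq_of_nhds]
    rw [show (fun _ : Rd d => (0:ℂ)) = 0 from rfl, iteratedFDeriv_zero]
    simp only [Pi.zero_apply, norm_zero, mul_zero]
    positivity
  · have hz0 : 0 < ‖z‖ := by linarith
    rw [e]
    have := leibniz_pt (m := ⊤) (c := fun z => 1 - chi d z) (K := θ) (n := n) (N := N) le_top
      (contDiff_const.sub ((chi d).smooth _)) (θ.smooth _) hn z (A := 1 + sn N (chi d))
      (B := B / ‖z‖ ^ k) ?_ ?_
    · calc _ ≤ ‖z‖ ^ k * (2 ^ N * (1 + sn N (chi d)) * (B / ‖z‖ ^ k)) := by gcongr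
        _ = _ := by field_simp
    · intro i hi
      have h1 : ‖iteratedFDeriv ℝ i (chi d) z‖ ≤ sn N (chi d) := by
        simpa using le_sn (Nat.zero_le N) hi (chi d) z
      rw [show (fun z => 1 - chi d z) = (fun _ => (1:ℂ)) - ⇑(chi d) from rfl,
        iteratedFDeriv_sub_apply (contDiff_const.contDiffAt) ((chi d).smooth i).contDiffAt]
      refine (norm_sub_le _ _).trans (add_le_add ?_ h1)
      rcases Nat.eq_zero_or_pos i with rfl | hi'
      · simp
      · rw [iteratedFDeriv_const_of_ne hi'.ne']; simp
    · intro i hi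
      rw [le_div_iff₀ (by positivity), mul_comm]
      exact h k hk i hi z hz

/-- Rapid smallness of a concentrated Schwartz function away from the unit ball. -/
lemma sn_far_scl (N M : ℕ) : ∃ C : ℝ, 0 ≤ C ∧ ∀ (θ : 𝓢(Rd d, ℂ)) (c : ℝ) (hc : 1 ≤ c),
    sn N (far (scl c (by positivity) θ)) ≤ C * c⁻¹ ^ M * sn (N + N + M) θ := by
  obtain ⟨C, hC, h⟩ := sn_far (d := d) N
  refine ⟨C, hC, fun θ c hc => ?_⟩
  have hc0 : 0 < c := by linarith
  rw [mul_assoc]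
  refine h _ _ (mul_nonneg (by positivity) (sn_nonneg _ _)) fun k hk n hn z hz => ?_
  rw [iteratedFDeriv_scl _ hc0]
  have h2 := le_sn (show k + N + M ≤ N + N + M by omega) (show n ≤ N + N + M by omega) θ (c • z)
  rw [norm_smul, Real.norm_of_nonneg hc0.le] at h2
  have h3 : c⁻¹ ^ M * ((c * ‖z‖) ^ (k + N + M) * ‖iteratedFDeriv ℝ n θ (c • z)‖)
      ≤ c⁻¹ ^ M * sn (N + N + M) θ := by gcongr
  refine le_trans ?_ h3
  have h4 : ‖z‖ ^ k * (c ^ n * ‖iteratedFDeriv ℝ n θ (c • z)‖) ≤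
      (c ^ (k + N) * ‖z‖ ^ (k + N + M)) * ‖iteratedFDeriv ℝ n θ (c • z)‖ := by
    rw [← mul_assoc, mul_comm (‖z‖ ^ k)]
    gcongr ?_ * ?_ * _
    · exact pow_le_pow_right₀ hc (by omega)
    · exact pow_le_pow_right₀ hz (by omega)
  refine h4.trans (le_of_eq ?_)
  rw [inv_pow, mul_pow, pow_add c (k + N) M]
  field_simp

/-! ### Multipliers localized to an annulus -/

open Real in
/-- Bump used to remove a neighbourhood of the origin of radius `c / (16 π)`. -/
def bumpIn (d : ℕ) (c : ℝ) (hc : 0 < c) : ContDiffBump (0 : Rd d) :=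
  ⟨c / (16 * π), c / (8 * π), by positivity, by
    gcongr; norm_num⟩

open Real in
/-- Bump equal to one on the ball of radius `1 / π`. -/
def bumpOut (d : ℕ) : ContDiffBump (0 : Rd d) :=
  ⟨1 / π, 2 / π, by positivity, by gcongr; norm_num⟩

/-- A smooth function equal to `1` on the annulus `ann d 0`, compactly supported off the origin. -/
def Psi (d : ℕ) (η : Rd d) : ℂ :=
  (((1 - bumpIn d 1 one_pos η) * bumpOut d η : ℝ) : ℂ)

lemma Psi_contDiff : ContDiff ℝ ((⊤ : ℕ∞) : WithTop ℕ∞) (Psi d) := by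
  unfold Psi
  exact ofRealCLM.contDiff.comp
    ((contDiff_const.sub (bumpIn d 1 one_pos).contDiff).mul (bumpOut d).contDiff)

lemma Psi_hasCompactSupport : HasCompactSupport (Psi d) := by
  unfold Psi
  exact ((bumpOut d).hasCompactSupport.mul_left).comp_left (g := fun r : ℝ => (r : ℂ)) (by simp)

lemma Psi_eq_zero {η : Rd d} (h : ‖η‖ ≤ 1 / (16 * Real.pi)) : Psi d η = 0 := by
  unfold Psi
  rw [(bumpIn d 1 one_pos).one_of_mem_closedBall (by simpa [bumpIn] using h)]
  simp

lemma Psi_eq_zero' {η : Rd d} (h : 2 / Real.pi ≤ ‖η‖) : Psi d η = 0 := by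
  unfold Psi
  rw [(bumpOut d).zero_of_le_dist (by simpa [bumpOut] using h)]
  simp

lemma Psi_eq_one {η : Rd d} (h : η ∈ ann d 0) : Psi d η = 1 := by
  obtain ⟨h1, h2⟩ := h
  simp only [zpow_zero] at h1 h2
  have hp := Real.pi_pos
  unfold Psi
  rw [(bumpIn d 1 one_pos).zero_of_le_dist, (bumpOut d).one_of_mem_closedBall]
  · simp
  · simp only [bumpOut, Metric.mem_closedBall, dist_zero_right]
    rw [le_div_iff₀ hp]; linarith
  · simp only [bumpIn, dist_zero_right]
    rw [div_le_iff₀ (by positivity)]; linarith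

/-- The Schwartz function `Ψ m`, for `m` smooth off the origin. -/
def psiMul (m : Rd d → ℂ) (hm : ∀ η ≠ 0, ContDiffAt ℝ ((⊤ : ℕ∞) : WithTop ℕ∞) m η) : 𝓢(Rd d, ℂ) :=
  HasCompactSupport.toSchwartzMap (f := fun η => Psi d η * m η) Psi_hasCompactSupport.mul_right (by
    rw [contDiff_iff_contDiffAt]
    intro η
    by_cases h : η = 0
    · have : (fun η => Psi d η * m η) =ᶠ[𝓝 η] fun _ => 0 := by
        have h0 : ‖η‖ < 1 / (16 * Real.pi) := by rw [h, norm_zero]; positivity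
        filter_upwards [(isOpen_lt continuous_norm continuous_const).mem_nhds h0] with w hw
        rw [Psi_eq_zero (le_of_lt hw), zero_mul]
      exact contDiffAt_const.congr_of_eventuallyEq this
    · exact Psi_contDiff.contDiffAt.mul (hm η h))

lemma psiMul_apply (m : Rd d → ℂ) (hm) (η : Rd d) : psiMul m hm η = Psi d η * m η := rfl

lemma fourier_fourierInv_schwartz (a : 𝓢(Rd d, ℂ)) : 𝓕 (𝓕⁻ a) = a := FourierTransform.fourier_fourierInv_eq a

lemma mem_ann_scale {k : ℤ} {η : Rd d} (h : η ∈ ann d k) : (2:ℝ) ^ (-k) • η ∈ ann d 0 := by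
  obtain ⟨h1, h2⟩ := h
  have h3 : (0:ℝ) < 2 ^ k := by positivity
  constructor
  all_goals
    rw [norm_smul, Real.norm_of_nonneg (by positivity), zpow_neg, zpow_zero]
    field_simp
    linarith

/-- The function `w` is supported in the `k`-th annulus. -/
def SuppAnn (k : ℤ) (w : Rd d → ℂ) : Prop := ∀ η, w η ≠ 0 → η ∈ ann d k

lemma SuppAnn.mul {k : ℤ} {w : Rd d → ℂ} (h : SuppAnn k w) (m : Rd d → ℂ) :
    SuppAnn k fun η => m η * w η := fun η hη => h η (right_ne_zero_of_mul hη)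

lemma suppAnn_Phi (P : LPData d) (k : ℤ) (Γ : Rd d → ℂ) : SuppAnn k fun η => Phi P k η * Γ η :=
  fun η hη => Phi_supp P k η (left_ne_zero_of_mul hη)

/-- On frequencies in the `k`-th annulus a rescaled multiplier is convolution with `dil k A`. -/
lemma IF_mult {k : ℤ} {w m : Rd d → ℂ} (hw : Integrable w) (hs : SuppAnn k w) {A : 𝓢(Rd d, ℂ)}
    (hA : ∀ η ∈ ann d 0, 𝓕 A η = m η) (x : Rd d) :
    IF (fun η => m ((2:ℝ) ^ (-k) • η) * w η) x = cv (dil k A) (IF w) x := by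
  rw [cv_IF _ hw]
  congr 1
  ext η
  rw [fourier_dil]
  by_cases h : w η = 0
  · simp [h]
  · rw [hA _ (mem_ann_scale (hs η h))]

lemma norm_IF_mult_le {k : ℤ} {w m : Rd d → ℂ} (hw : Integrable w) (hs : SuppAnn k w)
    {A : 𝓢(Rd d, ℂ)} (hA : ∀ η ∈ ann d 0, 𝓕 A η = m η) {b : ℝ} (hb : ∀ x, ‖IF w x‖ ≤ b) (x : Rd d) :
    ‖IF (fun η => m ((2:ℝ) ^ (-k) • η) * w η) x‖ ≤ (∫ z, ‖A z‖) * b := by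
  rw [IF_mult hw hs hA, ← integral_norm_dil k A]
  exact norm_cv_le _ hb x

/-- A symbol smooth away from the origin agrees, on the unit frequency annulus, with the Fourier
transform of a Schwartz kernel. -/
lemma exists_kernel (m : Rd d → ℂ) (hm : ∀ η ≠ 0, ContDiffAt ℝ ((⊤ : ℕ∞) : WithTop ℕ∞) m η) :
    ∃ A : 𝓢(Rd d, ℂ), ∀ η ∈ ann d 0, 𝓕 A η = m η :=
  ⟨𝓕⁻ (psiMul m hm), fun η hη => by
    rw [fourier_fourierInv_schwartz, psiMul_apply, Psi_eq_one hη, one_mul]⟩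

/-- The Fourier symbol of the Poisson semigroup at time `σ`. -/
def ex (σ : ℝ) (η : Rd d) : ℂ := ((Real.exp (-(2 * Real.pi * σ) * ‖η‖) : ℝ) : ℂ)

lemma norm_ex_le {σ : ℝ} (hσ : 0 ≤ σ) (η : Rd d) : ‖ex σ η‖ ≤ 1 := by
  rw [ex, norm_real, Real.norm_of_nonneg (Real.exp_nonneg _), Real.exp_le_one_iff]
  have := Real.pi_pos
  have : 0 ≤ 2 * Real.pi * σ * ‖η‖ := by positivity
  linarith

lemma continuous_ex (σ : ℝ) : Continuous (ex (d := d) σ) := by unfold ex; fun_prop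

lemma ex_contDiffAt (σ : ℝ) : ∀ η : Rd d, η ≠ 0 → ContDiffAt ℝ ((⊤ : ℕ∞) : WithTop ℕ∞) (ex σ) η := by
  intro η hη
  unfold ex
  exact ofRealCLM.contDiff.contDiffAt.comp η
    (Real.contDiff_exp.contDiffAt.comp η (contDiffAt_const.mul (contDiffAt_norm ℝ hη)))

/-- A globally smooth function that equals the norm on the support of `Psi`. -/
def smN (η : Rd d) : ℝ := (1 - bumpIn d (1/4) (by norm_num) η) * ‖η‖

lemma smN_contDiff : ContDiff ℝ ((⊤ : ℕ∞) : WithTop ℕ∞) (smN (d := d)) := by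
  rw [contDiff_iff_contDiffAt]
  intro η
  by_cases h : η = 0
  · have : (smN (d := d)) =ᶠ[𝓝 η] fun _ => 0 := by
      have h0 : ‖η‖ < (1/4) / (16 * Real.pi) := by rw [h, norm_zero]; positivity
      filter_upwards [(isOpen_lt continuous_norm continuous_const).mem_nhds h0] with w hw
      unfold smN
      rw [(bumpIn d (1/4) (by norm_num)).one_of_mem_closedBall]
      · simp
      · simp only [bumpIn, Metric.mem_closedBall, dist_zero_right]; exact le_of_lt hw
    exact contDiffAt_const.congr_of_eventuallyEq this
  · exact (contDiffAt_const.sub (bumpIn d (1/4) (by norm_num)).contDiff.contDiffAt).mul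
      (contDiffAt_norm ℝ h)

lemma smN_eq {η : Rd d} (h : 1 / (16 * Real.pi) ≤ ‖η‖) : smN η = ‖η‖ := by
  unfold smN
  rw [(bumpIn d (1/4) (by norm_num)).zero_of_le_dist]
  · simp
  · simp only [bumpIn, dist_zero_right]
    refine le_trans ?_ h
    rw [div_le_div_iff₀ (by positivity) (by positivity)]
    have := Real.pi_pos
    linarith

/-- Away from `s = 0`, all derivatives of the exponential decay quadratically in `σ`; this is what
makes the localised Poisson kernels integrable in time. -/
lemma exp_deriv_bound (M : ℕ) : ∃ C : ℝ, 0 ≤ C ∧ ∀ σ : ℝ, 0 ≤ σ → ∀ s : ℝ, 1 / (16 * Real.pi) ≤ s →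
    ∀ i ≤ M, ‖iteratedFDeriv ℝ i (fun s : ℝ => Real.exp (-(2 * Real.pi * σ) * s)) s‖
      ≤ C * ((1 + σ) ^ 2)⁻¹ := by
  refine ⟨(2 * Real.pi) ^ M * (8 ^ (M + 2) * ((M + 2).factorial * Real.exp (1 / 8))),
    by have := Real.pi_pos; positivity, fun σ hσ s hs i hi => ?_⟩
  have hp := Real.pi_pos
  have hp3 := Real.pi_gt_three
  rw [norm_iteratedFDeriv_eq_norm_iteratedDeriv, iteratedDeriv_exp_const_mul]
  rw [norm_mul, norm_pow, norm_neg, Real.norm_of_nonneg (by positivity),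
    Real.norm_of_nonneg (Real.exp_nonneg _), ← div_eq_mul_inv, le_div_iff₀ (by positivity)]
  have h1 : (2 * Real.pi * σ) ^ i ≤ (2 * Real.pi) ^ M * (1 + σ) ^ M := by
    rw [← mul_pow]
    calc _ ≤ (2 * Real.pi * (1 + σ)) ^ i := by gcongr; linarith
      _ ≤ _ := pow_le_pow_right₀ (by nlinarith) hi
  have h2 : Real.exp (-(2 * Real.pi * σ) * s) ≤ Real.exp (-(σ / 8)) := by
    apply Real.exp_le_exp.2
    have : 2 * Real.pi * σ * (1 / (16 * Real.pi)) ≤ 2 * Real.pi * σ * s := by gcongr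
    have e : 2 * Real.pi * σ * (1 / (16 * Real.pi)) = σ / 8 := by field_simp; ring
    linarith
  have h3 : (1 + σ) ^ (M + 2) * Real.exp (-(σ / 8)) ≤
      8 ^ (M + 2) * ((M + 2).factorial * Real.exp (1 / 8)) := by
    have := Real.pow_div_factorial_le_exp ((1 + σ) / 8) (by positivity) (M + 2)
    rw [div_le_iff₀ (by positivity), div_pow, div_le_iff₀ (by positivity)] at this
    calc _ ≤ (Real.exp ((1 + σ) / 8) * (M + 2).factorial * 8 ^ (M + 2)) * Real.exp (-(σ / 8)) := by
          gcongr
      _ = (Real.exp ((1 + σ) / 8) * Real.exp (-(σ / 8))) * ((M + 2).factorial * 8 ^ (M + 2)) := by ring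
      _ = _ := by rw [← Real.exp_add, show (1 + σ) / 8 + -(σ / 8) = 1 / 8 by ring]; ring
  calc _ ≤ (2 * Real.pi) ^ M * (1 + σ) ^ M * Real.exp (-(σ / 8)) * (1 + σ) ^ 2 := by gcongr
    _ = (2 * Real.pi) ^ M * ((1 + σ) ^ (M + 2) * Real.exp (-(σ / 8))) := by rw [pow_add]; ring
    _ ≤ _ := by gcongr

lemma sn_psiMul_ex (M : ℕ) : ∃ C : ℝ, 0 ≤ C ∧ ∀ σ : ℝ, 0 ≤ σ →
    sn M (psiMul (d := d) (ex σ) (ex_contDiffAt σ)) ≤ C * ((1 + σ) ^ 2)⁻¹ := by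
  obtain ⟨C, hC, hexp⟩ := exp_deriv_bound M
  have hbd : ∀ i : ℕ, ∃ D : ℝ, 0 ≤ D ∧ ∀ η ∈ Metric.closedBall (0 : Rd d) (2 / Real.pi),
      ‖iteratedFDeriv ℝ i (smN (d := d)) η‖ ≤ D := by
    intro i
    obtain ⟨D, hD⟩ := (isCompact_closedBall (0 : Rd d) (2 / Real.pi)).exists_bound_of_continuousOn
      (smN_contDiff.continuous_iteratedFDeriv (m := i) (by exact_mod_cast le_top)).continuousOn
    exact ⟨|D|, abs_nonneg _, fun η hη => (hD η hη).trans (le_abs_self D)⟩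
  choose D hD0 hD using hbd
  set DD := 1 + ∑ i ∈ Finset.range (M + 1), D i with hDD
  have hDD1 : 1 ≤ DD := by
    have : 0 ≤ ∑ i ∈ Finset.range (M + 1), D i := Finset.sum_nonneg fun i _ => hD0 i
    linarith
  set PS : 𝓢(Rd d, ℂ) := HasCompactSupport.toSchwartzMap Psi_hasCompactSupport Psi_contDiff with hPS
  have hPSs := sn_nonneg M PS
  have h0 : 0 ≤ 2 ^ M * (M.factorial * C * DD ^ M) * sn M PS := by positivity
  refine ⟨(1 + 2 / Real.pi) ^ M * (2 ^ M * (M.factorial * C * DD ^ M) * sn M PS),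
    by have := Real.pi_pos; positivity, fun σ hσ => ?_⟩
  have hp := Real.pi_pos
  refine sn_le _ (by positivity) fun k hk n hn η => ?_
  have ecoe : ⇑(psiMul (d := d) (ex σ) (ex_contDiffAt σ)) = fun η =>
      (((Real.exp ∘ fun η => (-(2 * Real.pi * σ) * smN η)) η : ℝ) : ℂ) * Psi d η := by
    funext η
    rw [psiMul_apply, ex, mul_comm]
    by_cases h : 1 / (16 * Real.pi) ≤ ‖η‖
    · simp [smN_eq h]
    · rw [Psi_eq_zero (le_of_not_ge h)]; simp
  by_cases hη : 1 / (16 * Real.pi) ≤ ‖η‖ ∧ ‖η‖ ≤ 2 / Real.pi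
  · rw [ecoe]
    have hin : η ∈ Metric.closedBall (0 : Rd d) (2 / Real.pi) := by simpa using hη.2
    have hl := leibniz_pt (m := ⊤) (n := n) (N := M) (z := η)
      (c := fun η => (((Real.exp ∘ fun η => (-(2 * Real.pi * σ) * smN η)) η : ℝ) : ℂ)) (K := Psi d)
      le_top (ofRealCLM.contDiff.comp (Real.contDiff_exp.comp (contDiff_const.mul smN_contDiff)))
      Psi_contDiff hn (A := M.factorial * (C * ((1 + σ) ^ 2)⁻¹) * DD ^ M) (B := sn M PS) ?_ ?_
    · calc _ ≤ (1 + 2 / Real.pi) ^ M * (2 ^ M * (M.factorial * (C * ((1 + σ) ^ 2)⁻¹) * DD ^ M)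
            * sn M PS) := by
            gcongr
            calc ‖η‖ ^ k ≤ (1 + 2 / Real.pi) ^ k := by gcongr; linarith [hη.2]
              _ ≤ _ := pow_le_pow_right₀ (by linarith [show 0 ≤ 2 / Real.pi by positivity]) hk
        _ = _ := by ring
    · intro i hi
      have e1 : (fun η : Rd d => (((Real.exp ∘ fun η => (-(2 * Real.pi * σ) * smN η)) η : ℝ) : ℂ)) =
        ⇑ofRealLI ∘ ((fun s : ℝ => Real.exp (-(2 * Real.pi * σ) * s)) ∘ smN) := rfl
      rw [e1, LinearIsometry.norm_iteratedFDeriv_comp_left (n := ((⊤ : ℕ∞) : WithTop ℕ∞)) _ ?_ (by exact_mod_cast le_top)]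
      · refine (norm_iteratedFDeriv_comp_le (N := ((⊤ : ℕ∞) : WithTop ℕ∞)) (n := i)
          (C := C * ((1 + σ) ^ 2)⁻¹) (D := DD) ?_ smN_contDiff (by exact_mod_cast le_top) η ?_ ?_).trans ?_
        · exact Real.contDiff_exp.comp (contDiff_const.mul contDiff_id)
        · intro j hj
          refine hexp σ hσ _ ?_ j (hj.trans hi)
          rw [smN_eq hη.1]; exact hη.1
        · intro j hj1 hj
          refine (hD j η hin).trans ?_
          have : D j ≤ DD := by
            have : D j ≤ ∑ i ∈ Finset.range (M + 1), D i :=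
              Finset.single_le_sum (fun i _ => hD0 i) (by simp; omega)
            linarith
          exact this.trans (le_self_pow₀ hDD1 (by omega))
        · gcongr
      · exact ((Real.contDiff_exp.comp (contDiff_const.mul contDiff_id)).comp smN_contDiff).contDiffAt
    · intro i hi
      have := le_sn (Nat.zero_le M) hi PS η
      rw [pow_zero, one_mul] at this
      exact this
  · have : ⇑(psiMul (d := d) (ex σ) (ex_contDiffAt σ)) =ᶠ[𝓝 η] fun _ => 0 := by
      rw [not_and_or, not_le, not_le] at hη
      rcases hη with h | h
      · filter_upwards [(isOpen_lt continuous_norm continuous_const).mem_nhds h] with w hw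
        rw [psiMul_apply, Psi_eq_zero (le_of_lt hw), zero_mul]
      · filter_upwards [(isOpen_lt continuous_const continuous_norm).mem_nhds h] with w hw
        rw [psiMul_apply, Psi_eq_zero' (le_of_lt hw), zero_mul]
    rw [this.iteratedFDeriv ℝ n |>.eq_of_nhds]
    rw [show (fun _ : Rd d => (0:ℂ)) = 0 from rfl, iteratedFDeriv_zero]
    simp only [Pi.zero_apply, norm_zero, mul_zero]
    positivity

/-! ### The Poisson semigroup on dyadic blocks -/

/-- Kernel with Fourier transform `Ψ e^{-2πσ|·|}`. -/
def kap0 (σ : ℝ) : 𝓢(Rd d, ℂ) := 𝓕⁻ (psiMul (ex σ) (ex_contDiffAt σ))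

/-- Kernel of the zeroth Littlewood–Paley block composed with the Poisson semigroup. -/
def kapP (P : LPData d) (σ : ℝ) : 𝓢(Rd d, ℂ) :=
  𝓕⁻ (SchwartzMap.smulLeftCLM ℂ ⇑(𝓕 P.φ : 𝓢(Rd d, ℂ)) (psiMul (ex σ) (ex_contDiffAt σ)))

lemma fourier_kap0 (σ : ℝ) {η : Rd d} (h : η ∈ ann d 0) : 𝓕 (kap0 σ) η = ex σ η := by
  rw [kap0, fourier_fourierInv_schwartz, psiMul_apply, Psi_eq_one h, one_mul]

lemma fourier_kapP (P : LPData d) (σ : ℝ) (η : Rd d) : 𝓕 (kapP P σ) η = 𝓕 P.φ η * ex σ η := by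
  rw [kapP, fourier_fourierInv_schwartz,
    SchwartzMap.smulLeftCLM_apply_apply (𝓕 P.φ).hasTemperateGrowth, psiMul_apply, smul_eq_mul]
  by_cases h : 𝓕 P.φ η = 0
  · simp [h]
  · rw [Psi_eq_one, one_mul]
    apply Phi_supp P 0
    simpa [Phi] using h

lemma sn_kapP (P : LPData d) (M : ℕ) : ∃ C : ℝ, 0 ≤ C ∧ ∀ σ : ℝ, 0 ≤ σ →
    sn M (kapP P σ) ≤ C * ((1 + σ) ^ 2)⁻¹ := by
  obtain ⟨N, C, hC, h⟩ := sn_clm ((FourierTransform.fourierInvCLM ℂ 𝓢(Rd d, ℂ)).comp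
    (SchwartzMap.smulLeftCLM ℂ ⇑(𝓕 P.φ : 𝓢(Rd d, ℂ)))) M
  obtain ⟨C', hC', h'⟩ := sn_psiMul_ex (d := d) N
  refine ⟨C * C', by positivity, fun σ hσ => (h _).trans ?_⟩
  rw [mul_assoc]
  gcongr
  exact h' σ hσ

lemma L1_kap0 : ∃ C : ℝ, 0 ≤ C ∧ ∀ σ : ℝ, 0 ≤ σ →
    ∫ z, ‖kap0 (d := d) σ z‖ ≤ C * ((1 + σ) ^ 2)⁻¹ := by
  obtain ⟨M, C0, hC0, h0⟩ := sn_L1 (d := d)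
  obtain ⟨N, C, hC, h⟩ := sn_clm ((FourierTransform.fourierInvCLM ℂ 𝓢(Rd d, ℂ))) M
  obtain ⟨C', hC', h'⟩ := sn_psiMul_ex (d := d) N
  refine ⟨C0 * (C * C'), by positivity, fun σ hσ => (h0 _).trans ?_⟩
  rw [mul_assoc, mul_assoc]
  gcongr
  refine (h _).trans ?_
  gcongr
  exact h' σ hσ

lemma ex_scale (k : ℤ) (τ : ℝ) (η : Rd d) : ex τ η = ex ((2:ℝ) ^ k * τ) ((2:ℝ) ^ (-k) • η) := by
  unfold ex
  rw [norm_smul, Real.norm_of_nonneg (by positivity), zpow_neg]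
  congr 2
  field_simp

lemma integrable_ex_mul {τ : ℝ} (hτ : 0 ≤ τ) {Γ : Rd d → ℂ} (hΓ : Integrable Γ) :
    Integrable fun η => ex τ η * Γ η :=
  hΓ.bdd_mul (c := 1) (continuous_ex τ).aestronglyMeasurable
    (Filter.Eventually.of_forall fun η => norm_ex_le hτ η)

/-- On a single frequency block the Poisson semigroup is convolution with a dilated Schwartz kernel. -/
lemma bl_ex (P : LPData d) (k : ℤ) (τ : ℝ) {Γ : Rd d → ℂ} (hΓ : Integrable Γ) (x : Rd d) :
    bl P k (fun η => ex τ η * Γ η) x = cv (dil k (kap0 ((2:ℝ) ^ k * τ))) (bl P k Γ) x := by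
  have := IF_mult (m := ex ((2:ℝ) ^ k * τ)) (integrable_Phi_mul P k hΓ) (suppAnn_Phi P k Γ)
    (fun η h => fourier_kap0 _ h) x
  refine Eq.trans ?_ this
  unfold bl
  congr 1; ext η
  rw [← ex_scale]; ring

lemma bl_ex' (P : LPData d) (k : ℤ) (τ : ℝ) {Γ : Rd d → ℂ} (hΓ : Integrable Γ) (x : Rd d) :
    bl P k (fun η => ex τ η * Γ η) x = cv (dil k (kapP P ((2:ℝ) ^ k * τ))) (IF Γ) x := by
  rw [cv_IF _ hΓ]
  unfold bl
  congr 1; ext η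
  rw [fourier_dil, fourier_kapP, ← ex_scale, Phi]; ring

lemma continuous_bl (P : LPData d) (k : ℤ) {Γ : Rd d → ℂ} (hΓ : Integrable Γ) :
    Continuous (bl P k Γ) := continuous_IF (integrable_Phi_mul P k hΓ)

lemma continuous_part (P : LPData d) (S : Set ℤ) {Γ : Rd d → ℂ} (hΓ : Integrable Γ) :
    Continuous (part P S Γ) := continuous_IF (integrable_rho_mul P S hΓ)

/-- Each dyadic block decays under the Poisson semigroup at the rate of its frequency. -/
lemma eLpNorm_bl_ex_le : ∃ C : ℝ, 0 < C ∧ ∀ (P : LPData d) (k : ℤ) (τ : ℝ) (Γ : Rd d → ℂ)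
    (p : ℝ≥0∞), 0 ≤ τ → Integrable Γ → 1 ≤ p →
    eLpNorm (bl P k fun η => ex τ η * Γ η) p volume ≤
      ENNReal.ofReal (C * ((1 + (2:ℝ) ^ k * τ) ^ 2)⁻¹) * eLpNorm (bl P k Γ) p volume := by
  obtain ⟨C, hC, h⟩ := L1_kap0 (d := d)
  refine ⟨C + 1, by positivity, fun P k τ Γ p hτ hΓ hp => ?_⟩
  rw [show (bl P k fun η => ex τ η * Γ η) = cv (dil k (kap0 ((2:ℝ) ^ k * τ))) (bl P k Γ) from
    funext (bl_ex P k τ hΓ)]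
  refine (eLpNorm_cv_le _ (continuous_bl P k hΓ) hp).trans ?_
  gcongr
  rw [integral_norm_dil]
  refine (h _ (by positivity)).trans ?_
  gcongr
  linarith

lemma norm_bl_ex_le : ∃ C : ℝ, 0 ≤ C ∧ ∀ (P : LPData d) (k : ℤ) (τ : ℝ) (Γ : Rd d → ℂ) (b : ℝ),
    0 ≤ τ → Integrable Γ → (∀ x, ‖bl P k Γ x‖ ≤ b) → ∀ x,
    ‖bl P k (fun η => ex τ η * Γ η) x‖ ≤ C * b := by
  obtain ⟨C, hC, h⟩ := L1_kap0 (d := d)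
  refine ⟨C, by positivity, fun P k τ Γ b hτ hΓ hb x => ?_⟩
  rw [bl_ex P k τ hΓ]
  refine (norm_cv_le _ hb x).trans ?_
  have hb0 : 0 ≤ b := (norm_nonneg _).trans (hb 0)
  gcongr
  rw [integral_norm_dil]
  refine (h _ (by positivity)).trans ?_
  refine mul_le_of_le_one_right hC (inv_le_one_of_one_le₀ ?_)
  have : 0 ≤ (2:ℝ) ^ k * τ := by positivity
  nlinarith

/-- The growth hypothesis on the blocks: `|Δ_k f| ≤ 2^{n|k|} h`. -/
def Gr (P : LPData d) (n : ℕ) (Γ : Rd d → ℂ) (h : ℝ) : Prop :=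
  ∀ (k : ℤ) (x : Rd d), ‖bl P k Γ x‖ ≤ 2 ^ (n * k.natAbs) * h

lemma Gr.nonneg {P : LPData d} {n : ℕ} {Γ : Rd d → ℂ} {h : ℝ} (H : Gr P n Γ h) : 0 ≤ h := by
  have := (norm_nonneg _).trans (H 0 0)
  simpa using this

lemma summable_half_natAbs : Summable fun k : ℤ => ((1:ℝ) / 2) ^ k.natAbs := by
  rw [summable_int_iff_summable_nat_and_neg]
  simp only [Int.natAbs_natCast, Int.natAbs_neg, and_self]
  exact summable_geometric_two

/-- High frequencies pair with Schwartz functions. -/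
lemma high_bound (P : LPData d) (n : ℕ) : ∃ (N : ℕ) (C : ℝ), 0 ≤ C ∧
    ∀ (S : Set ℤ) (Γ : Rd d → ℂ) (h : ℝ), S ⊆ Set.Ici 0 → Integrable Γ → Gr P n Γ h →
    ∀ (θ : 𝓢(Rd d, ℂ)) (x : Rd d), ‖cv θ (part P S Γ) x‖ ≤ C * sn N θ * h := by
  set m := n + 1 with hm
  have htg : Function.HasTemperateGrowth (fun η : Rd d => (((‖η‖ ^ 2) ^ m : ℝ) : ℂ)) := by
    fun_prop
  set T := SchwartzMap.fourierMultiplierCLM ℂ (fun η : Rd d => (((‖η‖ ^ 2) ^ m : ℝ) : ℂ)) with hT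
  have hTθ : ∀ θ η, 𝓕 (T θ) η = (((‖η‖ ^ 2) ^ m : ℝ) : ℂ) * 𝓕 θ η := by
    intro θ η
    rw [hT, SchwartzMap.fourierMultiplierCLM_apply, fourier_fourierInv_schwartz,
      SchwartzMap.smulLeftCLM_apply_apply htg, smul_eq_mul]
  obtain ⟨A, hA⟩ := exists_kernel (d := d) (fun η => (((‖η‖ ^ 2) ^ m : ℝ) : ℂ)⁻¹) (by
    intro η hη
    refine ContDiffAt.inv (ofRealCLM.contDiff.contDiffAt.comp η
      ((contDiff_norm_sq ℝ).pow m).contDiffAt) ?_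
    have : ‖η‖ ≠ 0 := norm_ne_zero_iff.2 hη
    change (((‖η‖ ^ 2) ^ m : ℝ) : ℂ) ≠ 0
    exact_mod_cast pow_ne_zero _ (pow_ne_zero _ this))
  obtain ⟨N1, C1, hC1, h1⟩ := sn_L1 (d := d)
  obtain ⟨N2, C2, hC2, h2⟩ := sn_clm T N1
  set S0 := ∑' k : ℤ, ((1:ℝ) / 2) ^ k.natAbs with hS0
  have hA0 : 0 ≤ ∫ z, ‖A z‖ := integral_nonneg fun _ => norm_nonneg _
  have hS00 : 0 ≤ S0 := tsum_nonneg fun _ => by positivity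
  refine ⟨N2, S0 * (C1 * C2) * (∫ z, ‖A z‖), by positivity, fun S Γ h hS hΓ H θ x => ?_⟩
  have hh := H.nonneg
  have hθ := sn_nonneg N2 θ
  have key : ∀ k : ℤ, 0 ≤ k → ‖cv θ (bl P k Γ) x‖ ≤
      ((1:ℝ) / 2) ^ k.natAbs * ((C1 * C2 * sn N2 θ) * ((∫ z, ‖A z‖) * h)) := by
    intro k hk
    set w := fun η => Phi P k η * Γ η with hw
    have hwi : Integrable w := integrable_Phi_mul P k hΓ
    have hws : SuppAnn k w := suppAnn_Phi P k Γ
    set w' := fun η => (((‖(2:ℝ) ^ (-k) • η‖ ^ 2) ^ m : ℝ) : ℂ)⁻¹ * w η with hw'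
    have hb := norm_IF_mult_le hwi hws hA (H k)
    have e1 : ∀ y, IF w' y = cv (dil k A) (IF w) y := IF_mult hwi hws hA
    have hw'i : Integrable w' := by
      have : w' = fun η => 𝓕 (dil k A) η * w η := by
        funext η
        rw [fourier_dil]
        by_cases h : w η = 0
        · simp [hw', h]
        · rw [hA _ (mem_ann_scale (hws η h))]
      rw [this]
      exact hwi.bdd_mul (c := SchwartzMap.seminorm ℂ 0 0 (𝓕 (dil k A)))
        (𝓕 (dil k A)).continuous.aestronglyMeasurable
        (Filter.Eventually.of_forall fun η => SchwartzMap.norm_le_seminorm ℂ _ _)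
    have e2 : cv θ (IF w) x = (((((2:ℝ) ^ (-k)) ^ 2) ^ m : ℝ) : ℂ) * cv (T θ) (IF w') x := by
      rw [cv_IF _ hwi, cv_IF _ hw'i]
      unfold IF
      rw [← integral_const_mul]
      congr 1; ext η
      simp only [hTθ, hw']
      by_cases h : w η = 0
      · simp [h]
      · have hη : ‖η‖ ≠ 0 := norm_ne_zero_iff.2 fun h0 => zero_notMem_ann k (h0 ▸ hws η h)
        have hη2 : (((‖η‖ ^ 2) ^ m : ℝ) : ℂ) ≠ 0 := by
          exact_mod_cast pow_ne_zero _ (pow_ne_zero _ hη)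
        have h2k : (((((2:ℝ) ^ (-k)) ^ 2) ^ m : ℝ) : ℂ) ≠ 0 := by
          have : (((2:ℝ) ^ (-k)) ^ 2) ^ m ≠ 0 := by positivity
          exact_mod_cast this
        rw [norm_smul, Real.norm_of_nonneg (by positivity), mul_pow, mul_pow,
          ofReal_mul ((((2:ℝ) ^ (-k)) ^ 2) ^ m), mul_inv]
        field_simp
    change ‖cv θ (IF w) x‖ ≤ _
    rw [e2, norm_mul, norm_real, Real.norm_of_nonneg (by positivity)]
    have h3 : ‖cv (T θ) (IF w') x‖ ≤ (C1 * C2 * sn N2 θ) * ((∫ z, ‖A z‖) * (2 ^ (n * k.natAbs) * h)) := by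
      refine (norm_cv_le (T θ) hb x).trans ?_
      gcongr
      refine (h1 _).trans ?_
      rw [mul_assoc]
      gcongr
      exact h2 θ
    have h4 : (((2:ℝ) ^ (-k)) ^ 2) ^ m * 2 ^ (n * k.natAbs) ≤ ((1:ℝ) / 2) ^ k.natAbs := by
      obtain ⟨j, rfl⟩ := Int.eq_ofNat_of_zero_le hk
      simp only [Int.natAbs_natCast, zpow_neg, zpow_natCast]
      rw [one_div, ← inv_pow, ← pow_mul, ← pow_mul]
      calc ((2:ℝ)⁻¹) ^ (j * (2 * m)) * 2 ^ (n * j) ≤ (2:ℝ)⁻¹ ^ (j + n * j) * 2 ^ (n * j) := by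
            gcongr ?_ * _
            apply pow_le_pow_of_le_one (by norm_num) (by norm_num)
            rw [hm]; nlinarith
        _ = _ := by rw [pow_add, mul_assoc, ← mul_pow]; norm_num
    calc _ ≤ (((2:ℝ) ^ (-k)) ^ 2) ^ m * ((C1 * C2 * sn N2 θ) * ((∫ z, ‖A z‖) * (2 ^ (n * k.natAbs) * h))) := by gcongr
      _ = ((((2:ℝ) ^ (-k)) ^ 2) ^ m * 2 ^ (n * k.natAbs)) * ((C1 * C2 * sn N2 θ) * ((∫ z, ‖A z‖) * h)) := by ring
      _ ≤ _ := by gcongr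
  rw [← (hasSum_cv_part P S hΓ θ x).tsum_eq]
  refine (tsum_of_norm_bounded (summable_half_natAbs.mul_right
    ((C1 * C2 * sn N2 θ) * ((∫ z, ‖A z‖) * h))).hasSum fun k => ?_).trans_eq ?_
  · by_cases hk : k ∈ S
    · rw [Set.indicator_of_mem hk]; exact key k (hS hk)
    · rw [Set.indicator_of_notMem hk, norm_zero]; positivity
  · rw [tsum_mul_right]; ring

/-! ### Taylor remainders of low-frequency blocks -/

/-- The Taylor remainder of `e^{ir}` of order `N`. -/
def te (N : ℕ) (r : ℝ) : ℂ :=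
  cexp (r * I) - ∑ m ∈ Finset.range N, ((r : ℂ) * I) ^ m / (m.factorial : ℂ)

lemma te_zero (r : ℝ) : te 0 r = cexp (r * I) := by simp [te]

lemma te_succ_zero (N : ℕ) : te (N + 1) 0 = 0 := by
  simp [te, Finset.sum_range_succ']

lemma hasDerivAt_te (N : ℕ) (a s : ℝ) :
    HasDerivAt (fun s : ℝ => te (N + 1) (s * a)) ((a : ℂ) * I * te N (s * a)) s := by
  have h0 : HasDerivAt (fun s : ℝ => ((s * a : ℝ) : ℂ) * I) ((a : ℂ) * I) s := by
    have : HasDerivAt (fun s : ℝ => s * a) (1 * a) s := (hasDerivAt_id s).mul_const a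
    simpa using (this.ofReal_comp).mul_const I
  have h1 : HasDerivAt (fun s : ℝ => ∑ m ∈ Finset.range N,
      (((s * a : ℝ) : ℂ) * I) ^ (m + 1) / ((m + 1).factorial : ℂ))
      (∑ m ∈ Finset.range N, ((a : ℂ) * I) * ((((s * a : ℝ) : ℂ) * I) ^ m / (m.factorial : ℂ))) s := by
    apply HasDerivAt.fun_sum
    intro m _
    have := (h0.pow (m + 1)).div_const ((m + 1).factorial : ℂ)
    refine this.congr_deriv ?_
    rw [Nat.factorial_succ]
    have : ((m : ℂ) + 1) ≠ 0 := by exact_mod_cast Nat.succ_ne_zero m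
    have h3 : (m.factorial : ℂ) ≠ 0 := by exact_mod_cast Nat.factorial_ne_zero m
    push_cast
    field_simp
  have h2 := h0.cexp.sub h1
  have e : (fun s : ℝ => te (N + 1) (s * a)) = fun s : ℝ => (cexp (((s * a : ℝ) : ℂ) * I) -
      ∑ m ∈ Finset.range N, (((s * a : ℝ) : ℂ) * I) ^ (m + 1) / ((m + 1).factorial : ℂ)) - 1 := by
    funext s
    simp only [te, Finset.sum_range_succ']
    simp
    ring
  rw [e]
  refine (h2.sub_const 1).congr_deriv ?_
  rw [te, ← Finset.mul_sum]; ring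

lemma norm_te_le (N : ℕ) (r : ℝ) : ‖te N r‖ ≤ 1 + Real.exp |r| := by
  unfold te
  refine (norm_sub_le _ _).trans ?_
  rw [norm_chr]
  gcongr
  refine (norm_sum_le _ _).trans ?_
  refine le_trans (le_of_eq ?_) (Real.sum_le_exp_of_nonneg (abs_nonneg r) N)
  refine Finset.sum_congr rfl fun m _ => ?_
  simp

lemma continuous_te (N : ℕ) : Continuous (te N) := by unfold te; fun_prop

/-- Bernstein's inequality for a directional derivative of a frequency-localized function. -/
lemma bernstein_dir : ∃ C : ℝ, 0 ≤ C ∧ ∀ (k : ℤ) (w : Rd d → ℂ) (x : Rd d) (b : ℝ),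
    Integrable w → SuppAnn k w → (∀ y, ‖IF w y‖ ≤ b) →
    ∀ y, ‖IF (fun η => ((2 * Real.pi * ⟪η, x⟫ : ℝ) : ℂ) * I * w η) y‖ ≤ C * 2 ^ k * ‖x‖ * b := by
  have hk : ∀ l : Fin d, ∃ A : 𝓢(Rd d, ℂ), ∀ η ∈ ann d 0, 𝓕 A η = ((η l : ℝ) : ℂ) := fun l =>
    exists_kernel (fun η : Rd d => ((η l : ℝ) : ℂ)) (by
      intro η _
      exact (ofRealCLM.contDiff.comp (EuclideanSpace.proj (𝕜 := ℝ) l).contDiff).contDiffAt)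
  choose A hA using hk
  refine ⟨2 * Real.pi * ∑ l, ∫ z, ‖A l z‖, by positivity, fun k w x b hw hs hb y => ?_⟩
  have hwi : ∀ l, Integrable fun η : Rd d => (((((2:ℝ) ^ (-k) • η) l : ℝ)) : ℂ) * w η := by
    intro l
    have : (fun η : Rd d => (((((2:ℝ) ^ (-k) • η) l : ℝ)) : ℂ) * w η) =
        fun η => 𝓕 (dil k (A l)) η * w η := by
      funext η
      rw [fourier_dil]
      by_cases h : w η = 0
      · simp [h]
      · rw [hA l _ (mem_ann_scale (hs η h))]
    rw [this]
    exact hw.bdd_mul (c := SchwartzMap.seminorm ℂ 0 0 (𝓕 (dil k (A l))))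
        (𝓕 (dil k (A l))).continuous.aestronglyMeasurable
        (Filter.Eventually.of_forall fun η => SchwartzMap.norm_le_seminorm ℂ _ _)
  have e : IF (fun η => ((2 * Real.pi * ⟪η, x⟫ : ℝ) : ℂ) * I * w η) y =
      ∑ l, ((2 * Real.pi * (2:ℝ) ^ k * x l : ℝ) : ℂ) * I *
        IF (fun η => (((((2:ℝ) ^ (-k) • η) l : ℝ)) : ℂ) * w η) y := by
    unfold IF
    simp_rw [← integral_const_mul]
    rw [← integral_finset_sum _ fun l _ => (integrable_chr (hwi l) y).const_mul _]
    congr 1; ext η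
    have : (⟪η, x⟫ : ℝ) = ∑ l, (2:ℝ) ^ k * ((2:ℝ) ^ (-k) * η l) * x l := by
      rw [PiLp.inner_apply]
      refine Finset.sum_congr rfl fun l _ => ?_
      rw [← mul_assoc, ← zpow_add₀ (by norm_num)]
      simp [mul_comm]
    rw [this]
    push_cast
    simp only [Finset.mul_sum, Finset.sum_mul, PiLp.smul_apply, smul_eq_mul]
    refine Finset.sum_congr rfl fun l _ => ?_
    push_cast
    ring
  rw [e]
  refine (norm_sum_le _ _).trans ?_
  have hb0 : 0 ≤ b := (norm_nonneg _).trans (hb 0)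
  calc _ ≤ ∑ l, (2 * Real.pi * (2:ℝ) ^ k * ‖x‖) * ((∫ z, ‖A l z‖) * b) := by
        refine Finset.sum_le_sum fun l _ => ?_
        rw [norm_mul, norm_mul, norm_I, mul_one, norm_real, norm_mul,
          Real.norm_of_nonneg (by positivity : (0:ℝ) ≤ 2 * Real.pi * (2:ℝ) ^ k)]
        gcongr
        · exact PiLp.norm_apply_le x l
        · exact norm_IF_mult_le (m := fun η : Rd d => ((η l : ℝ) : ℂ)) hw hs (hA l) hb y
    _ = _ := by
        rw [← Finset.mul_sum, ← Finset.sum_mul]; ring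

/-- Taylor expansion of a frequency-localized function with the remainder controlled by its
sup norm. -/
lemma block_taylor : ∃ C : ℝ, 0 ≤ C ∧ ∀ (k : ℤ) (x : Rd d) (N : ℕ) (w : Rd d → ℂ) (b : ℝ),
    Integrable w → SuppAnn k w → (∀ y, ‖IF w y‖ ≤ b) →
    ∀ s ∈ Set.Icc (0:ℝ) 1, ‖∫ η, te N (s * (2 * Real.pi * ⟪η, x⟫)) * w η‖ ≤ (C * 2 ^ k * ‖x‖) ^ N * b := by
  obtain ⟨C, hC, hB⟩ := bernstein_dir (d := d)
  refine ⟨C, hC, fun k x N => ?_⟩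
  induction N with
  | zero =>
    intro w b hw hs hb s _
    simp only [te_zero, pow_zero, one_mul]
    refine le_trans (le_of_eq ?_) (hb (s • x))
    unfold IF
    congr 2; ext η
    rw [inner_smul_right]
    congr 3
    push_cast; ring
  | succ N ih =>
    intro w b hw hs hb
    set K : ℝ := 2 * Real.pi * (‖x‖ * (2 * 2 ^ k / (2 * Real.pi))) with hK
    have hin : ∀ η, w η ≠ 0 → |2 * Real.pi * ⟪η, x⟫| ≤ K := by
      intro η hη
      have h2 := (hs η hη).2
      rw [abs_mul, abs_of_pos (by positivity : 0 < 2 * Real.pi), hK]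
      gcongr
      refine (abs_real_inner_le_norm η x).trans ?_
      rw [mul_comm]
      gcongr
      rw [le_div_iff₀ (by positivity)]
      linarith
    have hw' : Integrable fun η => ((2 * Real.pi * ⟪η, x⟫ : ℝ) : ℂ) * I * w η := by
      refine Integrable.mono' (hw.norm.const_mul K) ?_ (Eventually.of_forall fun η => ?_)
      · exact (Continuous.aestronglyMeasurable (by fun_prop)).mul hw.aestronglyMeasurable
      · rw [norm_mul, norm_mul, norm_I, mul_one, norm_real, Real.norm_eq_abs]
        by_cases h : w η = 0
        · simp [h]
        · gcongr; exact hin η h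
    have hs' : SuppAnn k fun η => ((2 * Real.pi * ⟪η, x⟫ : ℝ) : ℂ) * I * w η := hs.mul _
    have ih' := ih _ _ hw' hs' (hB k w x b hw hs hb)
    have tm : ∀ (M : ℕ) (s : ℝ), AEStronglyMeasurable
        (fun η : Rd d => te M (s * (2 * Real.pi * ⟪η, x⟫))) volume := fun M s =>
      ((continuous_te M).comp (by fun_prop)).aestronglyMeasurable
    have tb : ∀ (M : ℕ) (s : ℝ), |s| ≤ 2 → ∀ η, w η ≠ 0 →
        ‖te M (s * (2 * Real.pi * ⟪η, x⟫))‖ ≤ 1 + Real.exp (2 * K) := by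
      intro M s hs2 η hη
      refine (norm_te_le _ _).trans ?_
      gcongr
      rw [abs_mul]
      gcongr
      exact hin η hη
    have hder : ∀ s ∈ Set.Icc (0:ℝ) 1, HasDerivAt
        (fun s : ℝ => ∫ η, te (N + 1) (s * (2 * Real.pi * ⟪η, x⟫)) * w η)
        (∫ η, te N (s * (2 * Real.pi * ⟪η, x⟫)) * (((2 * Real.pi * ⟪η, x⟫ : ℝ) : ℂ) * I * w η)) s := by
      intro s hs1
      refine (hasDerivAt_integral_of_dominated_loc_of_deriv_le (s := Metric.ball s 1)
        (F := fun s η => te (N + 1) (s * (2 * Real.pi * ⟪η, x⟫)) * w η)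
        (F' := fun s η => te N (s * (2 * Real.pi * ⟪η, x⟫)) *
          (((2 * Real.pi * ⟪η, x⟫ : ℝ) : ℂ) * I * w η))
        (bound := fun η => (1 + Real.exp (2 * K)) * ‖((2 * Real.pi * ⟪η, x⟫ : ℝ) : ℂ) * I * w η‖)
        (Metric.ball_mem_nhds s one_pos)
        (Eventually.of_forall fun s => (tm _ s).mul hw.aestronglyMeasurable) ?_
        ((tm _ s).mul hw'.aestronglyMeasurable) ?_ (hw'.norm.const_mul _) ?_).2
      · refine Integrable.mono' (hw.norm.const_mul (1 + Real.exp (2 * K)))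
          ((tm _ s).mul hw.aestronglyMeasurable) (Eventually.of_forall fun η => ?_)
        rw [norm_mul]
        by_cases h : w η = 0
        · simp [h]
        · gcongr; exact tb _ s (abs_le.2 ⟨by linarith [hs1.1], by linarith [hs1.2]⟩) η h
      · refine Eventually.of_forall fun η s' hs' => ?_
        rw [norm_mul]
        by_cases h : w η = 0
        · simp [h]
        · gcongr
          refine tb _ s' ?_ η h
          rw [Metric.mem_ball, Real.dist_eq, abs_lt] at hs'
          exact abs_le.2 ⟨by linarith [hs1.1], by linarith [hs1.2]⟩
      · refine Eventually.of_forall fun η s' _ => ?_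
        refine ((hasDerivAt_te N (2 * Real.pi * ⟪η, x⟫) s').mul_const (w η)).congr_deriv ?_
        ring
    intro s hs1
    have h0 : (∫ η, te (N + 1) (0 * (2 * Real.pi * ⟪η, x⟫)) * w η) = 0 := by
      simp [te_succ_zero]
    have hb0 : 0 ≤ b := (norm_nonneg _).trans (hb 0)
    have := Convex.norm_image_sub_le_of_norm_hasDerivWithin_le
      (f := fun s : ℝ => ∫ η, te (N + 1) (s * (2 * Real.pi * ⟪η, x⟫)) * w η)
      (fun s hs => (hder s hs).hasDerivWithinAt) ih' (convex_Icc 0 1)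
      (Set.left_mem_Icc.2 zero_le_one) hs1
    simp only [h0, sub_zero] at this
    refine this.trans ?_
    rw [Real.norm_of_nonneg hs1.1, pow_succ]
    calc _ ≤ (C * 2 ^ k * ‖x‖) ^ N * (C * 2 ^ k * ‖x‖ * b) * 1 := by
          gcongr; exact hs1.2
      _ = _ := by ring

/-! ### Taylor polynomials of low-frequency parts -/

/-- Indices of (non-commutative) monomials of degree less than `N` in `d` variables. -/
abbrev Ix (d N : ℕ) := Σ m : Fin N, (Fin m → Fin d)

/-- The vector of all monomials of degree less than `N`. -/
def mono (N : ℕ) (x : Rd d) (i : Ix d N) : ℂ := ∏ l, ((x (i.2 l) : ℝ) : ℂ)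

/-- Truncated symbol of the Taylor coefficient with index `i`. -/
def tco (N : ℕ) (i : Ix d N) (η : Rd d) : ℂ :=
  (Metric.closedBall (0 : Rd d) 1).indicator
    (fun η => (2 * Real.pi * I) ^ (i.1 : ℕ) / ((i.1 : ℕ).factorial : ℂ) * mono N η i) η

/-- Taylor coefficients at the origin of the low-frequency part. -/
def coef (P : LPData d) (N : ℕ) (Γ : Rd d → ℂ) (i : Ix d N) : ℂ :=
  ∫ η, tco N i η * (rho P (Set.Iio 0) η * Γ η)

lemma continuous_mono (N : ℕ) (i : Ix d N) : Continuous fun x : Rd d => mono N x i := by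
  unfold mono; fun_prop

lemma norm_mono_le (N : ℕ) (x : Rd d) (i : Ix d N) : ‖mono N x i‖ ≤ (1 + ‖x‖) ^ N := by
  unfold mono
  rw [norm_prod]
  calc _ ≤ ∏ l : Fin i.1, (1 + ‖x‖) := by
        refine Finset.prod_le_prod (fun _ _ => norm_nonneg _) fun l _ => ?_
        rw [norm_real]
        have := PiLp.norm_apply_le x (i.2 l)
        linarith
    _ = (1 + ‖x‖) ^ (i.1 : ℕ) := by simp
    _ ≤ _ := pow_le_pow_right₀ (by linarith [norm_nonneg x]) i.1.2.le

lemma measurable_tco (N : ℕ) (i : Ix d N) : Measurable (tco N i) := by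
  unfold tco
  exact ((continuous_mono N i).measurable.const_mul _).indicator Metric.isClosed_closedBall.measurableSet

lemma norm_tco_le (N : ℕ) (i : Ix d N) : ∃ c : ℝ, ∀ η, ‖tco N i η‖ ≤ c := by
  refine ⟨‖(2 * Real.pi * I) ^ (i.1 : ℕ) / ((i.1 : ℕ).factorial : ℂ)‖ * (1 + 1) ^ N, fun η => ?_⟩
  unfold tco
  by_cases h : η ∈ Metric.closedBall (0 : Rd d) 1
  · rw [Set.indicator_of_mem h, norm_mul]
    gcongr
    refine (norm_mono_le N η i).trans ?_
    gcongr
    simpa using h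
  · rw [Set.indicator_of_notMem h, norm_zero]; positivity

lemma sum_mono (N : ℕ) (η x : Rd d) :
    ∑ i : Ix d N, ((2 * Real.pi * I) ^ (i.1 : ℕ) / ((i.1 : ℕ).factorial : ℂ) * mono N η i) * mono N x i =
    ∑ m ∈ Finset.range N, (((2 * Real.pi * ⟪η, x⟫ : ℝ) : ℂ) * I) ^ m / (m.factorial : ℂ) := by
  rw [Finset.sum_range, Fintype.sum_sigma]
  refine Finset.sum_congr rfl fun m _ => ?_
  have h1 : ((⟪η, x⟫ : ℝ) : ℂ) ^ (m : ℕ) =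
      ∑ i : Fin m → Fin d, mono N η ⟨m, i⟩ * mono N x ⟨m, i⟩ := by
    have : ((⟪η, x⟫ : ℝ) : ℂ) = ∑ l, ((η l : ℝ) : ℂ) * ((x l : ℝ) : ℂ) := by
      rw [PiLp.inner_apply]
      push_cast
      refine Finset.sum_congr rfl fun l _ => ?_
      simp [mul_comm]
    rw [this, Fintype.sum_pow]
    refine Finset.sum_congr rfl fun i _ => ?_
    simp [mono, Finset.prod_mul_distrib]
  calc _ = (2 * Real.pi * I) ^ (m : ℕ) / ((m : ℕ).factorial : ℂ) *
        ∑ i : Fin m → Fin d, mono N η ⟨m, i⟩ * mono N x ⟨m, i⟩ := by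
        rw [Finset.mul_sum]
        exact Finset.sum_congr rfl fun i _ => by ring
    _ = _ := by
        rw [← h1]; push_cast; ring

lemma ann_low {k : ℤ} (hk : k < 0) {η : Rd d} (h : η ∈ ann d k) : η ∈ Metric.closedBall (0 : Rd d) 1 := by
  have h2 := h.2
  have h3 : (2:ℝ) ^ k ≤ 2 ^ (-1 : ℤ) := zpow_le_zpow_right₀ (by norm_num) (by omega)
  have h4 := Real.pi_gt_three
  rw [mem_closedBall_zero_iff]
  have : (2:ℝ) ^ (-1 : ℤ) = 1 / 2 := by norm_num
  rw [this] at h3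
  nlinarith [norm_nonneg η]

lemma rho_low {P : LPData d} {η : Rd d} (h : η ∉ Metric.closedBall (0 : Rd d) 1) :
    rho P (Set.Iio 0) η = 0 := by
  unfold rho
  rw [← tsum_zero (α := ℂ) (β := ℤ)]
  congr 1; ext k
  by_cases hk : k ∈ Set.Iio (0:ℤ)
  · rw [Set.indicator_of_mem hk]
    by_contra h0
    exact h (ann_low hk (Phi_supp P k η h0))
  · rw [Set.indicator_of_notMem hk]

/-- The low-frequency part of a function of type `Gr` is a polynomial of degree at most `n` up to
an error controlled by the growth constant. -/
lemma low_taylor (P : LPData d) (n : ℕ) : ∃ C : ℝ, 0 ≤ C ∧ ∀ (Γ : Rd d → ℂ) (h : ℝ), Integrable Γ →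
    Gr P n Γ h → ∀ x, ‖part P (Set.Iio 0) Γ x - ∑ i, coef P (n + 1) Γ i * mono (n + 1) x i‖ ≤
      C * ‖x‖ ^ (n + 1) * h := by
  obtain ⟨C, hC, hB⟩ := block_taylor (d := d)
  set S0 := ∑' k : ℤ, ((1:ℝ) / 2) ^ k.natAbs with hS0
  have hS00 : 0 ≤ S0 := tsum_nonneg fun _ => by positivity
  refine ⟨S0 * C ^ (n + 1), by positivity, fun Γ h hΓ H x => ?_⟩
  set ω : Rd d → ℂ := (Metric.closedBall (0 : Rd d) 1).indicator
    fun η => te (n + 1) (2 * Real.pi * ⟪η, x⟫) with hω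
  have hωm : AEStronglyMeasurable ω :=
    (Continuous.aestronglyMeasurable ((continuous_te _).comp (by fun_prop))).indicator
      Metric.isClosed_closedBall.measurableSet
  have hωb : ∀ η, ‖ω η‖ ≤ 1 + Real.exp (2 * Real.pi * (1 * ‖x‖)) := by
    intro η
    rw [hω]
    by_cases hη : η ∈ Metric.closedBall (0 : Rd d) 1
    · rw [Set.indicator_of_mem hη]
      refine (norm_te_le _ _).trans ?_
      gcongr
      rw [abs_mul, abs_of_pos (by positivity : 0 < 2 * Real.pi)]
      gcongr
      refine (abs_real_inner_le_norm η x).trans ?_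
      gcongr
      simpa using hη
    · rw [Set.indicator_of_notMem hη, norm_zero]; positivity
  have hs := hasSum_pairing P (Set.Iio 0) hΓ hωm hωb
  have hR := integrable_rho_mul P (Set.Iio 0) hΓ
  have e : part P (Set.Iio 0) Γ x - ∑ i, coef P (n + 1) Γ i * mono (n + 1) x i =
      ∫ η, ω η * (rho P (Set.Iio 0) η * Γ η) := by
    unfold part IF coef
    simp_rw [← integral_mul_const]
    have hci : ∀ i : Ix d (n + 1), Integrable fun η => tco (n + 1) i η * (rho P (Set.Iio 0) η * Γ η) * mono (n + 1) x i := by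
      intro i
      obtain ⟨c, hc⟩ := norm_tco_le (n + 1) i
      exact (hR.bdd_mul (c := c) (measurable_tco _ i).aestronglyMeasurable
        (Eventually.of_forall hc)).mul_const _
    rw [← integral_finset_sum _ fun i _ => hci i, ← integral_sub (integrable_chr hR x)
      (integrable_finset_sum _ fun i _ => hci i)]
    congr 1; ext η
    by_cases hη : η ∈ Metric.closedBall (0 : Rd d) 1
    · simp only [hω, tco, Set.indicator_of_mem hη, te]
      rw [← sum_mono, sub_mul, Finset.sum_mul]
      congr 1
      exact Finset.sum_congr rfl fun i _ => by ring
    · simp [rho_low hη]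
  rw [e, ← hs.tsum_eq]
  have hh := H.nonneg
  refine (tsum_of_norm_bounded (summable_half_natAbs.mul_right
    (C ^ (n + 1) * ‖x‖ ^ (n + 1) * h)).hasSum fun k => ?_).trans_eq ?_
  · by_cases hk : k ∈ Set.Iio (0:ℤ)
    · rw [Set.indicator_of_mem hk]
      have h1 := hB k x (n + 1) _ _ (integrable_Phi_mul P k hΓ) (suppAnn_Phi P k Γ) (H k) 1 (by simp)
      have h2 : (∫ η, ω η * (Phi P k η * Γ η)) =
          ∫ η, te (n + 1) (1 * (2 * Real.pi * ⟪η, x⟫)) * (Phi P k η * Γ η) := by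
        congr 1; ext η
        by_cases h0 : Phi P k η = 0
        · simp [h0]
        · rw [hω, Set.indicator_of_mem (ann_low hk (Phi_supp P k η h0)), one_mul]
      rw [h2]
      refine h1.trans (le_of_eq ?_)
      obtain ⟨j, rfl⟩ : ∃ j : ℕ, k = -(j : ℤ) := ⟨k.natAbs, by have : k < 0 := hk; omega⟩
      simp only [Int.natAbs_neg, Int.natAbs_natCast, zpow_neg, zpow_natCast]
      rw [mul_pow, mul_pow, one_div, ← inv_pow, ← pow_mul, show j * (n + 1) = j + n * j by ring, pow_add]
      have : ((2:ℝ)⁻¹) ^ (n * j) * 2 ^ (n * j) = 1 := by rw [← mul_pow]; norm_num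
      linear_combination C ^ (n + 1) * (2⁻¹ : ℝ) ^ j * ‖x‖ ^ (n + 1) * h * this
    · rw [Set.indicator_of_notMem hk, norm_zero]; positivity
  · rw [tsum_mul_right]; ring

/-! ### Families of polynomials with integrable values -/

/-- Vectors `w` for which `y ↦ ∑ cᵢ(y) wᵢ` is absolutely integrable. -/
def absInt {ι Y : Type*} [Fintype ι] [MeasurableSpace Y] (ν : Measure Y) (c : Y → ι → ℂ)
    (hc : ∀ i, Measurable fun y => c y i) : Submodule ℂ (ι → ℂ) where
  carrier := {w | ∫⁻ y, ‖∑ i, c y i * w i‖ₑ ∂ν < ∞}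
  zero_mem' := by simp
  add_mem' := by
    intro a b ha hb
    simp only [Set.mem_setOf_eq] at ha hb ⊢
    refine lt_of_le_of_lt ?_ (ENNReal.add_lt_top.2 ⟨ha, hb⟩)
    rw [← lintegral_add_left]
    · refine lintegral_mono fun y => ?_
      simp only [Pi.add_apply, mul_add, Finset.sum_add_distrib]
      exact enorm_add_le _ _
    · exact (Finset.measurable_fun_sum _ fun i _ => (hc i).mul_const _).enorm
  smul_mem' := by
    intro r a ha
    simp only [Set.mem_setOf_eq] at ha ⊢
    have : ∀ y, ‖∑ i, c y i * (r • a) i‖ₑ = ‖r‖ₑ * ‖∑ i, c y i * a i‖ₑ := by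
      intro y
      rw [← enorm_mul, Finset.mul_sum]
      congr 2; ext i
      simp only [Pi.smul_apply, smul_eq_mul]; ring
    simp_rw [this]
    rw [lintegral_const_mul' _ _ enorm_ne_top]
    exact ENNReal.mul_lt_top enorm_lt_top ha

lemma mem_absInt {ι Y : Type*} [Fintype ι] [MeasurableSpace Y] {ν : Measure Y} {c : Y → ι → ℂ}
    {hc : ∀ i, Measurable fun y => c y i} {w : ι → ℂ} :
    w ∈ absInt ν c hc ↔ ∫⁻ y, ‖∑ i, c y i * w i‖ₑ ∂ν < ∞ := Iff.rfl

/-- If a random polynomial is absolutely integrable at every point, it has polynomial growth with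
an integrable constant. -/
lemma exists_growth {Y : Type*} [MeasurableSpace Y] {ν : Measure Y} {N : ℕ} {c : Y → Ix d N → ℂ}
    {hc : ∀ i, Measurable fun y => c y i} (h : ∀ x : Rd d, mono N x ∈ absInt ν c hc) :
    ∃ Λ : Y → ℝ≥0∞, Measurable Λ ∧ ∫⁻ y, Λ y ∂ν < ∞ ∧ ∀ y x,
      ‖∑ i, c y i * mono N x i‖ₑ ≤ Λ y * ENNReal.ofReal ((1 + ‖x‖) ^ N) := by
  set V := absInt ν c hc with hV
  let b := Module.finBasis ℂ V
  let T : V →L[ℂ] (Fin (Module.finrank ℂ V) → ℂ) := LinearMap.toContinuousLinearMap b.equivFun.toLinearMap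
  refine ⟨fun y => ∑ j, ‖T‖ₑ * ‖∑ i, c y i * (b j : Ix d N → ℂ) i‖ₑ, ?_, ?_, ?_⟩
  · exact Finset.measurable_fun_sum _ fun j _ => ((Finset.measurable_fun_sum _ fun i _ =>
      (hc i).mul_const _).enorm).const_mul _
  · rw [lintegral_finset_sum _ fun j _ => ((Finset.measurable_fun_sum _ fun i _ =>
      (hc i).mul_const _).enorm).const_mul _]
    refine ENNReal.sum_lt_top.2 fun j _ => ?_
    rw [lintegral_const_mul' _ _ enorm_ne_top]
    exact ENNReal.mul_lt_top enorm_lt_top (b j).2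
  · intro y x
    have h1 : mono N x = ∑ j, T ⟨mono N x, h x⟩ j • (b j : Ix d N → ℂ) := by
      have := congrArg (Subtype.val) (b.sum_equivFun ⟨mono N x, h x⟩)
      simp only [AddSubmonoidClass.coe_finset_sum, Submodule.coe_smul] at this
      exact this.symm
    have h2 : ∑ i, c y i * mono N x i = ∑ j, T ⟨mono N x, h x⟩ j * ∑ i, c y i * (b j : Ix d N → ℂ) i := by
      simp_rw [Finset.mul_sum]
      rw [Finset.sum_comm]
      refine Finset.sum_congr rfl fun i _ => ?_
      conv_lhs => rw [h1]
      simp only [Finset.sum_apply, Pi.smul_apply, smul_eq_mul, Finset.mul_sum]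
      refine Finset.sum_congr rfl fun j _ => by ring
    rw [h2, Finset.sum_mul]
    refine (enorm_sum_le _ _).trans (Finset.sum_le_sum fun j _ => ?_)
    rw [enorm_mul, mul_right_comm]
    gcongr
    have h3 : ‖T ⟨mono N x, h x⟩ j‖ ≤ ‖T‖ * (1 + ‖x‖) ^ N := by
      refine (norm_le_pi_norm _ j).trans ((T.le_opNorm _).trans ?_)
      gcongr
      change ‖mono N x‖ ≤ _
      exact (pi_norm_le_iff_of_nonneg (by positivity)).2 fun i => norm_mono_le N x i
    rw [← ofReal_norm, ← ofReal_norm, ← ENNReal.ofReal_mul (norm_nonneg _)]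
    exact ENNReal.ofReal_le_ofReal h3

/-- A submodule containing the monomial vectors of a non-null set contains all of them. -/
lemma mono_mem_of_posMeas {N : ℕ} (V : Submodule ℂ (Ix d N → ℂ)) {E : Set (Rd d)}
    (hE : volume E ≠ 0) (h : ∀ x ∈ E, mono N x ∈ V) (x : Rd d) : mono N x ∈ V := by
  by_contra hx
  obtain ⟨f, hfx, hf⟩ := Submodule.exists_le_ker_of_notMem hx
  let g : Ix d N → ℂ := fun i => f fun j => if i = j then 1 else 0
  have hfsum : ∀ w, f w = ∑ i, w i * g i := fun w => LinearMap.pi_apply_eq_sum_univ f w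
  have hcont : Continuous fun v : Rd d => f (mono N (x + v)) := by
    simp_rw [hfsum]
    refine continuous_finset_sum _ fun i _ => ?_
    exact ((continuous_mono N i).comp (by fun_prop)).mul continuous_const
  -- Along each ray from `x` the functional is a nonzero polynomial, so its zeros are finite.
  have hfin : ∀ v : Rd d, {l : ℝ | f (mono N (x + l • v)) = 0}.Finite := by
    intro v
    let q : Polynomial ℂ := ∑ i : Ix d N, (∏ l, (Polynomial.C ((x (i.2 l) : ℝ) : ℂ) +
      Polynomial.C ((v (i.2 l) : ℝ) : ℂ) * Polynomial.X)) * Polynomial.C (g i)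
    have hq : ∀ l : ℝ, q.eval (l : ℂ) = f (mono N (x + l • v)) := by
      intro l
      rw [hfsum]
      simp only [q, Polynomial.eval_finset_sum, Polynomial.eval_mul, Polynomial.eval_prod,
        Polynomial.eval_add, Polynomial.eval_C, Polynomial.eval_X]
      refine Finset.sum_congr rfl fun i _ => ?_
      congr 1
      unfold mono
      refine Finset.prod_congr rfl fun j _ => ?_
      simp; ring
    have hq0 : q ≠ 0 := by
      intro h0
      apply hfx
      have := hq 0
      rw [h0] at this
      simpa using this.symm
    have := (q.rootSet_finite ℂ).preimage (f := fun l : ℝ => (l : ℂ)) ofReal_injective.injOn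
    refine this.subset fun l hl => ?_
    rw [Set.mem_preimage, Polynomial.mem_rootSet]
    refine ⟨hq0, ?_⟩
    simpa using (hq l).trans hl
  set Z : Set (Rd d) := {v | f (mono N (x + v)) = 0} with hZ
  have hZc : IsClosed Z := isClosed_eq hcont continuous_const
  have hZ0 : volume Z ≠ 0 := by
    intro h0
    apply hE
    have : E ⊆ (fun v => (-x) + v) ⁻¹' Z := by
      intro e he
      rw [Set.mem_preimage, hZ, Set.mem_setOf_eq]
      simpa using hf (h e he)
    refine measure_mono_null this ?_
    rw [measure_preimage_add]; exact h0
  let s : Set (ℝ × Rd d) := (fun q : ℝ × Rd d => q.1 • q.2) ⁻¹' Z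
  have hs : MeasurableSet s := (hZc.preimage (by fun_prop)).measurableSet
  have h1 : (volume : Measure ℝ).prod (volume : Measure (Rd d)) s = 0 := by
    rw [Measure.prod_apply_symm hs]
    refine (lintegral_congr fun v => ?_).trans lintegral_zero
    exact (hfin v).measure_zero _
  rw [Measure.measure_prod_null hs] at h1
  obtain ⟨l, hl, hl0⟩ : ∃ l : ℝ, volume (Prod.mk l ⁻¹' s) = 0 ∧ l ≠ 0 := by
    have h3 : ∀ᵐ l : ℝ, l ≠ 0 := by simp [ae_iff, measure_singleton]
    exact (h1.and h3).exists
  have h4 : Prod.mk l ⁻¹' s = (fun v => l • v) ⁻¹' Z := rfl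
  rw [h4, Measure.addHaar_preimage_smul _ hl0] at hl
  rcases mul_eq_zero.1 hl with h5 | h5
  · rw [ENNReal.ofReal_eq_zero] at h5
    have : 0 < |(l ^ Module.finrank ℝ (Rd d))⁻¹| := by positivity
    linarith
  · exact hZ0 h5

/-- The Schwartz function of a normalized bump. -/
def nb (φ : ContDiffBump (0 : Rd d)) : 𝓢(Rd d, ℂ) :=
  HasCompactSupport.toSchwartzMap (f := fun z => ((φ.normed volume z : ℝ) : ℂ))
    (φ.hasCompactSupport_normed.comp_left (g := fun r : ℝ => (r : ℂ)) (by simp))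
    (ofRealCLM.contDiff.comp φ.contDiff_normed)

lemma nb_apply (φ : ContDiffBump (0 : Rd d)) (z : Rd d) : nb φ z = ((φ.normed volume z : ℝ) : ℂ) := rfl

lemma nb_eq_zero (φ : ContDiffBump (0 : Rd d)) {z : Rd d} (hz : φ.rOut ≤ ‖z‖) : nb φ z = 0 := by
  rw [nb_apply, ContDiffBump.normed_def, φ.zero_of_le_dist (by simpa using hz)]; simp

/-- A submodule containing all mollified monomial vectors contains the monomial vectors. -/
lemma mono_mem_of_mollify {N : ℕ} (V : Submodule ℂ (Ix d N → ℂ)) (x : Rd d)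
    (h : ∀ φ : ContDiffBump (0 : Rd d), (fun i => cv (nb φ) (fun z => mono N z i) x) ∈ V) :
    mono N x ∈ V := by
  let φ : ℕ → ContDiffBump (0 : Rd d) := fun n =>
    ⟨1 / ((n : ℝ) + 1) / 2, 1 / ((n : ℝ) + 1), by positivity, half_lt_self (by positivity)⟩
  have hφ : Tendsto (fun n => (φ n).rOut) atTop (𝓝 0) := tendsto_one_div_add_atTop_nhds_zero_nat
  have hcl : IsClosed (V : Set (Ix d N → ℂ)) := Submodule.closed_of_finiteDimensional V
  refine hcl.mem_of_tendsto (f := fun n => (fun i => cv (nb (φ n)) (fun z => mono N z i) x))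
    (b := atTop) ?_ (Eventually.of_forall fun n => h (φ n))
  rw [tendsto_pi_nhds]
  intro i
  have := ContDiffBump.convolution_tendsto_right_of_continuous (μ := (volume : Measure (Rd d))) hφ
    (continuous_mono N i) x
  refine this.congr fun n => ?_
  unfold convolution cv
  congr 1

/-! ### Growth and locality of dyadic kernels -/

/-- Convolution of a Schwartz function with a function of polynomial growth. -/
lemma cv_growth (N : ℕ) : ∃ (N' : ℕ) (C : ℝ), 0 ≤ C ∧ ∀ (θ : 𝓢(Rd d, ℂ)) (f : Rd d → ℂ) (L : ℝ),
    0 ≤ L → (∀ z, ‖f z‖ ≤ L * (1 + ‖z‖) ^ N) → ∀ x, ‖cv θ f x‖ ≤ C * sn N' θ * (L * (1 + ‖x‖) ^ N) := by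
  obtain ⟨N1, C1, hC1, h1⟩ := sn_L1 (d := d)
  set m := (volume : Measure (Rd d)).integrablePower
  set J := ∫ x : Rd d, (1 + ‖x‖) ^ (-(m : ℝ)) with hJ
  have hJ0 : 0 ≤ J := integral_nonneg fun x => by positivity
  refine ⟨N1 + (N + m), 2 ^ (N - 1) * (C1 + 2 ^ m * J * 2), by positivity, fun θ f L hL hf x => ?_⟩
  have hi : Integrable fun z => (2 ^ (N - 1) * (‖θ z‖ + ‖z‖ ^ N * ‖θ z‖)) * (L * (1 + ‖x‖) ^ N) :=
    ((θ.integrable.norm.add (θ.integrable_pow_mul volume N)).const_mul _).mul_const _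
  have hs := sn_nonneg (N1 + (N + m)) θ
  have h2 : ∫ z, ‖z‖ ^ N * ‖θ z‖ ≤ (2 ^ m * J * 2) * sn (N1 + (N + m)) θ := by
    have h := SchwartzMap.integral_pow_mul_iteratedFDeriv_le ℂ (μ := volume) θ N 0
    simp only [norm_iteratedFDeriv_zero] at h
    refine h.trans ?_
    rw [mul_assoc _ (2:ℝ), two_mul]
    gcongr
    · exact seminorm_le_sn (Nat.zero_le _) (Nat.zero_le _) θ
    · exact seminorm_le_sn (by omega) (Nat.zero_le _) θ
  unfold cv
  refine (norm_integral_le_of_norm_le hi (Eventually.of_forall fun z => ?_)).trans ?_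
  · rw [norm_mul]
    calc _ ≤ ‖θ z‖ * (L * (1 + ‖x - z‖) ^ N) := by gcongr; exact hf _
      _ ≤ ‖θ z‖ * (L * ((1 + ‖x‖) * (1 + ‖z‖)) ^ N) := by
          gcongr
          nlinarith [norm_sub_le x z, norm_nonneg x, norm_nonneg z]
      _ ≤ ‖θ z‖ * (L * ((1 + ‖x‖) ^ N * (2 ^ (N - 1) * (1 ^ N + ‖z‖ ^ N)))) := by
          rw [mul_pow]
          gcongr
          exact add_pow_le zero_le_one (norm_nonneg z) N
      _ = _ := by rw [one_pow]; ring
  · rw [integral_mul_const, integral_const_mul, integral_add θ.integrable.norm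
      (θ.integrable_pow_mul volume N)]
    have h3 : ∫ z, ‖θ z‖ ≤ C1 * sn (N1 + (N + m)) θ :=
      (h1 θ).trans (by gcongr; exact sn_mono (by omega) θ)
    have h4 : (∫ z, ‖θ z‖) + ∫ z, ‖z‖ ^ N * ‖θ z‖ ≤ (C1 + 2 ^ m * J * 2) * sn (N1 + (N + m)) θ := by
      linarith
    refine mul_le_mul_of_nonneg_right ?_ (by positivity)
    rw [mul_assoc]
    exact mul_le_mul_of_nonneg_left h4 (by positivity)

lemma cv_add_kernel (A B : 𝓢(Rd d, ℂ)) {f : Rd d → ℂ} (hf : Continuous f) {c : ℝ}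
    (hc : ∀ x, ‖f x‖ ≤ c) (x : Rd d) : cv (⇑(A + B)) f x = cv A f x + cv B f x := by
  unfold cv
  rw [← integral_add (integrable_cv A hf hc x) (integrable_cv B hf hc x)]
  congr 1; ext z
  rw [SchwartzMap.add_apply]; ring

lemma cv_add_fun (A : 𝓢(Rd d, ℂ)) {f g : Rd d → ℂ} (hf : Continuous f) {c c' : ℝ}
    (hc : ∀ x, ‖f x‖ ≤ c) (hg : Continuous g) (hc' : ∀ x, ‖g x‖ ≤ c') (x : Rd d) :
    cv A (fun z => f z + g z) x = cv A f x + cv A g x := by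
  unfold cv
  rw [← integral_add (integrable_cv A hf hc x) (integrable_cv A hg hc' x)]
  congr 1; ext z
  ring

lemma compl_Iio_zero : (Set.Iio (0:ℤ))ᶜ = Set.Ici 0 := by ext; simp

/-- Splitting a convolution into contributions of low and high frequencies. -/
lemma cv_split (hd : 1 ≤ d) (P : LPData d) {Γ : Rd d → ℂ} (hΓ : Integrable Γ) (A : 𝓢(Rd d, ℂ))
    (x : Rd d) : cv A (IF Γ) x = cv A (part P (Set.Iio 0) Γ) x + cv A (part P (Set.Ici 0) Γ) x := by
  rw [← cv_add_fun A (continuous_part P _ hΓ) (norm_IF_le _) (continuous_part P _ hΓ) (norm_IF_le _)]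
  congr 1; ext z
  rw [← part_add_compl hd P (Set.Iio 0) hΓ, compl_Iio_zero]

/-- Far from the origin, high-frequency kernels are small in every Schwartz seminorm. -/
lemma sn_far_kapP (P : LPData d) (N : ℕ) : ∃ C : ℝ, 0 ≤ C ∧ ∀ (k : ℕ) (σ : ℝ), 0 ≤ σ →
    sn N (far (dil k (kapP P σ))) ≤ C * (1 / 2) ^ k := by
  obtain ⟨C1, hC1, h1⟩ := sn_far_scl (d := d) N (d + 1)
  obtain ⟨C2, hC2, h2⟩ := sn_kapP P (N + N + (d + 1))
  refine ⟨C1 * C2, by positivity, fun k σ hσ => ?_⟩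
  have hc : (1:ℝ) ≤ (2:ℝ) ^ k := one_le_pow₀ (by norm_num)
  have e : far (dil k (kapP P σ)) = ((((2:ℝ) ^ k) ^ d : ℝ) : ℂ) •
      far (scl ((2:ℝ) ^ k) (by positivity) (kapP P σ)) := by
    ext z
    rw [SchwartzMap.smul_apply, far_apply, far_apply, scl_apply, dil_apply, smul_eq_mul]
    rw [show ((d:ℤ) * (k:ℤ)) = ((k * d : ℕ) : ℤ) by push_cast; ring]
    simp only [zpow_natCast]
    rw [pow_mul]; ring
  rw [e, map_smul_eq_mul, norm_real, Real.norm_of_nonneg (by positivity)]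
  calc _ ≤ ((2:ℝ) ^ k) ^ d * (C1 * ((2:ℝ) ^ k)⁻¹ ^ (d + 1) * C2) := by
        gcongr
        refine (h1 _ _ hc).trans ?_
        gcongr
        refine (h2 σ hσ).trans (mul_le_of_le_one_right hC2 (inv_le_one_of_one_le₀ ?_))
        nlinarith
    _ = _ := by
        have : ((2:ℝ) ^ k) ≠ 0 := by positivity
        rw [one_div, inv_pow, inv_pow]
        field_simp
        ring

lemma near_add_far (θ : 𝓢(Rd d, ℂ)) : near θ + far θ = θ := by simp [far]

/-- Local bound for the convolution with a compactly cut off kernel. -/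
lemma norm_cv_near_le (θ : 𝓢(Rd d, ℂ)) {f : Rd d → ℂ} {x : Rd d} {M : ℝ}
    (hM : ∀ z, ‖z - x‖ ≤ 2 → ‖f z‖ ≤ M) : ‖cv (near θ) f x‖ ≤ (∫ z, ‖θ z‖) * M := by
  unfold cv
  have hM0 : 0 ≤ M := (norm_nonneg _).trans (hM x (by simp))
  rw [← integral_mul_const]
  refine norm_integral_le_of_norm_le (θ.integrable.norm.mul_const _) (Eventually.of_forall fun z => ?_)
  rw [norm_mul, near_apply, norm_mul]
  by_cases hz : 2 ≤ ‖z‖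
  · rw [chi_eq_zero hz]; simp; positivity
  · calc _ ≤ 1 * ‖θ z‖ * M := by
          gcongr
          · exact norm_chi_le z
          · apply hM; simpa using (not_le.1 hz).le
      _ = _ := by ring

lemma L1_kapP (P : LPData d) : ∃ C : ℝ, 0 ≤ C ∧ ∀ σ : ℝ, 0 ≤ σ →
    ∫ z, ‖kapP P σ z‖ ≤ C * ((1 + σ) ^ 2)⁻¹ := by
  obtain ⟨M, C0, hC0, h0⟩ := sn_L1 (d := d)
  obtain ⟨C', hC', h'⟩ := sn_kapP P M
  refine ⟨C0 * C', by positivity, fun σ hσ => (h0 _).trans ?_⟩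
  rw [mul_assoc]
  gcongr
  exact h' σ hσ

/-- Pointwise bound of a high-frequency block of a Poisson extension by local data and growth
constants. -/
lemma bl_local (hd : 1 ≤ d) (P : LPData d) (n N : ℕ) : ∃ C : ℝ, 0 ≤ C ∧
    ∀ (Γ : Rd d → ℂ) (h L : ℝ), Integrable Γ → Gr P n Γ h → 0 ≤ L →
    (∀ z, ‖part P (Set.Iio 0) Γ z‖ ≤ L * (1 + ‖z‖) ^ N) → ∀ (k : ℕ) (τ : ℝ), 0 ≤ τ →
    ∀ (x : Rd d) (M : ℝ), (∀ z, ‖z - x‖ ≤ 2 → ‖IF Γ z‖ ≤ M) →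
    ‖bl P k (fun η => ex τ η * Γ η) x‖ ≤
      C * (((1 + (2:ℝ) ^ k * τ) ^ 2)⁻¹ * M + (1 / 2) ^ k * (L * (1 + ‖x‖) ^ N + h)) := by
  obtain ⟨C1, hC1, h1⟩ := L1_kapP P
  obtain ⟨N2, C2, hC2, h2⟩ := cv_growth (d := d) N
  obtain ⟨N3, C3, hC3, h3⟩ := high_bound P n
  obtain ⟨C4, hC4, h4⟩ := sn_far_kapP P N2
  obtain ⟨C5, hC5, h5⟩ := sn_far_kapP P N3
  refine ⟨C1 + (C2 * C4 + C3 * C5), by positivity, fun Γ h L hΓ H hL hlow k τ hτ x M hM => ?_⟩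
  have hh := H.nonneg
  have hσ : 0 ≤ (2:ℝ) ^ (k:ℤ) * τ := by positivity
  have hM0 : 0 ≤ M := (norm_nonneg _).trans (hM x (by simp))
  rw [bl_ex' P k τ hΓ]
  set κ := dil k (kapP P ((2:ℝ) ^ (k:ℤ) * τ)) with hκ
  rw [show cv (⇑κ) (IF Γ) x = cv (⇑(near κ + far κ)) (IF Γ) x by rw [near_add_far],
    cv_add_kernel _ _ (continuous_IF hΓ) (norm_IF_le _), cv_split hd P hΓ (far κ)]
  have b1 : ‖cv (near κ) (IF Γ) x‖ ≤ C1 * ((1 + (2:ℝ) ^ k * τ) ^ 2)⁻¹ * M := by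
    refine (norm_cv_near_le κ hM).trans ?_
    gcongr
    rw [hκ, integral_norm_dil]
    simpa using h1 _ hσ
  have b2 : ‖cv (far κ) (part P (Set.Iio 0) Γ) x‖ ≤ C2 * (C4 * (1 / 2) ^ k) * (L * (1 + ‖x‖) ^ N) := by
    refine (h2 (far κ) _ L hL hlow x).trans ?_
    gcongr
    exact h4 k _ hσ
  have b3 : ‖cv (far κ) (part P (Set.Ici 0) Γ) x‖ ≤ C3 * (C5 * (1 / 2) ^ k) * h := by
    refine (h3 (Set.Ici 0) Γ h le_rfl hΓ H (far κ) x).trans ?_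
    gcongr
    exact h5 k _ hσ
  refine (norm_add_le _ _).trans ((add_le_add b1 ((norm_add_le _ _).trans (add_le_add b2 b3))).trans ?_)
  have p1 : 0 ≤ ((1 + (2:ℝ) ^ k * τ) ^ 2)⁻¹ * M := by positivity
  have p2 : 0 ≤ (1 / 2 : ℝ) ^ k * (L * (1 + ‖x‖) ^ N) := by positivity
  have p3 : 0 ≤ (1 / 2 : ℝ) ^ k * h := by positivity
  have q1 : 0 ≤ C2 * C4 := by positivity
  have q2 : 0 ≤ C3 * C5 := by positivity
  nlinarith [mul_nonneg q1 p1, mul_nonneg q1 p3, mul_nonneg q2 p1, mul_nonneg q2 p2, mul_nonneg hC1 p2, mul_nonneg hC1 p3]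

/-- Scale-invariant bound for the mass of the decay kernel. -/
lemma lintegral_decay {a : ℝ} (ha : 0 < a) (t : ℝ) :
    ∫⁻ y : ℝ, ENNReal.ofReal (((1 + a * |t - y|) ^ 2)⁻¹) ≤ ENNReal.ofReal (Real.pi * a⁻¹) := by
  have hi : Integrable fun y : ℝ => (1 + (a * (t - y)) ^ 2)⁻¹ := by
    have := (integrable_inv_one_add_sq.comp_mul_left' ha.ne').comp_sub_left t
    exact this
  have hv : ∫ y : ℝ, (1 + (a * (t - y)) ^ 2)⁻¹ = Real.pi * a⁻¹ := by
    rw [integral_sub_left_eq_self (fun y : ℝ => (1 + (a * y) ^ 2)⁻¹) volume t,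
      Measure.integral_comp_mul_left (fun y : ℝ => (1 + y ^ 2)⁻¹), integral_univ_inv_one_add_sq,
      abs_of_pos (by positivity), smul_eq_mul, mul_comm]
  rw [← hv, ofReal_integral_eq_lintegral_ofReal hi (Eventually.of_forall fun y => by positivity)]
  refine lintegral_mono fun y => ENNReal.ofReal_le_ofReal ?_
  gcongr
  have : 0 ≤ a * |t - y| := by positivity
  have h2 : (a * (t - y)) ^ 2 = (a * |t - y|) ^ 2 := by rw [mul_pow, mul_pow, sq_abs]
  rw [h2]; nlinarith

/-! ### Measurable families of data -/

lemma measurable_IF {Γ : ℝ → Rd d → ℂ} (hΓ : Measurable (Function.uncurry Γ)) :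
    Measurable (fun q : ℝ × Rd d => IF (Γ q.1) q.2) := by
  have h : StronglyMeasurable (Function.uncurry fun (q : ℝ × Rd d) (η : Rd d) =>
      cexp (((2 * Real.pi * ⟪η, q.2⟫ : ℝ) : ℂ) * I) * Γ q.1 η) := by
    apply Measurable.stronglyMeasurable
    refine Measurable.mul ?_ (hΓ.comp (by fun_prop : Measurable fun w : (ℝ × Rd d) × Rd d => (w.1.1, w.2)))
    have : Continuous fun w : (ℝ × Rd d) × Rd d => cexp (((2 * Real.pi * ⟪w.2, w.1.2⟫ : ℝ) : ℂ) * I) := by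
      fun_prop
    exact this.measurable
  exact h.integral_prod_right.measurable

lemma measurable_mulΓ {Γ : ℝ → Rd d → ℂ} (hΓ : Measurable (Function.uncurry Γ)) {m : Rd d → ℂ}
    (hm : Measurable m) : Measurable (Function.uncurry fun y η => m η * Γ y η) :=
  (hm.comp measurable_snd).mul hΓ

lemma measurable_coef (P : LPData d) (N : ℕ) {Γ : ℝ → Rd d → ℂ}
    (hΓ : Measurable (Function.uncurry Γ)) (i : Ix d N) : Measurable fun y => coef P N (Γ y) i :=
  (measurable_mulΓ (measurable_mulΓ hΓ (measurable_rho P _))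
    (measurable_tco N i)).stronglyMeasurable.integral_prod_right.measurable

/-- A measurable family of frequency-side data with integrable growth constants `H`. -/
structure Dat (P : LPData d) (n : ℕ) (ν : Measure ℝ) (Γ : ℝ → Rd d → ℂ) (H : ℝ → ℝ) : Prop where
  int : ∀ y, Integrable (Γ y)
  meas : Measurable (Function.uncurry Γ)
  Hi : Integrable H ν
  gr : ∀ᵐ y ∂ν, Gr P n (Γ y) (H y)

/-- The family of Poisson extensions at distance `|t - y|`. -/
def pois (t : ℝ) (Γ : ℝ → Rd d → ℂ) (y : ℝ) (η : Rd d) : ℂ := ex |t - y| η * Γ y η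

lemma Dat.pois {P : LPData d} {n : ℕ} {ν : Measure ℝ} {Γ : ℝ → Rd d → ℂ} {H : ℝ → ℝ}
    (D : Dat P n ν Γ H) : ∃ C : ℝ, 0 ≤ C ∧ ∀ t, Dat P n ν (pois t Γ) (fun y => C * H y) := by
  obtain ⟨C, hC, h⟩ := norm_bl_ex_le (d := d)
  refine ⟨C, hC, fun t => ⟨fun y => integrable_ex_mul (abs_nonneg _) (D.int y), ?_, D.Hi.const_mul C, ?_⟩⟩
  · refine Measurable.mul ?_ D.meas
    have : Continuous fun q : ℝ × Rd d => ex |t - q.1| q.2 := by unfold ex; fun_prop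
    exact this.measurable
  · filter_upwards [D.gr] with y hy k x
    refine (h P k _ (Γ y) _ (abs_nonneg _) (D.int y) (hy k) x).trans (le_of_eq ?_)
    ring

lemma lintegral_ofReal_lt_top {ν : Measure ℝ} {H : ℝ → ℝ} (h : Integrable H ν) :
    ∫⁻ y, ENNReal.ofReal (H y) ∂ν < ∞ :=
  (lintegral_mono fun y => Real.ofReal_le_enorm (H y)).trans_lt h.2

/-- If all monomial vectors pair integrably with the Taylor coefficients, then the low-frequency
parts grow polynomially with integrable constants. -/
lemma growth_of_mem {P : LPData d} {n : ℕ} {ν : Measure ℝ} {Γ : ℝ → Rd d → ℂ} {H : ℝ → ℝ}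
    (D : Dat P n ν Γ H)
    (h : ∀ x, mono (n + 1) x ∈ absInt ν (fun y => coef P (n + 1) (Γ y))
      (measurable_coef P (n + 1) D.meas)) :
    ∃ L : ℝ → ℝ, Integrable L ν ∧ (∀ᵐ y ∂ν, 0 ≤ L y ∧
      ∀ x, ‖part P (Set.Iio 0) (Γ y) x‖ ≤ L y * (1 + ‖x‖) ^ (n + 1)) := by
  obtain ⟨Λ, hΛm, hΛ, hg⟩ := exists_growth h
  obtain ⟨C, hC, hT⟩ := low_taylor P n
  refine ⟨fun y => (Λ y).toReal + C * H y,
    (integrable_toReal_of_lintegral_ne_top hΛm.aemeasurable hΛ.ne).add (D.Hi.const_mul C), ?_⟩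
  filter_upwards [D.gr, ae_lt_top hΛm hΛ.ne] with y hy hy'
  have h0 := hy.nonneg
  refine ⟨by positivity, fun x => ?_⟩
  have h1 := hT (Γ y) (H y) (D.int y) hy x
  have h2 : ‖∑ i, coef P (n + 1) (Γ y) i * mono (n + 1) x i‖ ≤ (Λ y).toReal * (1 + ‖x‖) ^ (n + 1) := by
    have := ENNReal.toReal_mono (by finiteness) (hg y x)
    rwa [toReal_enorm, ENNReal.toReal_mul, ENNReal.toReal_ofReal (by positivity)] at this
  have h3 : ‖x‖ ^ (n + 1) ≤ (1 + ‖x‖) ^ (n + 1) := by gcongr; linarith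
  calc _ ≤ ‖part P (Set.Iio 0) (Γ y) x - ∑ i, coef P (n + 1) (Γ y) i * mono (n + 1) x i‖
        + ‖∑ i, coef P (n + 1) (Γ y) i * mono (n + 1) x i‖ := by
          simpa using norm_add_le (part P (Set.Iio 0) (Γ y) x -
            ∑ i, coef P (n + 1) (Γ y) i * mono (n + 1) x i) (∑ i, coef P (n + 1) (Γ y) i * mono (n + 1) x i)
    _ ≤ C * (1 + ‖x‖) ^ (n + 1) * H y + (Λ y).toReal * (1 + ‖x‖) ^ (n + 1) := by
          refine add_le_add (h1.trans ?_) h2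
          gcongr
    _ = _ := by ring

lemma integrable_nb (φ : ContDiffBump (0 : Rd d)) {f : Rd d → ℂ} (hf : Continuous f) (x : Rd d) :
    Integrable fun z => nb φ z * f (x - z) := by
  refine Continuous.integrable_of_hasCompactSupport ((nb φ).continuous.mul (by fun_prop)) ?_
  exact HasCompactSupport.mul_right
    (φ.hasCompactSupport_normed.comp_left (g := fun r : ℝ => (r : ℂ)) (by simp))

lemma norm_cv_nb_le (φ : ContDiffBump (0 : Rd d)) {f : Rd d → ℂ} {x : Rd d} {M : ℝ} (hM0 : 0 ≤ M)
    (hM : ∀ z, ‖z‖ ≤ ‖x‖ + φ.rOut → ‖f z‖ ≤ M) : ‖cv (nb φ) f x‖ ≤ (∫ z, ‖nb φ z‖) * M := by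
  unfold cv
  rw [← integral_mul_const]
  refine norm_integral_le_of_norm_le ((nb φ).integrable.norm.mul_const _) (Eventually.of_forall fun z => ?_)
  rw [norm_mul]
  by_cases hz : φ.rOut ≤ ‖z‖
  · rw [nb_eq_zero φ hz]; simp
  · gcongr
    apply hM
    have := norm_sub_le x z
    linarith [not_le.1 hz]

/-- Locally bounded families have low-frequency parts of polynomial growth with integrable
constants. -/
lemma growth_of_locBdd (hd : 1 ≤ d) {P : LPData d} {n : ℕ} {ν : Measure ℝ} [IsFiniteMeasure ν]
    {Γ : ℝ → Rd d → ℂ} {H : ℝ → ℝ} (D : Dat P n ν Γ H)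
    (hloc : ∀ R : ℝ, ∃ M : ℝ, 0 ≤ M ∧ ∀ y x, ‖x‖ ≤ R → ‖IF (Γ y) x‖ ≤ M) :
    ∃ L : ℝ → ℝ, Integrable L ν ∧ (∀ᵐ y ∂ν, 0 ≤ L y ∧
      ∀ x, ‖part P (Set.Iio 0) (Γ y) x‖ ≤ L y * (1 + ‖x‖) ^ (n + 1)) := by
  apply growth_of_mem D
  intro x
  apply mono_mem_of_mollify
  intro φ
  rw [mem_absInt]
  obtain ⟨M, hM0, hM⟩ := hloc (‖x‖ + φ.rOut)
  obtain ⟨C, hC, hT⟩ := low_taylor P n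
  obtain ⟨N', C', hC', hH⟩ := high_bound P n
  set J := ∫ z, ‖nb φ z‖ with hJ
  have hi : Integrable (fun y => J * M + (C' * sn N' (nb φ) + J * (C * (‖x‖ + φ.rOut) ^ (n + 1))) * H y) ν :=
    (integrable_const _).add (D.Hi.const_mul _)
  refine lt_of_le_of_lt (lintegral_mono_ae ?_) (lintegral_ofReal_lt_top hi)
  filter_upwards [D.gr] with y hy
  have h0 := hy.nonneg
  rw [← ofReal_norm_eq_enorm]
  apply ENNReal.ofReal_le_ofReal
  set p : Rd d → ℂ := fun z => ∑ i, coef P (n + 1) (Γ y) i * mono (n + 1) z i with hp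
  have hpc : Continuous p := by
    have := continuous_mono (d := d) (n + 1)
    fun_prop
  have e1 : ∑ i, coef P (n + 1) (Γ y) i * cv (nb φ) (fun z => mono (n + 1) z i) x = cv (nb φ) p x := by
    unfold cv
    simp only [← integral_const_mul]
    rw [← integral_finset_sum _ fun i _ => (integrable_nb φ (continuous_mono (n + 1) i) x).const_mul _]
    congr 1; ext z
    rw [hp, Finset.mul_sum]
    exact Finset.sum_congr rfl fun i _ => by ring
  have c1 := continuous_IF (D.int y)
  have c2 := continuous_part P (Set.Ici 0) (D.int y)
  have c3 := continuous_part P (Set.Iio 0) (D.int y)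
  have e2 : cv (nb φ) p x = cv (nb φ) (IF (Γ y)) x - cv (nb φ) (part P (Set.Ici 0) (Γ y)) x
      - cv (nb φ) (fun z => part P (Set.Iio 0) (Γ y) z - p z) x := by
    have i12 : Integrable fun z => nb φ z * IF (Γ y) (x - z) - nb φ z * part P (Set.Ici 0) (Γ y) (x - z) :=
      (integrable_nb φ c1 x).sub (integrable_nb φ c2 x)
    have i3 : Integrable fun z => nb φ z * (fun z => part P (Set.Iio 0) (Γ y) z - p z) (x - z) :=
      integrable_nb φ (c3.sub hpc) x
    unfold cv
    rw [← integral_sub (integrable_nb φ c1 x) (integrable_nb φ c2 x), ← integral_sub i12 i3]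
    congr 1; ext z
    rw [← part_add_compl hd P (Set.Iio 0) (D.int y), compl_Iio_zero]
    ring
  have hJ0 : 0 ≤ J := integral_nonneg fun z => norm_nonneg _
  have hr := φ.rOut_pos
  have b3 : ‖cv (nb φ) (fun z => part P (Set.Iio 0) (Γ y) z - p z) x‖
      ≤ J * (C * (‖x‖ + φ.rOut) ^ (n + 1) * H y) := by
    refine norm_cv_nb_le φ (by positivity) fun z hz => (hT (Γ y) (H y) (D.int y) hy z).trans ?_
    gcongr
  rw [e1, e2]
  have b1 := norm_cv_nb_le φ (f := IF (Γ y)) hM0 (hM y)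
  have b2 := hH (Set.Ici 0) (Γ y) (H y) le_rfl (D.int y) hy (nb φ) x
  refine (norm_sub_le _ _).trans ((add_le_add ((norm_sub_le _ _).trans (add_le_add b1 b2)) b3).trans
    (le_of_eq ?_))
  ring

/-- Countable subadditivity for the partial Littlewood–Paley sums. -/
lemma enorm_part_le_tsum (P : LPData d) (S : Set ℤ) {Γ : Rd d → ℂ} (hΓ : Integrable Γ) (x : Rd d)
    (b : ℤ → ℝ≥0∞) (hb : ∀ k ∈ S, ‖bl P k Γ x‖ₑ ≤ b k) : ‖part P S Γ x‖ₑ ≤ ∑' k, b k := by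
  by_cases ht : ∑' k, b k = ∞
  · simp [ht]
  have hf := ENNReal.ne_top_of_tsum_ne_top ht
  have h := norm_part_le_tsum P S hΓ x (b := fun k => (b k).toReal) (ENNReal.summable_toReal ht)
    (fun k hk => by
      have := ENNReal.toReal_mono (hf k) (hb k hk)
      rwa [toReal_enorm] at this) (fun k => ENNReal.toReal_nonneg)
  rw [← ENNReal.tsum_toReal_eq hf] at h
  rw [← ofReal_norm_eq_enorm]
  exact ENNReal.ofReal_le_of_le_toReal h

/-! ### Exchanging a dyadic block with the time integral -/

/-- High-frequency parts of the Poisson extensions are integrable in time, locally uniformly in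
space. -/
lemma high_loc (hd : 1 ≤ d) {P : LPData d} {n : ℕ} {ν : Measure ℝ} (hν : ν ≤ volume)
    {Γ : ℝ → Rd d → ℂ} {H : ℝ → ℝ} (D : Dat P n ν Γ H)
    (hloc : ∀ R : ℝ, ∃ M : ℝ, 0 ≤ M ∧ ∀ y x, ‖x‖ ≤ R → ‖IF (Γ y) x‖ ≤ M)
    {L : ℝ → ℝ} (hL : Integrable L ν) (hLg : ∀ᵐ y ∂ν, 0 ≤ L y ∧
      ∀ x, ‖part P (Set.Iio 0) (Γ y) x‖ ≤ L y * (1 + ‖x‖) ^ (n + 1)) (t R : ℝ) :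
    ∃ c : ℝ≥0∞, c < ∞ ∧ ∀ x, ‖x‖ ≤ R → ∫⁻ y, ‖part P (Set.Ici 0) (pois t Γ y) x‖ₑ ∂ν ≤ c := by
  obtain ⟨M, hM0, hM⟩ := hloc (R + 2)
  obtain ⟨C, hC, hB⟩ := bl_local hd P n (n + 1)
  set A : ℝ≥0∞ := ∫⁻ y, ENNReal.ofReal (C * (L y * (1 + R) ^ (n + 1) + H y)) ∂ν with hA
  have hAt : A < ∞ := lintegral_ofReal_lt_top (((hL.mul_const _).add D.Hi).const_mul C)
  refine ⟨∑' k : ℤ, ENNReal.ofReal ((1 / 2) ^ k.natAbs) * (ENNReal.ofReal (C * M * Real.pi) + A), ?_,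
    fun x hx => ?_⟩
  · rw [ENNReal.tsum_mul_right, ← ENNReal.ofReal_tsum_of_nonneg (fun k => by positivity)
      summable_half_natAbs]
    exact ENNReal.mul_lt_top ENNReal.ofReal_lt_top (by finiteness)
  have hR : 0 ≤ R := (norm_nonneg x).trans hx
  obtain ⟨C', -, hDG⟩ := D.pois
  have DG := hDG t
  have hm : ∀ k : ℤ, Measurable fun y => if 0 ≤ k then ‖bl P k (pois t Γ y) x‖ₑ else 0 := by
    intro k
    split_ifs
    · exact ((measurable_IF (measurable_mulΓ DG.meas (continuous_Phi P k).measurable)).comp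
        (measurable_id.prodMk measurable_const)).enorm
    · exact measurable_const
  calc _ ≤ ∫⁻ y, ∑' k : ℤ, (if 0 ≤ k then ‖bl P k (pois t Γ y) x‖ₑ else 0) ∂ν :=
        lintegral_mono fun y => enorm_part_le_tsum P _ (DG.int y) x _ fun k hk => by
          rw [if_pos (Set.mem_Ici.1 hk)]
    _ = ∑' k : ℤ, ∫⁻ y, (if 0 ≤ k then ‖bl P k (pois t Γ y) x‖ₑ else 0) ∂ν :=
        lintegral_tsum fun k => (hm k).aemeasurable
    _ ≤ _ := by
        refine ENNReal.tsum_le_tsum fun k => ?_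
        by_cases hk : 0 ≤ k
        swap
        · simp [hk]
        simp only [if_pos hk]
        lift k to ℕ using hk
        rw [Int.natAbs_natCast]
        have hdm : Measurable fun y => ENNReal.ofReal (C * M) *
            ENNReal.ofReal (((1 + (2:ℝ) ^ k * |t - y|) ^ 2)⁻¹) := by fun_prop
        calc _ ≤ ∫⁻ y, ENNReal.ofReal (C * M) * ENNReal.ofReal (((1 + (2:ℝ) ^ k * |t - y|) ^ 2)⁻¹)
              + ENNReal.ofReal ((1 / 2) ^ k) * ENNReal.ofReal (C * (L y * (1 + R) ^ (n + 1) + H y)) ∂ν := by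
              refine lintegral_mono_ae ?_
              filter_upwards [D.gr, hLg] with y hy hy'
              have h0 := hy.nonneg
              rw [← ENNReal.ofReal_mul (by positivity), ← ENNReal.ofReal_mul (by positivity),
                ← ENNReal.ofReal_add (by positivity) (by have := hy'.1; positivity),
                ← ofReal_norm_eq_enorm]
              apply ENNReal.ofReal_le_ofReal
              refine (hB (Γ y) (H y) (L y) (D.int y) hy hy'.1 hy'.2 k |t - y| (abs_nonneg _) x M
                (fun z hz => hM y z ?_)).trans ?_
              · have := norm_add_le (z - x) x
                rw [sub_add_cancel] at this
                linarith
              · have h1 : L y * (1 + ‖x‖) ^ (n + 1) ≤ L y * (1 + R) ^ (n + 1) := by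
                  have := hy'.1
                  gcongr
                have h2 : (0:ℝ) ≤ C * (1 / 2) ^ k := by positivity
                nlinarith [mul_le_mul_of_nonneg_left h1 h2]
          _ = ENNReal.ofReal (C * M) * ∫⁻ y, ENNReal.ofReal (((1 + (2:ℝ) ^ k * |t - y|) ^ 2)⁻¹) ∂ν
              + ENNReal.ofReal ((1 / 2) ^ k) * A := by
              rw [lintegral_add_left hdm, lintegral_const_mul' _ _ ENNReal.ofReal_ne_top,
                lintegral_const_mul' _ _ ENNReal.ofReal_ne_top]
          _ ≤ ENNReal.ofReal (C * M) * ENNReal.ofReal (Real.pi * ((2:ℝ) ^ k)⁻¹)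
              + ENNReal.ofReal ((1 / 2) ^ k) * A := by
              gcongr
              exact (lintegral_mono' hν le_rfl).trans (lintegral_decay (by positivity) t)
          _ = _ := by
              rw [mul_add, ← ENNReal.ofReal_mul (by positivity), ← ENNReal.ofReal_mul (by positivity)]
              congr 2
              rw [one_div, inv_pow]; ring

/-- A Schwartz function cut off at radius `c`. -/
def cut (c : ℝ) (hc : 1 ≤ c) (θ : 𝓢(Rd d, ℂ)) : 𝓢(Rd d, ℂ) :=
  scl c⁻¹ (by positivity) (near (scl c (by positivity) θ))

/-- The part of a Schwartz function removed by `cut`. -/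
def tail (c : ℝ) (hc : 1 ≤ c) (θ : 𝓢(Rd d, ℂ)) : 𝓢(Rd d, ℂ) :=
  scl c⁻¹ (by positivity) (far (scl c (by positivity) θ))

lemma cut_apply (c : ℝ) (hc : 1 ≤ c) (θ : 𝓢(Rd d, ℂ)) (z : Rd d) :
    cut c hc θ z = chi d (c⁻¹ • z) * θ z := by
  have : c ≠ 0 := by positivity
  rw [cut, scl_apply, near_apply, scl_apply, smul_inv_smul₀ this]

lemma cut_add_tail (c : ℝ) (hc : 1 ≤ c) (θ : 𝓢(Rd d, ℂ)) : cut c hc θ + tail c hc θ = θ := by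
  have : c ≠ 0 := by positivity
  ext z
  rw [cut, tail, SchwartzMap.add_apply, scl_apply, scl_apply, ← SchwartzMap.add_apply, near_add_far,
    scl_apply, smul_inv_smul₀ this]

lemma sn_tail (N : ℕ) (θ : 𝓢(Rd d, ℂ)) : ∃ C : ℝ, 0 ≤ C ∧ ∀ (c : ℝ) (hc : 1 ≤ c),
    sn N (tail c hc θ) ≤ C * c⁻¹ := by
  obtain ⟨C, hC, h⟩ := sn_far_scl (d := d) N (N + 1)
  have := sn_nonneg (N + N + (N + 1)) θ
  refine ⟨C * sn (N + N + (N + 1)) θ, by positivity, fun c hc => ?_⟩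
  refine (sn_scl_inv hc N _).trans ((mul_le_mul_of_nonneg_left (h θ c hc) (by positivity)).trans
    (le_of_eq ?_))
  have : c ≠ 0 := by positivity
  rw [inv_pow, pow_succ]
  field_simp

lemma measurable_kernel_mul {g : ℝ → Rd d → ℂ} (hg : Measurable fun q : ℝ × Rd d => g q.1 q.2)
    (θ : 𝓢(Rd d, ℂ)) (x : Rd d) :
    Measurable (Function.uncurry fun (z : Rd d) (y : ℝ) => θ z * g y (x - z)) := by
  have h1 : Measurable fun q : Rd d × ℝ => (q.2, x - q.1) := by fun_prop
  have h2 : Measurable fun q : Rd d × ℝ => g q.2 (x - q.1) := hg.comp h1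
  exact (θ.continuous.measurable.comp measurable_fst).mul h2

lemma measurable_cv {g : ℝ → Rd d → ℂ} (hg : Measurable fun q : ℝ × Rd d => g q.1 q.2)
    (θ : 𝓢(Rd d, ℂ)) (x : Rd d) : Measurable fun y => cv θ (g y) x :=
  (measurable_kernel_mul hg θ x).stronglyMeasurable.integral_prod_left.measurable

set_option maxHeartbeats 1000000 in
/-- A convolution of a time average is controlled by the average of the convolutions, without
assuming absolute convergence of the double integral. -/
lemma cv_avg_le (hd : 1 ≤ d) {P : LPData d} {n : ℕ} {ν : Measure ℝ} [IsFiniteMeasure ν]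
    {G : ℝ → Rd d → ℂ} {H : ℝ → ℝ} (D : Dat P n ν G H)
    {L : ℝ → ℝ} (hL : Integrable L ν) (hLg : ∀ᵐ y ∂ν, 0 ≤ L y ∧
      ∀ x, ‖part P (Set.Iio 0) (G y) x‖ ≤ L y * (1 + ‖x‖) ^ (n + 1))
    (hhi : ∀ R : ℝ, ∃ c : ℝ≥0∞, c < ∞ ∧ ∀ x, ‖x‖ ≤ R → ∫⁻ y, ‖part P (Set.Ici 0) (G y) x‖ₑ ∂ν ≤ c)
    (θ : 𝓢(Rd d, ℂ)) (x : Rd d) :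
    ‖cv θ (fun z => ∫ y, IF (G y) z ∂ν) x‖ₑ ≤ ∫⁻ y, ‖cv θ (IF (G y)) x‖ₑ ∂ν := by
  set u : Rd d → ℂ := fun z => ∫ y, IF (G y) z ∂ν with hu
  by_cases hintg : Integrable fun z => θ z * u (x - z)
  swap
  · rw [cv, integral_undef hintg]; simp
  obtain ⟨N2, C2, hC2, h2⟩ := cv_growth (d := d) (n + 1)
  obtain ⟨N3, C3, hC3, h3⟩ := high_bound P n
  obtain ⟨C4, hC4, h4⟩ := sn_tail N2 θ
  obtain ⟨C5, hC5, h5⟩ := sn_tail N3 θ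
  set Q : ℝ → ℝ := fun y => C2 * C4 * (L y * (1 + ‖x‖) ^ (n + 1)) + C3 * C5 * H y with hQ
  have hQi : Integrable Q ν := ((hL.mul_const _).const_mul _).add (D.Hi.const_mul _)
  have hc1 : ∀ m : ℕ, (1:ℝ) ≤ (m:ℝ) + 1 := fun m => by simp
  have mIF := measurable_IF D.meas
  have key : ∀ m : ℕ, ‖cv (cut _ (hc1 m) θ) u x‖ₑ ≤ (∫⁻ y, ‖cv θ (IF (G y)) x‖ₑ ∂ν)
      + ENNReal.ofReal (((m:ℝ) + 1)⁻¹) * ∫⁻ y, ENNReal.ofReal (Q y) ∂ν := by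
    intro m
    set ψ := cut _ (hc1 m) θ with hψ
    set R := ‖x‖ + 2 * ((m:ℝ) + 1) with hR
    obtain ⟨c, hc, hcb⟩ := hhi R
    have hR0 : 0 ≤ R := by positivity
    have hIF : ∀ w, ‖w‖ ≤ R → ∫⁻ y, ‖IF (G y) w‖ₑ ∂ν ≤
        (∫⁻ y, ENNReal.ofReal (L y * (1 + R) ^ (n + 1)) ∂ν) + c := by
      intro w hw
      have hm1 : Measurable fun y => ‖part P (Set.Ici 0) (G y) w‖ₑ :=
        ((measurable_IF (measurable_mulΓ D.meas (measurable_rho P _))).comp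
          (measurable_id.prodMk measurable_const)).enorm
      refine le_trans ?_ (add_le_add_right (hcb w hw) _)
      rw [← lintegral_add_right _ hm1]
      refine lintegral_mono_ae ?_
      filter_upwards [hLg] with y hy
      rw [← part_add_compl hd P (Set.Iio 0) (D.int y), compl_Iio_zero]
      refine (enorm_add_le _ _).trans (add_le_add_left ?_ _)
      rw [← ofReal_norm_eq_enorm]
      apply ENNReal.ofReal_le_ofReal
      refine (hy.2 w).trans ?_
      have := hy.1
      gcongr
    set c' := (∫⁻ y, ENNReal.ofReal (L y * (1 + R) ^ (n + 1)) ∂ν) + c with hc'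
    have hc't : c' < ∞ := ENNReal.add_lt_top.2 ⟨lintegral_ofReal_lt_top (hL.mul_const _), hc⟩
    have hfub : Integrable (Function.uncurry fun (z : Rd d) (y : ℝ) => ψ z * IF (G y) (x - z))
        (volume.prod ν) := by
      have hmm : Measurable (Function.uncurry fun (z : Rd d) (y : ℝ) => ψ z * IF (G y) (x - z)) :=
        measurable_kernel_mul (g := fun y => IF (G y)) mIF ψ x
      refine ⟨hmm.aestronglyMeasurable, ?_⟩
      rw [HasFiniteIntegral, lintegral_prod _ hmm.enorm.aemeasurable]
      refine lt_of_le_of_lt (b := ∫⁻ z, ‖ψ z‖ₑ * c') (lintegral_mono fun z => ?_) ?_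
      · simp only [Function.uncurry_apply_pair, enorm_mul]
        rw [lintegral_const_mul' _ _ enorm_ne_top]
        by_cases hz : 2 * ((m:ℝ) + 1) ≤ ‖z‖
        · have : ψ z = 0 := by
            rw [hψ, cut_apply, chi_eq_zero, zero_mul]
            rw [norm_smul, norm_inv, Real.norm_of_nonneg (by positivity), ← div_eq_inv_mul,
              le_div_iff₀ (by positivity)]
            exact hz
          simp [this]
        · have h9 : ‖x - z‖ ≤ R := by
            have := norm_sub_le x z
            linarith [not_le.1 hz]
          exact mul_le_mul_right (hIF (x - z) h9) _
      · rw [lintegral_mul_const' _ _ hc't.ne]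
        exact ENNReal.mul_lt_top ψ.integrable.2 hc't
    have e1 : cv ψ u x = ∫ y, cv ψ (IF (G y)) x ∂ν := by
      unfold cv
      rw [← integral_integral_swap hfub]
      congr 1; ext z
      rw [hu, integral_const_mul]
    rw [e1]
    refine (enorm_integral_le_lintegral_enorm _).trans ?_
    have hmθ : Measurable fun y => ‖cv θ (IF (G y)) x‖ₑ :=
      (measurable_cv (g := fun y => IF (G y)) mIF θ x).enorm
    rw [← lintegral_const_mul' _ _ ENNReal.ofReal_ne_top, ← lintegral_add_left hmθ]
    refine lintegral_mono_ae ?_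
    filter_upwards [D.gr, hLg] with y hy hy'
    have h0 := hy.nonneg
    have hy0 := hy'.1
    have hsum : cv ψ (IF (G y)) x = cv θ (IF (G y)) x - cv (tail _ (hc1 m) θ) (IF (G y)) x := by
      rw [eq_sub_iff_add_eq, ← cv_add_kernel _ _ (continuous_IF (D.int y)) (norm_IF_le _), cut_add_tail]
    rw [hsum]
    refine (enorm_sub_le).trans (add_le_add_right ?_ _)
    rw [← ENNReal.ofReal_mul (by positivity), ← ofReal_norm_eq_enorm]
    apply ENNReal.ofReal_le_ofReal
    rw [cv_split hd P (D.int y)]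
    have b2 := h2 (tail _ (hc1 m) θ) _ (L y) hy0 hy'.2 x
    have b3 := h3 (Set.Ici 0) (G y) (H y) le_rfl (D.int y) hy (tail _ (hc1 m) θ) x
    calc _ ≤ C2 * (C4 * ((m:ℝ) + 1)⁻¹) * (L y * (1 + ‖x‖) ^ (n + 1))
          + C3 * (C5 * ((m:ℝ) + 1)⁻¹) * H y := by
          refine (norm_add_le _ _).trans (add_le_add (b2.trans ?_) (b3.trans ?_))
          · gcongr; exact h4 _ _
          · gcongr; exact h5 _ _
      _ = _ := by rw [hQ]; ring
  have lim1 : Tendsto (fun m : ℕ => cv (cut _ (hc1 m) θ) u x) atTop (𝓝 (cv θ u x)) := by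
    unfold cv
    refine tendsto_integral_of_dominated_convergence (fun z => ‖θ z * u (x - z)‖) (fun m => ?_)
      hintg.norm (fun m => Eventually.of_forall fun z => ?_) (Eventually.of_forall fun z => ?_)
    · have : (fun z => cut _ (hc1 m) θ z * u (x - z)) =
          fun z => chi d ((((m:ℝ) + 1))⁻¹ • z) * (θ z * u (x - z)) := by
        ext z; rw [cut_apply]; ring
      rw [this]
      exact (((chi d).continuous.comp (by fun_prop)).aestronglyMeasurable).mul hintg.1
    · rw [cut_apply, mul_assoc, norm_mul]
      exact mul_le_of_le_one_left (norm_nonneg _) (norm_chi_le _)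
    · refine tendsto_const_nhds.congr' ?_
      filter_upwards [eventually_ge_atTop ⌈‖z‖⌉₊] with m hm
      rw [cut_apply, chi_eq_one, one_mul]
      rw [norm_smul, norm_inv, Real.norm_of_nonneg (by positivity), ← div_eq_inv_mul,
        div_le_one (by positivity)]
      have := Nat.ceil_le.1 hm
      linarith
  have lim2 : Tendsto (fun m : ℕ => (∫⁻ y, ‖cv θ (IF (G y)) x‖ₑ ∂ν)
      + ENNReal.ofReal (((m:ℝ) + 1)⁻¹) * ∫⁻ y, ENNReal.ofReal (Q y) ∂ν) atTop
      (𝓝 (∫⁻ y, ‖cv θ (IF (G y)) x‖ₑ ∂ν)) := by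
    have h6 : Tendsto (fun m : ℕ => ENNReal.ofReal (((m:ℝ) + 1)⁻¹)) atTop (𝓝 0) := by
      have := ENNReal.tendsto_ofReal (tendsto_one_div_add_atTop_nhds_zero_nat (𝕜 := ℝ))
      simpa using this
    have h7 := ENNReal.Tendsto.mul_const (b := ∫⁻ y, ENNReal.ofReal (Q y) ∂ν) h6
      (Or.inr (lintegral_ofReal_lt_top hQi).ne)
    have h8 := (tendsto_const_nhds (x := ∫⁻ y, ‖cv θ (IF (G y)) x‖ₑ ∂ν)).add h7
    simpa using h8
  exact le_of_tendsto_of_tendsto' lim1.enorm lim2 key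

/-- Pointwise bound of a dyadic block of the Duhamel integral. -/
lemma LP_duhamel_le (hd : 1 ≤ d) {P : LPData d} {n : ℕ} {ν : Measure ℝ} [IsFiniteMeasure ν]
    (hν : ν ≤ volume) {Γ : ℝ → Rd d → ℂ} {H : ℝ → ℝ} (D : Dat P n ν Γ H)
    (hloc : ∀ R : ℝ, ∃ M : ℝ, 0 ≤ M ∧ ∀ y x, ‖x‖ ≤ R → ‖IF (Γ y) x‖ ≤ M)
    (t : ℝ) (j : ℤ) (x : Rd d) :
    ‖LP P j (fun z => ∫ y, IF (pois t Γ y) z ∂ν) x‖ₑ ≤ ∫⁻ y, ‖bl P j (pois t Γ y) x‖ₑ ∂ν := by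
  obtain ⟨L, hL, hLg⟩ := growth_of_locBdd hd D hloc
  have hhi := high_loc hd hν D hloc hL hLg t
  obtain ⟨C, hC, hDG⟩ := D.pois
  have DG := hDG t
  set G := pois t Γ with hG
  set E : Set (Rd d) := {z | ∫⁻ y, ‖part P (Set.Iio 0) (G y) z‖ₑ ∂ν < ∞} with hE
  by_cases hE0 : volume E = 0
  · -- off the null set `E` the time integral diverges absolutely, so its value is `0`
    have hz : ∀ z ∉ E, ∫ y, IF (G y) z ∂ν = 0 := by
      intro z hz
      apply integral_undef
      intro hi
      apply hz
      obtain ⟨c, hc, hcb⟩ := hhi ‖z‖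
      have : ∀ y, ‖part P (Set.Iio 0) (G y) z‖ₑ ≤ ‖IF (G y) z‖ₑ + ‖part P (Set.Ici 0) (G y) z‖ₑ := by
        intro y
        rw [← part_add_compl hd P (Set.Iio 0) (DG.int y), compl_Iio_zero]
        simpa using enorm_sub_le (a := part P (Set.Iio 0) (G y) z + part P (Set.Ici 0) (G y) z)
          (b := part P (Set.Ici 0) (G y) z)
      refine (lintegral_mono this).trans_lt ?_
      rw [lintegral_add_left' hi.1.enorm]
      exact ENNReal.add_lt_top.2 ⟨hi.2, (hcb z le_rfl).trans_lt hc⟩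
    have : LP P j (fun z => ∫ y, IF (G y) z ∂ν) x = 0 := by
      rw [LP_eq, cv]
      apply integral_eq_zero_of_ae
      have h1 : ∀ᵐ z : Rd d, z ∉ E := measure_eq_zero_iff_ae_notMem.1 hE0
      filter_upwards [(quasiMeasurePreserving_sub_left volume x).ae h1] with z hz'
      simp [hz _ hz']
    simp [this]
  · obtain ⟨C1, hC1, hT⟩ := low_taylor P n
    have hmem : ∀ z, mono (n + 1) z ∈ absInt ν (fun y => coef P (n + 1) (G y))
        (measurable_coef P (n + 1) DG.meas) := by
      refine mono_mem_of_posMeas _ hE0 fun z hz => ?_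
      rw [mem_absInt]
      have hQ : Integrable (fun y => C1 * ‖z‖ ^ (n + 1) * (C * H y)) ν := DG.Hi.const_mul _
      have hm1 : Measurable fun y => ‖part P (Set.Iio 0) (G y) z‖ₑ :=
        ((measurable_IF (measurable_mulΓ DG.meas (measurable_rho P _))).comp
          (measurable_id.prodMk measurable_const)).enorm
      refine lt_of_le_of_lt (lintegral_mono_ae (g := fun y => ‖part P (Set.Iio 0) (G y) z‖ₑ +
        ENNReal.ofReal (C1 * ‖z‖ ^ (n + 1) * (C * H y))) ?_) ?_
      · filter_upwards [DG.gr] with y hy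
        have h1 := hT (G y) _ (DG.int y) hy z
        have h2 := enorm_sub_le (a := part P (Set.Iio 0) (G y) z)
          (b := part P (Set.Iio 0) (G y) z - ∑ i, coef P (n + 1) (G y) i * mono (n + 1) z i)
        rw [sub_sub_cancel] at h2
        refine h2.trans (add_le_add_right ?_ _)
        rw [← ofReal_norm_eq_enorm]
        exact ENNReal.ofReal_le_ofReal h1
      · rw [lintegral_add_left hm1]
        exact ENNReal.add_lt_top.2 ⟨hz, lintegral_ofReal_lt_top hQ⟩
    obtain ⟨L', hL', hLg'⟩ := growth_of_mem DG hmem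
    have := cv_avg_le hd DG hL' hLg' hhi (dil j P.φ) x
    rw [LP_eq]
    refine this.trans (le_of_eq (lintegral_congr fun y => ?_))
    rw [← LP_eq, LP_IF P j (DG.int y)]

/-! ### Time averages, Bernstein's inequality and the data of the source -/

lemma enorm_le_eLpNorm_top {f : Rd d → ℂ} (hf : Continuous f) (x : Rd d) :
    ‖f x‖ₑ ≤ eLpNorm f ∞ volume := by
  rw [eLpNorm_exponent_top]
  set S := eLpNormEssSup f volume with hS
  have ho : IsOpen {z | S < ‖f z‖ₑ} := isOpen_lt continuous_const hf.enorm
  have h0 : volume {z | S < ‖f z‖ₑ} = 0 := by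
    have h := ae_le_eLpNormEssSup (f := f) (μ := volume)
    rw [ae_iff] at h
    simpa using h
  have := (ho.measure_eq_zero_iff volume).1 h0
  by_contra hx
  exact (Set.ext_iff.1 this x).1 (not_le.1 hx)

lemma eLpNorm_top_le {f : Rd d → ℂ} {c : ℝ≥0∞} (h : ∀ x, ‖f x‖ₑ ≤ c) : eLpNorm f ∞ volume ≤ c := by
  rw [eLpNorm_exponent_top]
  exact essSup_le_of_ae_le _ (Eventually.of_forall h)

lemma measurable_eLpNorm_slice {g : ℝ → Rd d → ℂ} (hg : Measurable fun q : ℝ × Rd d => g q.1 q.2)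
    (hc : ∀ y, Continuous (g y)) {p : ℝ≥0∞} (hp : 1 ≤ p) :
    Measurable fun y => eLpNorm (g y) p volume := by
  have hp0 : p ≠ 0 := (zero_lt_one.trans_le hp).ne'
  by_cases hpt : p = ∞
  · subst hpt
    have : ∀ y, eLpNorm (g y) ∞ volume = ⨆ n, ‖g y (TopologicalSpace.denseSeq (Rd d) n)‖ₑ := by
      intro y
      refine le_antisymm (eLpNorm_top_le fun x => ?_) (iSup_le fun n => enorm_le_eLpNorm_top (hc y) _)
      have hcl : IsClosed {x | ‖g y x‖ₑ ≤ ⨆ n, ‖g y (TopologicalSpace.denseSeq (Rd d) n)‖ₑ} :=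
        isClosed_le (hc y).enorm continuous_const
      have hsub : Set.range (TopologicalSpace.denseSeq (Rd d)) ⊆
          {x | ‖g y x‖ₑ ≤ ⨆ n, ‖g y (TopologicalSpace.denseSeq (Rd d) n)‖ₑ} := by
        rintro _ ⟨n, rfl⟩
        exact le_iSup (fun n => ‖g y (TopologicalSpace.denseSeq (Rd d) n)‖ₑ) n
      exact hcl.closure_subset_iff.2 hsub (TopologicalSpace.denseRange_denseSeq (Rd d) x)
    simp only [this]
    exact .iSup fun n => (hg.comp (measurable_id.prodMk measurable_const)).enorm
  · simp only [eLpNorm_eq_lintegral_rpow_enorm_toReal hp0 hpt]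
    exact ((hg.enorm.pow_const _).lintegral_prod_right').pow_const _

/-- Minkowski's integral inequality for functions dominated by a time average. -/
lemma eLpNorm_le_avg {ν : Measure ℝ} [IsFiniteMeasure ν] {f : Rd d → ℂ} {g : ℝ → Rd d → ℂ}
    (hg : Measurable fun q : ℝ × Rd d => g q.1 q.2) (hc : ∀ y, Continuous (g y))
    {p : ℝ≥0∞} (hp : 1 ≤ p) (h : ∀ x, ‖f x‖ₑ ≤ ∫⁻ y, ‖g y x‖ₑ ∂ν) :
    eLpNorm f p volume ≤ ∫⁻ y, eLpNorm (g y) p volume ∂ν := by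
  have hp0 : p ≠ 0 := (zero_lt_one.trans_le hp).ne'
  by_cases hpt : p = ∞
  · subst hpt
    exact eLpNorm_top_le fun x => (h x).trans (lintegral_mono fun y => enorm_le_eLpNorm_top (hc y) x)
  · simp only [eLpNorm_eq_lintegral_rpow_enorm_toReal hp0 hpt]
    have hp1 : 1 ≤ p.toReal := by
      rw [← ENNReal.toReal_one]; exact ENNReal.toReal_mono hpt hp
    refine le_trans ?_ (minkowski (h := fun y x => ‖g y x‖ₑ) hg.enorm hp1)
    gcongr with x
    exact h x

/-- Bernstein's inequality for a dyadic block. -/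
lemma bernstein : ∃ c : ℝ, 0 ≤ c ∧ ∀ (P : LPData d) (k : ℤ) (Γ : Rd d → ℂ) (p : ℝ≥0∞), Integrable Γ →
    1 ≤ p → ∀ x, ‖bl P k Γ x‖ₑ ≤ ENNReal.ofReal (c * 2 ^ (d * k.natAbs)) * eLpNorm (bl P k Γ) p volume := by
  obtain ⟨B, hB⟩ := (kap0 (d := d) 0).decay 0 0
  simp only [pow_zero, one_mul, norm_iteratedFDeriv_zero] at hB
  have hB0 := hB.1
  set J := ∫ z, ‖kap0 (d := d) 0 z‖ with hJ
  have hJ0 : 0 ≤ J := integral_nonneg fun z => norm_nonneg _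
  refine ⟨(1 + J) * (1 + B), by positivity, fun P k Γ p hΓ hp x => ?_⟩
  have e : bl P k Γ x = cv (dil k (kap0 0)) (bl P k Γ) x := by
    have := bl_ex P k 0 hΓ x
    rw [mul_zero] at this
    rw [← this]
    congr 1; ext η; simp [ex]
  have hb : ∀ z, ‖dil k (kap0 (d := d) 0) z‖ ≤ 2 ^ (d * k.natAbs) * B := by
    intro z
    rw [dil_apply, norm_mul, norm_real, Real.norm_of_nonneg (by positivity)]
    gcongr
    · rw [← zpow_natCast (2:ℝ)]
      apply zpow_le_zpow_right₀ (by norm_num)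
      push_cast
      gcongr
      exact le_abs_self k
    · exact hB.2 _
  have h := enorm_cv_le_eLpNorm (dil k (kap0 (d := d) 0)) (continuous_bl P k hΓ) hp hb x
  rw [← e, integral_norm_dil] at h
  refine h.trans ?_
  gcongr
  rw [← ENNReal.ofReal_one, ← ENNReal.ofReal_add (by norm_num) hJ0,
    ← ENNReal.ofReal_add (by norm_num) (by positivity), ← ENNReal.ofReal_mul (by positivity)]
  apply ENNReal.ofReal_le_ofReal
  rw [mul_assoc]
  gcongr
  have : (1:ℝ) ≤ 2 ^ (d * k.natAbs) := one_le_pow₀ (by norm_num)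
  nlinarith

lemma fourier_eq_IF (f : Rd d → ℂ) (η : Rd d) : 𝓕 f η = IF f (-η) := by
  rw [IF_eq, Real.fourierInv_eq_fourier_neg, neg_neg]

/-- The frequency-side data of a compactly supported slice-Schwartz function. -/
lemma data_of_slice {F : ℝ → Rd d → ℂ} (hF : SliceSchwartz F) {K : Set ℝ} (hK : IsCompact K)
    (hK0 : K ⊆ Set.Ioi 0) (hFK : ∀ t ∉ K, F t = 0) :
    (∀ y, Integrable (𝓕 (F y))) ∧ (∀ y, IF (𝓕 (F y)) = F y) ∧
    Measurable (Function.uncurry fun y => 𝓕 (F y)) ∧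
    ∀ R : ℝ, ∃ M : ℝ, 0 ≤ M ∧ ∀ y x, ‖x‖ ≤ R → ‖F y x‖ ≤ M := by
  have hg : ∀ y, ∃ g : 𝓢(Rd d, ℂ), F y = g := by
    intro y
    by_cases hy : y ∈ K
    · exact hF.2 y (hK0 hy)
    · exact ⟨0, by rw [hFK y hy]; rfl⟩
  choose g hg using hg
  have hcont : ContinuousOn (Function.uncurry F) (K ×ˢ Set.univ) := by
    have := hF.1.comp (g := fun z : Rd d × ℝ => F z.2 z.1) (f := Prod.swap) (s := K ×ˢ Set.univ)
      continuous_swap.continuousOn (fun q hq => ⟨trivial, hK0 hq.1⟩)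
    exact this
  have hmF : Measurable (Function.uncurry F) := by
    classical
    have := ContinuousOn.measurable_piecewise (g := fun _ => (0:ℂ)) hcont continuousOn_const
      (hK.measurableSet.prod MeasurableSet.univ)
    convert this using 1
    ext q
    by_cases hq : q ∈ K ×ˢ (Set.univ : Set (Rd d))
    · rw [Set.piecewise_eq_of_mem _ _ _ hq]
    · rw [Set.piecewise_eq_of_notMem _ _ _ hq]
      have : q.1 ∉ K := fun h => hq ⟨h, trivial⟩
      simp [Function.uncurry, hFK _ this]
  refine ⟨fun y => ?_, fun y => ?_, ?_, fun R => ?_⟩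
  · rw [hg y, ← SchwartzMap.fourier_coe]; exact (𝓕 (g y)).integrable
  · ext x
    rw [IF_eq, hg y, ← SchwartzMap.fourier_coe, ← SchwartzMap.fourierInv_coe,
      FourierTransform.fourierInv_fourier_eq]
  · have h1 : Measurable fun q : ℝ × Rd d => (q.1, -q.2) := by fun_prop
    have := (measurable_IF hmF).comp h1
    convert this using 1
    ext q
    exact fourier_eq_IF _ _
  · obtain ⟨M, hM⟩ := (hK.prod (isCompact_closedBall (0 : Rd d) R)).exists_bound_of_continuousOn
      (hcont.mono (Set.prod_mono le_rfl (Set.subset_univ _)))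
    refine ⟨max M 0, le_max_right _ _, fun y x hx => ?_⟩
    by_cases hy : y ∈ K
    · exact (hM (y, x) ⟨hy, by simpa using hx⟩).trans (le_max_left _ _)
    · simp [hFK y hy]

/-- The Duhamel integrand in terms of the normalized inverse Fourier integral. -/
lemma integrand_eq (f : Rd d → ℂ) (τ : ℝ) (x : Rd d) :
    (((2 * Real.pi) ^ d : ℝ) : ℂ)⁻¹ * ∫ ξ : Rd d, cexp (I * ((⟪x, ξ⟫ : ℝ) : ℂ)) *
      cexp (-((τ * ‖ξ‖ : ℝ) : ℂ)) * FT f ξ = IF (fun η => ex τ η * 𝓕 f η) x := by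
  have h := Measure.integral_comp_smul (volume : Measure (Rd d)) (fun ξ : Rd d =>
    cexp (I * ((⟪x, ξ⟫ : ℝ) : ℂ)) * cexp (-((τ * ‖ξ‖ : ℝ) : ℂ)) * FT f ξ) (2 * Real.pi)
  have hpi : (0:ℝ) < 2 * Real.pi := by positivity
  rw [finrank_euclideanSpace_fin, abs_of_pos (by positivity), Complex.real_smul, ofReal_inv] at h
  rw [← h, IF]
  congr 1; ext η
  rw [FT_eq, inv_smul_smul₀ hpi.ne', ex, norm_smul, Real.norm_of_nonneg hpi.le, inner_smul_right,
    real_inner_comm x η, mul_assoc]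
  congr 1
  · congr 1; ring
  · rw [ofReal_exp, ← ofReal_neg]
    congr 3; ring

/-! ### The estimate -/

/-- Finiteness of the Chemin–Lerner norm of the source yields integrable growth constants. -/
lemma exists_dat (P : LPData d) {Γ : ℝ → Rd d → ℂ} (hintg : ∀ y, Integrable (Γ y))
    (hmeas : Measurable (Function.uncurry Γ)) {K : Set ℝ} (hK : IsCompact K) (hK0 : K ⊆ Set.Ioi 0)
    {s : ℝ} {p r q : ℝ≥0∞} (hp : 1 ≤ p) (hr : 1 ≤ r) (hq : 1 ≤ q)
    (hfin : CL P s q p r (fun y => IF (Γ y)) ≠ ∞) :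
    ∃ (n : ℕ) (H : ℝ → ℝ), Dat P n (volume.restrict K) Γ H := by
  obtain ⟨c, hc, hbern⟩ := bernstein (d := d)
  set μ : Measure ℝ := volume.restrict (Set.Ioi 0) with hμ
  have hμK : μ.restrict K = volume.restrict K := by
    rw [hμ, Measure.restrict_restrict hK.measurableSet, Set.inter_eq_left.2 hK0]
  have hKt : μ K ≠ ∞ := ((Measure.restrict_apply_le _ _).trans_lt hK.measure_lt_top).ne
  obtain ⟨c1, hc1, hL1⟩ := Lq_to_L1 (μ := μ) hq K hKt
  set Z := CL P s q p r (fun y => IF (Γ y)) with hZ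
  set a : ℤ → ℝ → ℝ≥0∞ := fun k y => eLpNorm (bl P k (Γ y)) p volume with ha
  have ham : ∀ k, Measurable (a k) := fun k =>
    measurable_eLpNorm_slice (g := fun y => bl P k (Γ y))
      (measurable_IF (measurable_mulΓ hmeas (continuous_Phi P k).measurable))
      (fun y => continuous_bl P k (hintg y)) hp
  have haL : ∀ k : ℤ, ∫⁻ y in K, a k y ≤ c1 * Z * ENNReal.ofReal (2 ^ (-s * (k:ℝ))) := by
    intro k
    have h1 := hL1 (a k) (ham k)
    rw [hμK] at h1
    have h2 : ENNReal.ofReal ((2:ℝ) ^ (s * (k:ℝ))) * Lq μ q (a k) ≤ Z := by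
      have := le_ellNorm hr (fun j => ENNReal.ofReal ((2:ℝ) ^ (s * (j:ℝ))) *
        LqLp q p fun t => LP P j (IF (Γ t))) k
      have e : (fun t => LP P k (IF (Γ t))) = fun t => bl P k (Γ t) := by
        ext t x; exact LP_IF P k (hintg t) x
      rw [e] at this
      exact this
    have h3 : ENNReal.ofReal ((2:ℝ) ^ (-s * (k:ℝ))) * ENNReal.ofReal ((2:ℝ) ^ (s * (k:ℝ))) = 1 := by
      rw [← ENNReal.ofReal_mul (by positivity), ← Real.rpow_add (by norm_num)]
      simp
    calc _ ≤ c1 * Lq μ q (a k) := h1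
      _ = c1 * (ENNReal.ofReal ((2:ℝ) ^ (-s * (k:ℝ))) * (ENNReal.ofReal ((2:ℝ) ^ (s * (k:ℝ))) *
            Lq μ q (a k))) := by rw [← mul_assoc (ENNReal.ofReal _), h3, one_mul]
      _ ≤ c1 * (ENNReal.ofReal ((2:ℝ) ^ (-s * (k:ℝ))) * Z) := by gcongr
      _ = _ := by ring
  -- `m` absorbs the regularity exponent, leaving a geometrically summable factor
  set m := ⌈|s|⌉₊ + 1 with hm
  set HE : ℝ → ℝ≥0∞ := fun y => ∑' k : ℤ, ENNReal.ofReal (c * (1 / 2) ^ (m * k.natAbs)) * a k y with hHE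
  have hHEm : Measurable HE := Measurable.tsum fun k => (ham k).const_mul _
  have hHEi : ∫⁻ y in K, HE y ≠ ∞ := by
    rw [hHE, lintegral_tsum fun k => ((ham k).const_mul _).aemeasurable]
    refine ne_top_of_le_ne_top (b := ∑' k : ℤ, ENNReal.ofReal ((1 / 2) ^ k.natAbs) *
      (ENNReal.ofReal c * (c1 * Z))) ?_ (ENNReal.tsum_le_tsum fun k => ?_)
    · rw [ENNReal.tsum_mul_right, ← ENNReal.ofReal_tsum_of_nonneg (fun k => by positivity)
        summable_half_natAbs]
      exact ENNReal.mul_ne_top ENNReal.ofReal_ne_top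
        (ENNReal.mul_ne_top ENNReal.ofReal_ne_top (ENNReal.mul_ne_top hc1 hfin))
    · rw [lintegral_const_mul _ (ham k)]
      calc _ ≤ ENNReal.ofReal (c * (1 / 2) ^ (m * k.natAbs)) *
            (c1 * Z * ENNReal.ofReal (2 ^ (-s * (k:ℝ)))) := by gcongr; exact haL k
        _ = ENNReal.ofReal ((1 / 2) ^ (m * k.natAbs) * 2 ^ (-s * (k:ℝ))) * (ENNReal.ofReal c * (c1 * Z)) := by
            rw [ENNReal.ofReal_mul hc, ENNReal.ofReal_mul (by positivity)]; ring
        _ ≤ _ := by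
            gcongr
            have e1 : (1 / 2 : ℝ) ^ (m * k.natAbs) = (2:ℝ) ^ (-(m * (k.natAbs:ℝ))) := by
              rw [one_div, inv_pow, Real.rpow_neg (by norm_num), ← Nat.cast_mul, Real.rpow_natCast]
            have e2 : (1 / 2 : ℝ) ^ k.natAbs = (2:ℝ) ^ (-(k.natAbs:ℝ)) := by
              rw [one_div, inv_pow, Real.rpow_neg (by norm_num), Real.rpow_natCast]
            rw [e1, e2, ← Real.rpow_add (by norm_num)]
            apply Real.rpow_le_rpow_of_exponent_le (by norm_num)
            have hk : ((k.natAbs : ℕ) : ℝ) = |(k:ℝ)| := by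
              rw [Nat.cast_natAbs, Int.cast_abs]
            rw [hk]
            have h4 : -s * (k:ℝ) ≤ |s| * |(k:ℝ)| := by
              rw [← abs_neg s, ← abs_mul]; exact le_abs_self _
            have h5 : |s| + 1 ≤ (m:ℝ) := by
              rw [hm]; push_cast; linarith [Nat.le_ceil |s|]
            nlinarith [abs_nonneg (k:ℝ)]
  refine ⟨d + m, fun y => (HE y).toReal, hintg, hmeas,
    integrable_toReal_of_lintegral_ne_top hHEm.aemeasurable hHEi, ?_⟩
  filter_upwards [ae_lt_top hHEm hHEi] with y hy k x
  have h1 : ENNReal.ofReal (c * (1 / 2) ^ (m * k.natAbs)) * a k y ≤ HE y :=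
    ENNReal.le_tsum (f := fun k : ℤ => ENNReal.ofReal (c * (1 / 2) ^ (m * k.natAbs)) * a k y) k
  have h2 : ‖bl P k (Γ y) x‖ₑ ≤ ENNReal.ofReal (2 ^ ((d + m) * k.natAbs)) * HE y := by
    refine (hbern P k (Γ y) p (hintg y) hp x).trans ?_
    calc _ = ENNReal.ofReal (2 ^ ((d + m) * k.natAbs)) *
          (ENNReal.ofReal (c * (1 / 2) ^ (m * k.natAbs)) * a k y) := by
          rw [← mul_assoc, ← ENNReal.ofReal_mul (by positivity)]
          congr 2
          have : (2:ℝ) ^ (m * k.natAbs) * (1 / 2) ^ (m * k.natAbs) = 1 := by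
            rw [← mul_pow]; norm_num
          rw [add_mul, pow_add]
          linear_combination (-c * 2 ^ (d * k.natAbs)) * this
      _ ≤ _ := by gcongr
  have h3 := ENNReal.toReal_mono (by finiteness) h2
  rwa [toReal_enorm, ENNReal.toReal_mul, ENNReal.toReal_ofReal (by positivity)] at h3

/-- The space-time estimate of a single dyadic block of the Duhamel integral. -/
lemma block_estimate (hd : 1 ≤ d) : ∃ C > (0:ℝ), ∀ (P : LPData d) (n : ℕ) (Γ : ℝ → Rd d → ℂ) (H : ℝ → ℝ)
    (K : Set ℝ), IsCompact K → K ⊆ Set.Ioi 0 → Dat P n (volume.restrict K) Γ H →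
    (∀ R : ℝ, ∃ M : ℝ, 0 ≤ M ∧ ∀ y x, ‖x‖ ≤ R → ‖IF (Γ y) x‖ ≤ M) →
    ∀ (p q q₁ : ℝ≥0∞), 1 ≤ p → 1 ≤ q → q ≤ q₁ → ∀ j : ℤ,
    LqLp q₁ p (fun t => LP P j (fun x => ∫ y in K, IF (pois t Γ y) x)) ≤
      ENNReal.ofReal (Real.pi * ((2:ℝ) ^ j)⁻¹) ^ (1 - (1 / q).toReal + (1 / q₁).toReal) *
        (ENNReal.ofReal C * LqLp q p (fun y => LP P j (IF (Γ y)))) := by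
  obtain ⟨C, hC, hCb⟩ := eLpNorm_bl_ex_le (d := d)
  refine ⟨C, hC, fun P n Γ H K hK hK0 D hloc p q q₁ hp hq hq₁ j => ?_⟩
  have : IsFiniteMeasure (volume.restrict K) := ⟨by simpa using hK.measure_lt_top⟩
  set μ : Measure ℝ := volume.restrict (Set.Ioi 0) with hμ
  set a : ℝ → ℝ≥0∞ := fun y => eLpNorm (bl P j (Γ y)) p volume with ha
  have ham : Measurable a :=
    measurable_eLpNorm_slice (g := fun y => bl P j (Γ y))
      (measurable_IF (measurable_mulΓ D.meas (continuous_Phi P j).measurable))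
      (fun y => continuous_bl P j (D.int y)) hp
  set k : ℝ → ℝ → ℝ≥0∞ := fun t y => ENNReal.ofReal (((1 + (2:ℝ) ^ j * |t - y|) ^ 2)⁻¹) with hk
  have hkm : Measurable (Function.uncurry k) := by
    simp only [hk, Function.uncurry_def]; fun_prop
  have hA : ∀ t, ∫⁻ y, k t y ∂μ ≤ ENNReal.ofReal (Real.pi * ((2:ℝ) ^ j)⁻¹) := fun t =>
    (lintegral_mono' Measure.restrict_le_self le_rfl).trans (lintegral_decay (by positivity) t)
  have hsymm : ∀ t y, k t y = k y t := fun t y => by simp only [hk, abs_sub_comm]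
  have hpt : ∀ t, eLpNorm (LP P j (fun x => ∫ y in K, IF (pois t Γ y) x)) p volume ≤
      ∫⁻ y, k t y * (ENNReal.ofReal C * a y) ∂μ := by
    intro t
    obtain ⟨C', -, hDG⟩ := D.pois
    have DG := hDG t
    have h1 := eLpNorm_le_avg (ν := volume.restrict K) (g := fun y => bl P j (pois t Γ y))
      (measurable_IF (measurable_mulΓ DG.meas (continuous_Phi P j).measurable))
      (fun y => continuous_bl P j (DG.int y)) hp
      (LP_duhamel_le hd Measure.restrict_le_self D hloc t j)
    refine h1.trans ((lintegral_mono fun y => ?_).trans (lintegral_mono' (Measure.restrict_mono hK0 le_rfl) le_rfl))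
    refine (hCb P j |t - y| (Γ y) p (abs_nonneg _) (D.int y) hp).trans (le_of_eq ?_)
    rw [ENNReal.ofReal_mul hC.le]; ring
  have e : (fun t => LP P j (IF (Γ t))) = fun t => bl P j (Γ t) := by
    ext t x; exact LP_IF P j (D.int t) x
  rw [e]
  change Lq μ q₁ _ ≤ _ * (_ * Lq μ q a)
  refine (Lq_mono (Eventually.of_forall hpt)).trans ((young hkm ?_ ENNReal.ofReal_ne_top ?_ hA ?_
    (ham.const_mul _) hq hq₁).trans ?_)
  · rw [Ne, ENNReal.ofReal_eq_zero, not_le]; positivity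
  · intro t y
    rw [hk, ENNReal.ofReal_le_one]
    exact inv_le_one_of_one_le₀ (one_le_pow₀ (le_add_of_nonneg_right (by positivity)))
  · intro y
    simp only [hsymm _ y]
    exact hA y
  · gcongr
    exact Lq_const_mul hq ham _

end Duh

/-- Duhamel-type maximal regularity estimate for the kernel
`e^{-|t-y||∇|}` in Chemin–Lerner spaces, with a gain of one derivative:
`‖u‖_{L̃^{q₁}(Ḃ^{s+1/q₁}_{p,r})} ≤ C ‖F‖_{L̃^{q}(Ḃ^{s+1/q-1}_{p,r})}`. -/
theorem duhamel_chemin_lerner_estimate (d : ℕ) (hd : 1 ≤ d) (P : LPData d) :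
    ∃ C > (0:ℝ), ∀ F : ℝ → Rd d → ℂ, SliceSchwartz F →
      (∃ K : Set ℝ, IsCompact K ∧ K ⊆ Set.Ioi (0:ℝ) ∧ ∀ t ∉ K, F t = 0) →
      ∀ s : ℝ, ∀ p r q q₁ : ℝ≥0∞, 1 ≤ p → 1 ≤ r → 1 ≤ q → q ≤ q₁ →
      CL P (s + (1/q₁).toReal) q₁ p r
          (fun t x => ∫ y in Set.Ioi (0:ℝ),
            (((2 * Real.pi) ^ d : ℝ) : ℂ)⁻¹ *
              ∫ ξ : Rd d, Complex.exp (Complex.I * (↑(⟪x, ξ⟫) : ℂ)) *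
                Complex.exp (-(↑(|t - y| * ‖ξ‖) : ℂ)) * FT (F y) ξ)
        ≤ ENNReal.ofReal C * CL P (s + (1/q).toReal - 1) q p r F := by
  obtain ⟨C, hC, hblock⟩ := Duh.block_estimate (d := d) hd
  refine ⟨Real.pi * C, by positivity, ?_⟩
  rintro F hF ⟨K, hK, hK0, hFK⟩ s p r q q₁ hp hr hq hq₁
  by_cases hfin : CL P (s + (1/q).toReal - 1) q p r F = ∞
  · rw [hfin, ENNReal.mul_top (by simpa using by positivity)]
    exact le_top
  obtain ⟨hintg, hinv, hmeas, hloc⟩ := Duh.data_of_slice hF hK hK0 hFK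
  set Γ : ℝ → Rd d → ℂ := fun y => FourierTransform.fourier (F y) with hΓ
  have hFΓ : F = fun y => Duh.IF (Γ y) := by ext y x; rw [hinv]
  have hu : (fun (t : ℝ) (x : Rd d) => ∫ y in Set.Ioi (0:ℝ), (((2 * Real.pi) ^ d : ℝ) : ℂ)⁻¹ *
      ∫ ξ : Rd d, Complex.exp (Complex.I * (↑(⟪x, ξ⟫) : ℂ)) *
        Complex.exp (-(↑(|t - y| * ‖ξ‖) : ℂ)) * FT (F y) ξ) =
      fun t x => ∫ y in K, Duh.IF (Duh.pois t Γ y) x := by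
    ext t x
    rw [setIntegral_eq_of_subset_of_forall_sdiff_eq_zero measurableSet_Ioi hK0]
    · congr 1; ext y
      exact Duh.integrand_eq (F y) |t - y| x
    · intro y hy
      simp [hFK y hy.2, FT]
  rw [hu]
  have hfin' : CL P (s + (1/q).toReal - 1) q p r (fun y => Duh.IF (Γ y)) ≠ ∞ := by rwa [← hFΓ]
  obtain ⟨n, H, D⟩ := Duh.exists_dat P hintg hmeas hK hK0 hp hr hq hfin'
  have hloc' : ∀ R : ℝ, ∃ M : ℝ, 0 ≤ M ∧ ∀ y x, ‖x‖ ≤ R → ‖Duh.IF (Γ y) x‖ ≤ M := by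
    intro R
    obtain ⟨M, hM0, hM⟩ := hloc R
    exact ⟨M, hM0, fun y x hx => by rw [hinv]; exact hM y x hx⟩
  have hb := hblock P n Γ H K hK hK0 D hloc' p q q₁ hp hq hq₁
  set α := (1 / q).toReal with hα
  set β := (1 / q₁).toReal with hβ
  have hα1 : α ≤ 1 := by
    rw [hα, ← ENNReal.toReal_one]
    exact ENNReal.toReal_mono (by simp) (by simpa using hq)
  have hβ0 : 0 ≤ β := ENNReal.toReal_nonneg
  have hβα : β ≤ α := by
    have hq0 : q ≠ 0 := (zero_lt_one.trans_le hq).ne'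
    exact ENNReal.toReal_mono (by simpa using hq0) (by simpa using hq₁)
  rw [hFΓ, CL, CL, ← Duh.ellNorm_const_mul hr]
  refine Duh.ellNorm_mono fun j => ?_
  set B := LqLp q p fun y => LP P j (Duh.IF (Γ y)) with hB
  -- the mass `π 2⁻ʲ` of the kernel converts Young's exponent into derivatives
  have hexp : ENNReal.ofReal ((2:ℝ) ^ ((s + β) * (j:ℝ))) *
      ENNReal.ofReal (Real.pi * ((2:ℝ) ^ j)⁻¹) ^ (1 - α + β) ≤
      ENNReal.ofReal Real.pi * ENNReal.ofReal ((2:ℝ) ^ ((s + α - 1) * (j:ℝ))) := by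
    rw [ENNReal.ofReal_rpow_of_pos (by positivity), ← ENNReal.ofReal_mul (by positivity),
      ← ENNReal.ofReal_mul (by positivity)]
    apply ENNReal.ofReal_le_ofReal
    have e1 : (((2:ℝ) ^ j)⁻¹) ^ (1 - α + β) = (2:ℝ) ^ (-(j:ℝ) * (1 - α + β)) := by
      rw [Real.rpow_mul (by norm_num), Real.rpow_neg (by norm_num), Real.rpow_intCast]
    have e2 : Real.pi ^ (1 - α + β) ≤ Real.pi := by
      conv_rhs => rw [← Real.rpow_one Real.pi]
      exact Real.rpow_le_rpow_of_exponent_le (by linarith [Real.two_le_pi]) (by linarith)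
    rw [Real.mul_rpow (by positivity) (by positivity), e1]
    calc _ = Real.pi ^ (1 - α + β) * ((2:ℝ) ^ ((s + β) * (j:ℝ)) * (2:ℝ) ^ (-(j:ℝ) * (1 - α + β))) := by ring
      _ = Real.pi ^ (1 - α + β) * (2:ℝ) ^ ((s + α - 1) * (j:ℝ)) := by
          rw [← Real.rpow_add (by norm_num)]; congr 2; ring
      _ ≤ _ := by gcongr
  calc _ ≤ ENNReal.ofReal ((2:ℝ) ^ ((s + β) * (j:ℝ))) *
        (ENNReal.ofReal (Real.pi * ((2:ℝ) ^ j)⁻¹) ^ (1 - α + β) * (ENNReal.ofReal C * B)) := by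
        gcongr; exact hb j
    _ = (ENNReal.ofReal ((2:ℝ) ^ ((s + β) * (j:ℝ))) *
        ENNReal.ofReal (Real.pi * ((2:ℝ) ^ j)⁻¹) ^ (1 - α + β)) * (ENNReal.ofReal C * B) := by ring
    _ ≤ (ENNReal.ofReal Real.pi * ENNReal.ofReal ((2:ℝ) ^ ((s + α - 1) * (j:ℝ)))) *
        (ENNReal.ofReal C * B) := by gcongr
    _ = _ := by rw [ENNReal.ofReal_mul (by positivity)]; ring
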